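/- Fix real constants a_R > 0 and a_I, and set p₁ = q₁ = a_R/(a_R²+a_I²), p₂ = −q₂ = −a_I/(a_R²+a_I²). Let b_R, b_I, f_R, f_I : [0,1]×[0,1) → ℝ be continuously differentiable in the space variable and such that, for each fixed space point, each is given on [0,1) by a power series in t whose coefficients are bounded uniformly in n and in the space variable. Define β(x,y,t) = [a_R(b_R(y,t)−f_R(x,t)) + a_I(b_I(y,t)−f_I(x,t))]/(a_R²+a_I²) and β_c(x,y,t) = [a_R(b_I(y,t)−f_I(x,t)) − a_I(b_R(y,t)−f_R(x,t))]/(a_R²+a_I²). Then for every t₀ ∈ (0,1), the system k_xx = k_yy + βk + β_c k_c + p₁k_t + p₂k_{c,t}, k_{c,xx} = k_{c,yy} − β_c k + βk_c + q₁k_{c,t} + q₂k_t on Ω = {(x,y) : 0 ≤ y ≤ x ≤ 1}, with boundary conditions k(x,x,t) = −(1/2)∫₀ˣ β(γ,γ,t)dγ, k_c(x,x,t) = (1/2)∫₀ˣ β_c(γ,γ,t)dγ, k(x,0,t) = 0, k_c(x,0,t) = 0, has a unique solution (k, k_c), twice continuously differentiable in (x,y), on Ω×(0,t₀), and there exists M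 > 0 such that |k(x,y,t)| ≤ M e^{M(x²−y²)} and |k_c(x,y,t)| ≤ M e^{M(x²−y²)} on Ω×(0,t₀). -/

import Mathlib

open Set intervalIntegral

/-- The triangle `Ω = {(x,y) : 0 ≤ y ≤ x ≤ 1}`. -/
def Omega : Set (ℝ × ℝ) := {p : ℝ × ℝ | 0 ≤ p.2 ∧ p.2 ≤ p.1 ∧ p.1 ≤ 1}

/-- Second partial derivative in the first variable. -/
noncomputable def pXX (k : ℝ → ℝ → ℝ → ℝ) (x y t : ℝ) : ℝ :=
  deriv (fun x' => deriv (fun x'' => k x'' y t) x') x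

/-- Second partial derivative in the second variable. -/
noncomputable def pYY (k : ℝ → ℝ → ℝ → ℝ) (x y t : ℝ) : ℝ :=
  deriv (fun y' => deriv (fun y'' => k x y'' t) y') y

/-- Partial derivative in the last (time) variable. -/
noncomputable def pT (k : ℝ → ℝ → ℝ → ℝ) (x y t : ℝ) : ℝ := deriv (fun t' => k x y t') t

/-- `f(x,t)` is continuously differentiable in the space variable and, for each fixed
space point, given on `[0,1)` by a power series in `t` with coefficients bounded
uniformly in `n` and in the space variable. -/
def SpaceC1TimeAnalytic (f : ℝ → ℝ → ℝ) : Prop :=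
  (∀ t ∈ Set.Ico (0:ℝ) 1, ContDiffOn ℝ 1 (fun x => f x t) (Set.Icc 0 1))
  ∧ ∃ (c : ℕ → ℝ → ℝ) (C : ℝ),
      (∀ n, ∀ x ∈ Set.Icc (0:ℝ) 1, |c n x| ≤ C)
      ∧ ∀ x ∈ Set.Icc (0:ℝ) 1, ∀ t ∈ Set.Ico (0:ℝ) 1, f x t = ∑' n, c n x * t ^ n

/-- `(k, k_c)` is a twice continuously differentiable (in `(x,y)`, and differentiable
in `t`) solution on `Ω × (0,t₀)` of the Dirichlet backstepping kernel system. -/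
def IsDirichletKernelSol (β βc : ℝ → ℝ → ℝ → ℝ) (p₁ p₂ q₁ q₂ t₀ : ℝ)
    (k kc : ℝ → ℝ → ℝ → ℝ) : Prop :=
  (∀ t ∈ Set.Ioo (0:ℝ) t₀, ContDiffOn ℝ 2 (fun p : ℝ × ℝ => k p.1 p.2 t) Omega)
  ∧ (∀ t ∈ Set.Ioo (0:ℝ) t₀, ContDiffOn ℝ 2 (fun p : ℝ × ℝ => kc p.1 p.2 t) Omega)
  ∧ (∀ x y : ℝ, (x, y) ∈ Omega → ∀ t ∈ Set.Ioo (0:ℝ) t₀,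
      DifferentiableAt ℝ (fun t' => k x y t') t ∧ DifferentiableAt ℝ (fun t' => kc x y t') t)
  ∧ (∀ x y : ℝ, (x, y) ∈ Omega → ∀ t ∈ Set.Ioo (0:ℝ) t₀,
      pXX k x y t
        = pYY k x y t + β x y t * k x y t + βc x y t * kc x y t
          + p₁ * pT k x y t + p₂ * pT kc x y t
      ∧ pXX kc x y t
        = pYY kc x y t - βc x y t * k x y t + β x y t * kc x y t
          + q₁ * pT kc x y t + q₂ * pT k x y t)
  ∧ (∀ x ∈ Set.Icc (0:ℝ) 1, ∀ t ∈ Set.Ioo (0:ℝ) t₀,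
      k x x t = -(1 / 2) * ∫ γ in (0:ℝ)..x, β γ γ t
      ∧ kc x x t = (1 / 2) * ∫ γ in (0:ℝ)..x, βc γ γ t
      ∧ k x 0 t = 0 ∧ kc x 0 t = 0)

/-- A series of continuous functions which is normally convergent on compact sets. -/
def LocallyDominated {X : Type*} [TopologicalSpace X] (F : ℕ → X → ℂ) : Prop :=
  (∀ n, Continuous (F n)) ∧ ∀ K : Set X, IsCompact K →
    ∃ a : ℕ → ℝ, Summable a ∧ ∀ n, ∀ p ∈ K, ‖F n p‖ ≤ a n

namespace LocallyDominated

variable {X : Type*} [TopologicalSpace X] {F : ℕ → X → ℂ}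

lemma summable_norm (hF : LocallyDominated F) (p : X) : Summable fun n => ‖F n p‖ := by
  obtain ⟨a, ha, h⟩ := hF.2 {p} isCompact_singleton
  exact ha.of_nonneg_of_le (fun n => norm_nonneg _) fun n => h n p rfl

lemma summable (hF : LocallyDominated F) (p : X) : Summable fun n => F n p :=
  (hF.summable_norm p).of_norm

lemma continuous_tsum [WeaklyLocallyCompactSpace X] (hF : LocallyDominated F) :
    Continuous fun p => ∑' n, F n p := by
  rw [continuous_iff_continuousAt]
  intro p
  obtain ⟨K, hK, hp⟩ := exists_compact_mem_nhds p
  obtain ⟨a, ha, h⟩ := hF.2 K hK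
  exact (continuousOn_tsum (fun n => (hF.1 n).continuousOn) ha h).continuousAt hp

end LocallyDominated

/-- Primitive in the first variable, vanishing on the axis where that variable is zero. -/
noncomputable def primFst (f : ℝ × ℝ → ℂ) (p : ℝ × ℝ) : ℂ := ∫ τ in (0:ℝ)..p.1, f (τ, p.2)

/-- Primitive in the second variable, vanishing on the axis where that variable is zero. -/
noncomputable def primSnd (f : ℝ × ℝ → ℂ) (p : ℝ × ℝ) : ℂ := ∫ s in (0:ℝ)..p.2, f (p.1, s)

lemma primSnd_eq_primFst_swap (f : ℝ × ℝ → ℂ) (p : ℝ × ℝ) :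
    primSnd f p = primFst (fun q => f q.swap) p.swap := rfl

lemma continuous_primFst {f : ℝ × ℝ → ℂ} (hf : Continuous f) : Continuous (primFst f) :=
  continuous_parametric_intervalIntegral_of_continuous
    (f := fun (p : ℝ × ℝ) τ => f (τ, p.2)) (by fun_prop) continuous_fst

lemma continuous_primSnd {f : ℝ × ℝ → ℂ} (hf : Continuous f) : Continuous (primSnd f) :=
  continuous_parametric_intervalIntegral_of_continuous
    (f := fun (p : ℝ × ℝ) s => f (p.1, s)) (by fun_prop) continuous_snd

lemma norm_primFst_le {f : ℝ × ℝ → ℂ} {R M : ℝ} (h : ∀ p : ℝ × ℝ, ‖p‖ ≤ R → ‖f p‖ ≤ M)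
    (p : ℝ × ℝ) (hp : ‖p‖ ≤ R) : ‖primFst f p‖ ≤ M * R := by
  have hp' := hp
  rw [Prod.norm_def, max_le_iff, Real.norm_eq_abs] at hp'
  have hM : 0 ≤ M := (norm_nonneg _).trans (h p hp)
  refine (norm_integral_le_of_norm_le_const (C := M) fun τ hτ => h _ ?_).trans ?_
  · rw [Prod.norm_def, max_le_iff, Real.norm_eq_abs]
    refine ⟨le_trans ?_ hp'.1, hp'.2⟩
    simpa using abs_sub_left_of_mem_uIcc (uIoc_subset_uIcc hτ)
  · rw [sub_zero]
    exact mul_le_mul_of_nonneg_left hp'.1 hM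

lemma norm_primSnd_le {f : ℝ × ℝ → ℂ} {R M : ℝ} (h : ∀ p : ℝ × ℝ, ‖p‖ ≤ R → ‖f p‖ ≤ M)
    (p : ℝ × ℝ) (hp : ‖p‖ ≤ R) : ‖primSnd f p‖ ≤ M * R := by
  have hs : ∀ q : ℝ × ℝ, ‖q.swap‖ = ‖q‖ := fun q => by simp [Prod.norm_def, max_comm]
  rw [primSnd_eq_primFst_swap]
  exact norm_primFst_le (fun q hq => h _ (by rwa [hs])) _ (by rwa [hs])

lemma IsCompact.exists_norm_le {E : Type*} [NormedAddCommGroup E] {K : Set E} (hK : IsCompact K) :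
    ∃ R : ℝ, 0 ≤ R ∧ ∀ p ∈ K, ‖p‖ ≤ R := by
  obtain ⟨R, hR⟩ := hK.isBounded.exists_norm_le
  exact ⟨max R 0, le_max_right _ _, fun p hp => (hR p hp).trans (le_max_left _ _)⟩

lemma isCompact_norm_le (R : ℝ) : IsCompact {p : ℝ × ℝ | ‖p‖ ≤ R} := by
  simpa [Metric.closedBall, dist_zero_right] using isCompact_closedBall (0 : ℝ × ℝ) R

namespace LocallyDominated

variable {F : ℕ → ℝ × ℝ → ℂ}

lemma primFst_tsum (hF : LocallyDominated F) (p : ℝ × ℝ) :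
    primFst (fun q => ∑' n, F n q) p = ∑' n, primFst (F n) p := by
  obtain ⟨a, ha, h⟩ := hF.2 {q | ‖q‖ ≤ ‖p‖} (isCompact_norm_le _)
  refine (intervalIntegral.hasSum_integral_of_dominated_convergence
    (F := fun n τ => F n (τ, p.2)) (f := fun τ => ∑' n, F n (τ, p.2)) (a := 0) (b := p.1)
    (μ := MeasureTheory.volume) (fun n _ => a n) (fun n => ?_)
    (fun n => .of_forall fun τ hτ => h n _ ?_) (.of_forall fun τ _ => ha)
    _root_.intervalIntegrable_const
    (.of_forall fun τ _ => (hF.summable _).hasSum)).tsum_eq.symm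
  · exact ((hF.1 n).comp (by fun_prop : Continuous fun τ : ℝ => (τ, p.2))).aestronglyMeasurable
  · change ‖(τ, p.2)‖ ≤ ‖p‖
    rw [Prod.norm_def, Prod.norm_def]
    refine max_le_max ?_ le_rfl
    simpa using abs_sub_left_of_mem_uIcc (uIoc_subset_uIcc hτ)

lemma comp_swap (hF : LocallyDominated F) : LocallyDominated fun n (q : ℝ × ℝ) => F n q.swap := by
  refine ⟨fun n => (hF.1 n).comp continuous_swap, fun K hK => ?_⟩
  obtain ⟨a, ha, h⟩ := hF.2 _ (hK.image continuous_swap)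
  exact ⟨a, ha, fun n p hp => h n _ (mem_image_of_mem _ hp)⟩

lemma primSnd_tsum (hF : LocallyDominated F) (p : ℝ × ℝ) :
    primSnd (fun q => ∑' n, F n q) p = ∑' n, primSnd (F n) p := by
  simp only [primSnd_eq_primFst_swap]
  exact hF.comp_swap.primFst_tsum _

lemma primFst (hF : LocallyDominated F) : LocallyDominated fun n => primFst (F n) := by
  refine ⟨fun n => continuous_primFst (hF.1 n), fun K hK => ?_⟩
  obtain ⟨R, hR, hKR⟩ := hK.exists_norm_le
  obtain ⟨a, ha, h⟩ := hF.2 _ (isCompact_norm_le R)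
  exact ⟨fun n => a n * R, ha.mul_right R, fun n p hp => norm_primFst_le (h n) p (hKR p hp)⟩

lemma primSnd (hF : LocallyDominated F) : LocallyDominated fun n => primSnd (F n) := by
  refine ⟨fun n => continuous_primSnd (hF.1 n), fun K hK => ?_⟩
  obtain ⟨R, hR, hKR⟩ := hK.exists_norm_le
  obtain ⟨a, ha, h⟩ := hF.2 _ (isCompact_norm_le R)
  exact ⟨fun n => a n * R, ha.mul_right R, fun n p hp => norm_primSnd_le (h n) p (hKR p hp)⟩

end LocallyDominated

/-- Coefficient sequences of power series (in time) whose radius of convergence is at least one,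
locally uniformly in the parameter `p : X`. -/
def UnitRadius {X : Type*} [TopologicalSpace X] (U : ℕ → X → ℂ) : Prop :=
  (∀ n, Continuous (U n)) ∧ ∀ K : Set X, IsCompact K → ∀ r ∈ Ioo (0:ℝ) 1,
    ∃ M : ℝ, ∀ n, ∀ p ∈ K, ‖U n p‖ * r ^ n ≤ M

/-- The sum of the power series with coefficients `U n p`. -/
noncomputable def evalSeries {X : Type*} (U : ℕ → X → ℂ) (t : ℝ) (p : X) : ℂ :=
  ∑' n, U n p * (t : ℂ) ^ n

/-- Coefficients of the derivative of a power series. -/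
def derivCoeff {X : Type*} (U : ℕ → X → ℂ) (n : ℕ) (p : X) : ℂ := (n + 1) * U (n + 1) p

/-- Coefficients of the product of two power series. -/
def mulCoeff {X : Type*} (U V : ℕ → X → ℂ) (n : ℕ) (p : X) : ℂ :=
  ∑ j ∈ Finset.range (n + 1), U j p * V (n - j) p

namespace UnitRadius

variable {X : Type*} [TopologicalSpace X] {U V : ℕ → X → ℂ} {t : ℝ}

lemma of_bounded {C : ℝ} (hc : ∀ n, Continuous (U n)) (hU : ∀ n p, ‖U n p‖ ≤ C) :
    UnitRadius U := by
  refine ⟨hc, fun K _ r hr => ⟨C, fun n p _ => ?_⟩⟩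
  exact (mul_le_of_le_one_right (norm_nonneg _) (pow_le_one₀ hr.1.le hr.2.le)).trans (hU n p)

lemma locallyDominated (hU : UnitRadius U) (ht : |t| < 1) :
    LocallyDominated fun n p => U n p * (t : ℂ) ^ n := by
  refine ⟨fun n => (hU.1 n).mul continuous_const, fun K hK => ?_⟩
  obtain ⟨r, hr, hr1⟩ := exists_between ht
  have hr0 : 0 < r := (abs_nonneg t).trans_lt hr
  obtain ⟨M, hM⟩ := hU.2 K hK r ⟨hr0, hr1⟩
  refine ⟨fun n => M * (|t| / r) ^ n, (summable_geometric_of_lt_one (by positivity)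
    ((div_lt_one hr0).2 hr)).mul_left M, fun n p hp => ?_⟩
  calc ‖U n p * (t : ℂ) ^ n‖ = ‖U n p‖ * r ^ n * (|t| / r) ^ n := by
        rw [norm_mul, norm_pow, Complex.norm_real, Real.norm_eq_abs, div_pow]
        field_simp
    _ ≤ M * (|t| / r) ^ n := by gcongr; exact hM n p hp

lemma continuous_evalSeries [WeaklyLocallyCompactSpace X] (hU : UnitRadius U) (ht : |t| < 1) :
    Continuous (evalSeries U t) := (hU.locallyDominated ht).continuous_tsum

lemma exists_norm_evalSeries_le (hU : UnitRadius U) {K : Set X} (hK : IsCompact K) {t₀ : ℝ}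
    (h0 : 0 ≤ t₀) (h1 : t₀ < 1) :
    ∃ M : ℝ, ∀ p ∈ K, ∀ t : ℝ, |t| ≤ t₀ → ‖evalSeries U t p‖ ≤ M := by
  obtain ⟨a, ha, h⟩ := (hU.locallyDominated (t := t₀) (by rwa [abs_of_nonneg h0])).2 K hK
  refine ⟨∑' n, a n, fun p hp t ht => tsum_of_norm_bounded ha.hasSum fun n => ?_⟩
  refine le_trans ?_ (h n p hp)
  rw [norm_mul, norm_mul, norm_pow, norm_pow, Complex.norm_real, Complex.norm_real,
    Real.norm_eq_abs, Real.norm_eq_abs, abs_of_nonneg h0]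
  gcongr

lemma derivCoeff (hU : UnitRadius U) : UnitRadius (derivCoeff U) := by
  refine ⟨fun n => continuous_const.mul (hU.1 _), fun K hK r hr => ?_⟩
  obtain ⟨s, hs, hs1⟩ := exists_between hr.2
  have hs0 : 0 < s := hr.1.trans hs
  obtain ⟨M, hM⟩ := hU.2 K hK s ⟨hs0, hs1⟩
  have hq : |r / s| < 1 := by
    rw [abs_of_nonneg (div_nonneg hr.1.le hs0.le)]; exact (div_lt_one hs0).2 hs
  have hsum : Summable fun n : ℕ => ((n + 1 : ℕ) : ℝ) * (r / s) ^ n := by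
    have := (summable_pow_mul_geometric_of_norm_lt_one 1 (r := r / s) hq).add
      (summable_geometric_of_abs_lt_one hq)
    refine this.congr fun n => ?_
    push_cast; ring
  obtain ⟨L, hL⟩ := hsum.tendsto_atTop_zero.bddAbove_range
  refine ⟨M / s * L, fun n p hp => ?_⟩
  have hM0 : 0 ≤ M := (by positivity : 0 ≤ ‖U n p‖ * s ^ n).trans (hM n p hp)
  calc ‖_root_.derivCoeff U n p‖ * r ^ n
      = (‖U (n + 1) p‖ * s ^ (n + 1)) / s * (((n + 1 : ℕ) : ℝ) * (r / s) ^ n) := by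
        have : ‖((n : ℂ) + 1)‖ = ((n + 1 : ℕ) : ℝ) := by
          rw [← Nat.cast_add_one, Complex.norm_natCast]
        rw [_root_.derivCoeff, norm_mul, this, div_pow, pow_succ]
        field_simp
    _ ≤ M / s * L := by
        refine mul_le_mul ?_ (hL ⟨n, rfl⟩) (by have := hr.1; positivity) (by positivity)
        gcongr
        exact hM _ p hp

lemma hasDerivAt_evalSeries (hU : UnitRadius U) (ht : |t| < 1) (p : X) :
    HasDerivAt (fun t => evalSeries U t p) (evalSeries (_root_.derivCoeff U) t p) t := by
  obtain ⟨r, hr, hr1⟩ := exists_between ht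
  have hr0 : 0 < r := (abs_nonneg t).trans_lt hr
  have hD := (hU.derivCoeff.locallyDominated (t := r) (by rwa [abs_of_pos hr0])).summable_norm p
  let u : ℕ → ℝ := fun n => ‖U n p * (n * (r : ℂ) ^ (n - 1))‖
  have hshift : ∀ (z : ℂ) (n : ℕ), U (n + 1) p * ((n + 1 : ℕ) * z ^ (n + 1 - 1))
      = _root_.derivCoeff U n p * z ^ n := by
    intro z n; simp only [_root_.derivCoeff, Nat.add_sub_cancel]; push_cast; ring
  have hu : Summable u := by
    rw [← summable_nat_add_iff 1]
    refine hD.congr fun n => ?_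
    simp only [u, hshift]
  have key := hasDerivAt_tsum_of_isPreconnected (𝕜 := ℝ) (t := Ioo (-r) r)
    (g := fun n (y : ℝ) => U n p * (y : ℂ) ^ n)
    (g' := fun n (y : ℝ) => U n p * (n * (y : ℂ) ^ (n - 1))) (y₀ := t) (y := t) hu isOpen_Ioo
    isPreconnected_Ioo (fun n y _ => ?_) (fun n y hy => ?_) (abs_lt.1 hr)
    ((hU.locallyDominated ht).summable p) (abs_lt.1 hr)
  · refine key.congr_deriv ?_
    have hs : Summable fun n => U n p * (n * (t : ℂ) ^ (n - 1)) := by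
      rw [← summable_nat_add_iff 1]
      exact ((hU.derivCoeff.locallyDominated ht).summable p).congr fun n => (hshift _ n).symm
    rw [hs.tsum_eq_zero_add]
    simp only [hshift]
    simp [evalSeries]
  · have := ((hasDerivAt_pow n (y : ℂ)).comp_ofReal).const_mul (U n p)
    simpa using this
  · simp only [u, norm_mul, norm_pow, Complex.norm_real, Real.norm_eq_abs, abs_of_pos hr0]
    gcongr
    exact (abs_lt.2 hy).le

lemma mulCoeff (hU : UnitRadius U) (hV : UnitRadius V) : UnitRadius (mulCoeff U V) := by
  refine ⟨fun n => continuous_finsetSum _ fun j _ => (hU.1 j).mul (hV.1 _), fun K hK r hr => ?_⟩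
  obtain ⟨a, ha, hUa⟩ := (hU.locallyDominated (t := r) (by rw [abs_of_pos hr.1]; exact hr.2)).2 K hK
  obtain ⟨M, hM⟩ := hV.2 K hK r hr
  refine ⟨(∑' n, a n) * max M 0, fun n p hp => ?_⟩
  have ha0 : ∀ n, 0 ≤ a n := fun n => (norm_nonneg _).trans (hUa n p hp)
  calc ‖_root_.mulCoeff U V n p‖ * r ^ n
      ≤ (∑ j ∈ Finset.range (n + 1), ‖U j p * V (n - j) p‖) * r ^ n := by
        have := hr.1
        gcongr; exact norm_sum_le _ _
    _ = ∑ j ∈ Finset.range (n + 1), ‖U j p * (r : ℂ) ^ j‖ * (‖V (n - j) p‖ * r ^ (n - j)) := by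
        rw [Finset.sum_mul]
        refine Finset.sum_congr rfl fun j hj => ?_
        have hjn : n = j + (n - j) := by have := Finset.mem_range.1 hj; omega
        conv_lhs => rw [show r ^ n = r ^ j * r ^ (n - j) by rw [← pow_add, ← hjn]]
        rw [norm_mul, norm_mul, norm_pow, Complex.norm_real, Real.norm_of_nonneg hr.1.le]
        ring
    _ ≤ ∑ j ∈ Finset.range (n + 1), a j * max M 0 := by
        refine Finset.sum_le_sum fun j _ => ?_
        have := hr.1
        exact mul_le_mul (hUa j p hp) ((hM _ p hp).trans (le_max_left _ _)) (by positivity) (ha0 j)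
    _ ≤ (∑' n, a n) * max M 0 := by
        rw [← Finset.sum_mul]
        gcongr
        exact ha.sum_le_tsum _ fun i _ => ha0 i

lemma evalSeries_mulCoeff (hU : UnitRadius U) (hV : UnitRadius V) (ht : |t| < 1) (p : X) :
    evalSeries (_root_.mulCoeff U V) t p = evalSeries U t p * evalSeries V t p := by
  rw [evalSeries, evalSeries, evalSeries, tsum_mul_tsum_eq_tsum_sum_range_of_summable_norm
    ((hU.locallyDominated ht).summable_norm p) ((hV.locallyDominated ht).summable_norm p)]
  refine tsum_congr fun n => ?_
  rw [_root_.mulCoeff, Finset.sum_mul]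
  refine Finset.sum_congr rfl fun j hj => ?_
  have hjn : n = j + (n - j) := by have := Finset.mem_range.1 hj; omega
  conv_lhs => rw [show (t : ℂ) ^ n = t ^ j * t ^ (n - j) by rw [← pow_add, ← hjn]]
  ring

lemma add (hU : UnitRadius U) (hV : UnitRadius V) : UnitRadius fun n p => U n p + V n p := by
  refine ⟨fun n => (hU.1 n).add (hV.1 n), fun K hK r hr => ?_⟩
  obtain ⟨M, hM⟩ := hU.2 K hK r hr
  obtain ⟨N, hN⟩ := hV.2 K hK r hr
  refine ⟨M + N, fun n p hp => ?_⟩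
  calc ‖U n p + V n p‖ * r ^ n ≤ (‖U n p‖ + ‖V n p‖) * r ^ n := by
        have := hr.1
        gcongr; exact norm_add_le _ _
    _ ≤ M + N := by rw [add_mul]; exact add_le_add (hM n p hp) (hN n p hp)

lemma const_mul (hU : UnitRadius U) (c : ℂ) : UnitRadius fun n p => c * U n p := by
  refine ⟨fun n => continuous_const.mul (hU.1 n), fun K hK r hr => ?_⟩
  obtain ⟨M, hM⟩ := hU.2 K hK r hr
  refine ⟨‖c‖ * M, fun n p hp => ?_⟩
  rw [norm_mul, mul_assoc]
  exact mul_le_mul_of_nonneg_left (hM n p hp) (norm_nonneg _)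

lemma evalSeries_add (hU : UnitRadius U) (hV : UnitRadius V) (ht : |t| < 1) (p : X) :
    evalSeries (fun n p => U n p + V n p) t p = evalSeries U t p + evalSeries V t p := by
  simp only [evalSeries, add_mul]
  exact ((hU.locallyDominated ht).summable p).tsum_add ((hV.locallyDominated ht).summable p)

end UnitRadius

lemma evalSeries_const_mul {X : Type*} (U : ℕ → X → ℂ) (c : ℂ) (t : ℝ) (p : X) :
    evalSeries (fun n p => c * U n p) t p = c * evalSeries U t p := by
  simp only [evalSeries, mul_assoc]
  exact tsum_mul_left

namespace UnitRadius

variable {U : ℕ → ℝ × ℝ → ℂ} {t : ℝ}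

lemma primFst (hU : UnitRadius U) : UnitRadius fun n => primFst (U n) := by
  refine ⟨fun n => continuous_primFst (hU.1 n), fun K hK r hr => ?_⟩
  obtain ⟨R, hR, hKR⟩ := hK.exists_norm_le
  obtain ⟨M, hM⟩ := hU.2 _ (isCompact_norm_le R) r hr
  refine ⟨M * R, fun n p hp => ?_⟩
  have hrn : 0 < r ^ n := pow_pos hr.1 n
  have := norm_primFst_le (f := U n) (R := R) (M := M / r ^ n)
    (fun q hq => (le_div_iff₀ hrn).2 (hM n q hq)) p (hKR p hp)
  calc _ ≤ M / r ^ n * R * r ^ n := by gcongr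
    _ = M * R := by field_simp

lemma comp_swap (hU : UnitRadius U) : UnitRadius fun n (q : ℝ × ℝ) => U n q.swap := by
  refine ⟨fun n => (hU.1 n).comp continuous_swap, fun K hK r hr => ?_⟩
  obtain ⟨M, h⟩ := hU.2 _ (hK.image continuous_swap) r hr
  exact ⟨M, fun n p hp => h n _ (mem_image_of_mem _ hp)⟩

lemma primSnd (hU : UnitRadius U) : UnitRadius fun n => primSnd (U n) :=
  hU.comp_swap.primFst.comp_swap

lemma evalSeries_primFst (hU : UnitRadius U) (ht : |t| < 1) (p : ℝ × ℝ) :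
    evalSeries (fun n => _root_.primFst (U n)) t p = _root_.primFst (evalSeries U t) p := by
  refine Eq.trans ?_ ((hU.locallyDominated ht).primFst_tsum p).symm
  refine tsum_congr fun n => ?_
  exact (intervalIntegral.integral_mul_const _ _).symm

lemma evalSeries_primSnd (hU : UnitRadius U) (ht : |t| < 1) (p : ℝ × ℝ) :
    evalSeries (fun n => _root_.primSnd (U n)) t p = _root_.primSnd (evalSeries U t) p :=
  hU.comp_swap.evalSeries_primFst ht p.swap

end UnitRadius

lemma norm_integral_le_of_norm_le_abs_pow {f : ℝ → ℂ} {D x : ℝ} {m : ℕ}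
    (h : ∀ τ ∈ uIoc 0 x, ‖f τ‖ ≤ D * |τ| ^ m) :
    ‖∫ τ in (0:ℝ)..x, f τ‖ ≤ D * (|x| ^ (m + 1) / (m + 1)) := by
  have hinteg : MeasureTheory.IntegrableOn (fun τ : ℝ => D * |τ| ^ m) (uIoc 0 x) :=
    intervalIntegrable_iff.1 ((by fun_prop : Continuous fun τ : ℝ => D * |τ| ^ m).intervalIntegrable
      _ _)
  rw [norm_intervalIntegral_eq]
  refine (MeasureTheory.norm_integral_le_of_norm_le hinteg
    ((MeasureTheory.ae_restrict_iff' measurableSet_uIoc).2 (.of_forall h))).trans (le_of_eq ?_)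
  have := integral_pow_abs_sub_uIoc (a := 0) (b := x) m
  simp only [sub_zero] at this
  rw [MeasureTheory.integral_const_mul, this]

lemma norm_primFst_primSnd_le {f : ℝ × ℝ → ℂ} {D R : ℝ} {m : ℕ}
    (h : ∀ p : ℝ × ℝ, ‖p‖ ≤ R → ‖f p‖ ≤ D * (|p.1| * |p.2|) ^ m) (p : ℝ × ℝ) (hp : ‖p‖ ≤ R) :
    ‖primFst (primSnd f) p‖ ≤ D * (|p.1| * |p.2|) ^ (m + 1) / (m + 1) ^ 2 := by
  rw [Prod.norm_def, max_le_iff, Real.norm_eq_abs, Real.norm_eq_abs] at hp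
  have habs : ∀ {x y : ℝ}, y ∈ uIoc 0 x → |y| ≤ |x| := fun hy => by
    simpa using abs_sub_left_of_mem_uIcc (uIoc_subset_uIcc hy)
  refine (norm_integral_le_of_norm_le_abs_pow (m := m)
    (D := D * (|p.2| ^ (m + 1) / (m + 1))) fun τ hτ => ?_).trans (le_of_eq ?_)
  · refine (norm_integral_le_of_norm_le_abs_pow (m := m) (D := D * |τ| ^ m) fun s hs => ?_).trans
      (le_of_eq (by ring))
    refine (h (τ, s) ?_).trans (le_of_eq (by rw [mul_pow]; ring))
    rw [Prod.norm_def, max_le_iff, Real.norm_eq_abs, Real.norm_eq_abs]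
    exact ⟨(habs hτ).trans hp.1, (habs hs).trans hp.2⟩
  · rw [mul_pow]
    field_simp

lemma primFst_primSnd_comm {f : ℝ × ℝ → ℂ} (hf : Continuous f) (p : ℝ × ℝ) :
    primFst (primSnd f) p = primSnd (primFst f) p := by
  simp only [primFst, primSnd]
  refine MeasureTheory.intervalIntegral_intervalIntegral_swap ?_
  have : MeasureTheory.IntegrableOn f (uIcc 0 p.1 ×ˢ uIcc 0 p.2) :=
    hf.continuousOn.integrableOn_compact (isCompact_uIcc.prod isCompact_uIcc)
  exact this.mono_set (prod_mono uIoc_subset_uIcc uIoc_subset_uIcc)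

/-- Successive approximations for `U = u₀ + ¼ ∬ (b U + c ∂ₜ U)`, at the level of the coefficients of
the power series in time. -/
noncomputable def kernelIter (b : ℕ → ℝ × ℝ → ℂ) (c : ℂ) (u₀ : ℕ → ℝ × ℝ → ℂ) :
    ℕ → ℕ → ℝ × ℝ → ℂ
  | 0 => u₀
  | m + 1 => fun n p => 1 / 4 * primFst (primSnd fun q =>
      mulCoeff b (kernelIter b c u₀ m) n q + c * derivCoeff (kernelIter b c u₀ m) n q) p

section kernelIter

variable {b u₀ : ℕ → ℝ × ℝ → ℂ} {c : ℂ}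

lemma continuous_mulCoeff {X : Type*} [TopologicalSpace X] {U V : ℕ → X → ℂ}
    (hU : ∀ n, Continuous (U n)) (hV : ∀ n, Continuous (V n)) (n : ℕ) :
    Continuous (mulCoeff U V n) :=
  continuous_finsetSum _ fun j _ => (hU j).mul (hV _)

lemma continuous_derivCoeff {X : Type*} [TopologicalSpace X] {U : ℕ → X → ℂ}
    (hU : ∀ n, Continuous (U n)) (n : ℕ) : Continuous (derivCoeff U n) :=
  continuous_const.mul (hU _)

lemma continuous_kernelIter (hb : ∀ n, Continuous (b n)) (hu : ∀ n, Continuous (u₀ n)) (m : ℕ) :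
    ∀ n, Continuous (kernelIter b c u₀ m n) := by
  induction m with
  | zero => exact hu
  | succ m ih =>
    exact fun n => continuous_const.mul (continuous_primFst (continuous_primSnd
      ((continuous_mulCoeff hb ih n).add (continuous_const.mul (continuous_derivCoeff ih n)))))

lemma sum_choose_sub_add (n m : ℕ) :
    ∑ j ∈ Finset.range (n + 1), (n - j + m).choose m = (n + (m + 1)).choose (m + 1) := by
  rw [← add_assoc, ← Nat.sum_range_add_choose n m]
  exact Finset.sum_range_reflect (fun i => (i + m).choose m) (n + 1)

lemma norm_kernelIter_le {A B R : ℝ} (hA : 0 ≤ A) (hB : 0 ≤ B)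
    (hb : ∀ n (p : ℝ × ℝ), ‖b n p‖ ≤ B) (hu : ∀ n (p : ℝ × ℝ), ‖p‖ ≤ R → ‖u₀ n p‖ ≤ A) (m : ℕ) :
    ∀ n (p : ℝ × ℝ), ‖p‖ ≤ R → ‖kernelIter b c u₀ m n p‖ ≤
      A * (B + ‖c‖) ^ m / m.factorial * (n + m).choose m * (|p.1| * |p.2|) ^ m := by
  induction m with
  | zero => intro n p hp; simpa [kernelIter] using hu n p hp
  | succ m ih =>
    intro n p hp
    set K := A * (B + ‖c‖) ^ m / m.factorial with hK
    have hK0 : 0 ≤ K := by positivity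
    set N : ℝ := (((n + (m + 1)).choose (m + 1) : ℕ) : ℝ) with hN
    have hN0 : 0 ≤ N := by positivity
    have hchoose : ((n : ℝ) + 1) * ((n + 1 + m).choose m : ℕ) = (m + 1) * N := by
      have := Nat.choose_succ_right_eq (n + (m + 1)) m
      rw [show n + (m + 1) - m = n + 1 by omega] at this
      rw [hN, show n + 1 + m = n + (m + 1) by omega]
      have h2 : (((n + (m + 1)).choose (m + 1) * (m + 1) : ℕ) : ℝ) =
        ((n + (m + 1)).choose m * (n + 1) : ℕ) := by rw [this]
      push_cast at h2
      linarith
    have hsum : ∑ j ∈ Finset.range (n + 1), ((n - j + m).choose m : ℝ) = N := by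
      rw [hN, ← sum_choose_sub_add]; push_cast; rfl
    have key : ∀ q : ℝ × ℝ, ‖q‖ ≤ R → ‖mulCoeff b (kernelIter b c u₀ m) n q
        + c * derivCoeff (kernelIter b c u₀ m) n q‖
        ≤ (K * (B + ‖c‖) * (m + 1) * N) * (|q.1| * |q.2|) ^ m := by
      intro q hq
      set E := (|q.1| * |q.2|) ^ m
      have hE : 0 ≤ E := by positivity
      have h1 : ‖mulCoeff b (kernelIter b c u₀ m) n q‖ ≤ B * K * N * E := by
        calc _ ≤ ∑ j ∈ Finset.range (n + 1), ‖b j q * kernelIter b c u₀ m (n - j) q‖ :=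
              norm_sum_le _ _
          _ ≤ ∑ j ∈ Finset.range (n + 1), B * K * E * ((n - j + m).choose m : ℝ) := by
              refine Finset.sum_le_sum fun j _ => ?_
              rw [norm_mul]
              refine (mul_le_mul (hb j q) (ih _ q hq) (norm_nonneg _) hB).trans (le_of_eq (by ring))
          _ = _ := by rw [← Finset.mul_sum, hsum]; ring
      have h2 : ‖c * derivCoeff (kernelIter b c u₀ m) n q‖ ≤ ‖c‖ * ((m + 1) * N) * K * E := by
        have hn : ‖((n : ℂ) + 1)‖ = (n : ℝ) + 1 := by
          rw [← Nat.cast_add_one, Complex.norm_natCast]; push_cast; rfl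
        rw [norm_mul, derivCoeff, norm_mul, hn, ← hchoose]
        have := ih (n + 1) q hq
        calc _ ≤ ‖c‖ * ((n + 1) * (K * ((n + 1 + m).choose m : ℕ) * E)) := by gcongr
          _ = _ := by ring
      have h3 : B * K * N * E ≤ B * K * N * E * (m + 1) := by
        refine le_mul_of_one_le_right (by positivity) ?_
        have : (0:ℝ) ≤ m := by positivity
        linarith
      calc _ ≤ _ := norm_add_le _ _
        _ ≤ B * K * N * E * (m + 1) + ‖c‖ * ((m + 1) * N) * K * E := by linarith
        _ = _ := by ring
    have h4 := norm_primFst_primSnd_le key p hp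
    rw [kernelIter, norm_mul]
    have h5 : ‖(1 / 4 : ℂ)‖ ≤ 1 := by norm_num
    refine (mul_le_of_le_one_left (norm_nonneg _) h5).trans (h4.trans (le_of_eq ?_))
    rw [hK, Nat.factorial_succ, pow_succ (B + ‖c‖)]
    push_cast
    field_simp

lemma choose_mul_pow_le {r : ℝ} (hr : r ∈ Ioo (0:ℝ) 1) (n m : ℕ) :
    ((n + m).choose m : ℝ) * r ^ n ≤ 1 / (1 - r) ^ (m + 1) := by
  have hn : ‖r‖ < 1 := by rw [Real.norm_of_nonneg hr.1.le]; exact hr.2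
  rw [← tsum_choose_mul_geometric_of_norm_lt_one m hn]
  exact (summable_choose_mul_geometric_of_norm_lt_one m hn).le_tsum n
    fun i _ => mul_nonneg (by positivity) (pow_nonneg hr.1.le _)

/-- Normal convergence of the successive approximations. -/
lemma exists_summable_kernelIter_le {B : ℝ} (hb : ∀ n (p : ℝ × ℝ), ‖b n p‖ ≤ B)
    (hu : ∀ R : ℝ, ∃ A, ∀ n (p : ℝ × ℝ), ‖p‖ ≤ R → ‖u₀ n p‖ ≤ A)
    {K : Set (ℝ × ℝ)} (hK : IsCompact K) {r : ℝ} (hr : r ∈ Ioo (0:ℝ) 1) :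
    ∃ a : ℕ → ℝ, Summable a ∧ ∀ m n, ∀ p ∈ K, ‖kernelIter b c u₀ m n p‖ * r ^ n ≤ a m := by
  obtain ⟨R, hR, hKR⟩ := hK.exists_norm_le
  obtain ⟨A, hA⟩ := hu R
  have hA0 : 0 ≤ A := (norm_nonneg _).trans (hA 0 0 (by simpa using hR))
  have hB : 0 ≤ B := (norm_nonneg _).trans (hb 0 0)
  have h1r : 0 < 1 - r := by linarith [hr.2]
  refine ⟨fun m => A / (1 - r) * (((B + ‖c‖) * (R * R) / (1 - r)) ^ m / m.factorial),
    (Real.summable_pow_div_factorial _).mul_left _, fun m n p hp => ?_⟩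
  have hp' := hKR p hp
  have h := norm_kernelIter_le (c := c) hA0 hB hb hA m n p hp'
  rw [Prod.norm_def, max_le_iff, Real.norm_eq_abs, Real.norm_eq_abs] at hp'
  have hrn : 0 ≤ r ^ n := pow_nonneg hr.1.le n
  calc _ ≤ A * (B + ‖c‖) ^ m / m.factorial * (n + m).choose m * (|p.1| * |p.2|) ^ m * r ^ n := by
        gcongr
    _ ≤ A * (B + ‖c‖) ^ m / m.factorial * (n + m).choose m * (R * R) ^ m * r ^ n := by
        gcongr
        exacts [hp'.1, hp'.2]
    _ = A * (B + ‖c‖) ^ m / m.factorial * (R * R) ^ m * ((n + m).choose m * r ^ n) := by ring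
    _ ≤ A * (B + ‖c‖) ^ m / m.factorial * (R * R) ^ m * (1 / (1 - r) ^ (m + 1)) := by
        gcongr
        exact choose_mul_pow_le hr n m
    _ = _ := by
        simp only [div_pow, mul_pow, pow_succ]
        field_simp

/-- The integral equation `U = u₀ + ¼ ∬ (b U + c ∂ₜ U)` has a solution given by a power series in
time with unit radius of convergence. -/
lemma exists_unitRadius_integral_equation {B : ℝ} (hbc : ∀ n, Continuous (b n))
    (hb : ∀ n (p : ℝ × ℝ), ‖b n p‖ ≤ B) (huc : ∀ n, Continuous (u₀ n))
    (hu : ∀ R : ℝ, ∃ A, ∀ n (p : ℝ × ℝ), ‖p‖ ≤ R → ‖u₀ n p‖ ≤ A)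
    (hbs : ∀ n (p : ℝ × ℝ), b n p.swap = b n p)
    (hus : ∀ n (p : ℝ × ℝ), u₀ n p.swap = -u₀ n p) :
    ∃ U : ℕ → ℝ × ℝ → ℂ, UnitRadius U ∧ (∀ n p, U n p.swap = -U n p) ∧
      ∀ n p, U n p = u₀ n p + 1 / 4 * primFst (primSnd fun q =>
        mulCoeff b U n q + c * derivCoeff U n q) p := by
  set u := kernelIter b c u₀ with hu_def
  have hcont := fun m => continuous_kernelIter (c := c) hbc huc m
  have hdom : ∀ n, LocallyDominated fun m => u m n := by
    refine fun n => ⟨fun m => hcont m n, fun K hK => ?_⟩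
    obtain ⟨a, ha, h⟩ := exists_summable_kernelIter_le (c := c) hb hu hK
      (r := 1 / 2) (by norm_num)
    refine ⟨fun m => a m * 2 ^ n, ha.mul_right _, fun m p hp => ?_⟩
    have := h m n p hp
    rw [one_div, inv_pow, ← div_eq_mul_inv, div_le_iff₀ (by positivity)] at this
    exact this
  have hdomv : ∀ n, LocallyDominated fun m q => mulCoeff b (u m) n q + c * derivCoeff (u m) n q := by
    refine fun n => ⟨fun m => (continuous_mulCoeff hbc (hcont m) n).add
      (continuous_const.mul (continuous_derivCoeff (hcont m) n)), fun K hK => ?_⟩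
    choose a ha h using fun n => (hdom n).2 K hK
    refine ⟨fun m => (∑ j ∈ Finset.range (n + 1), B * a (n - j) m)
      + ‖c‖ * (‖((n : ℂ) + 1)‖ * a (n + 1) m), ?_, fun m p hp => ?_⟩
    · refine (summable_sum fun j _ => (ha _).mul_left _).add
        (((ha _).mul_left _).mul_left _)
    · refine (norm_add_le _ _).trans (add_le_add ((norm_sum_le _ _).trans
        (Finset.sum_le_sum fun j _ => ?_)) ?_)
      · rw [norm_mul]
        exact mul_le_mul (hb j p) (h _ m p hp) (norm_nonneg _) ((norm_nonneg _).trans (hb j p))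
      · rw [norm_mul, derivCoeff, norm_mul]
        gcongr
        exact h _ m p hp
  refine ⟨fun n p => ∑' m, u m n p, ⟨fun n => (hdom n).continuous_tsum, fun K hK r hr => ?_⟩,
    fun n p => ?_, fun n p => ?_⟩
  · obtain ⟨a, ha, h⟩ := exists_summable_kernelIter_le (c := c) hb hu hK hr
    refine ⟨∑' m, a m, fun n p hp => ?_⟩
    have hrn : (0:ℝ) ≤ r ^ n := pow_nonneg hr.1.le n
    rw [← Real.norm_of_nonneg hrn, ← Complex.norm_real, ← norm_mul, ← tsum_mul_right]
    refine tsum_of_norm_bounded ha.hasSum fun m => ?_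
    rw [norm_mul, Complex.norm_real, Real.norm_of_nonneg hrn]
    exact h m n p hp
  · have hanti : ∀ m n (p : ℝ × ℝ), u m n p.swap = -u m n p := by
      intro m
      induction m with
      | zero => exact hus
      | succ m ih =>
        intro n p
        have hv : ∀ q : ℝ × ℝ, mulCoeff b (u m) n q.swap + c * derivCoeff (u m) n q.swap
            = -(mulCoeff b (u m) n q + c * derivCoeff (u m) n q) := by
          intro q
          simp only [mulCoeff, derivCoeff, ih, hbs]
          simp only [mul_neg, Finset.sum_neg_distrib]
          ring
        have hvc := (hdomv n).1 m
        have : ∀ p : ℝ × ℝ, primFst (primSnd fun q =>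
            mulCoeff b (u m) n q + c * derivCoeff (u m) n q) p.swap
            = -primSnd (primFst fun q =>
              mulCoeff b (u m) n q + c * derivCoeff (u m) n q) p := by
          intro p
          simp only [primFst, primSnd, Prod.fst_swap, Prod.snd_swap, ← intervalIntegral.integral_neg,
            ← hv, Prod.swap_prod_mk]
        simp only [u, kernelIter] at this ⊢
        rw [this, primFst_primSnd_comm hvc]
        ring
    simp only [hanti, tsum_neg]
  · have hV : (fun q => mulCoeff b (fun n p => ∑' m, u m n p) n q
        + c * derivCoeff (fun n p => ∑' m, u m n p) n q)
        = fun q => ∑' m, (mulCoeff b (u m) n q + c * derivCoeff (u m) n q) := by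
      funext q
      have h1 : Summable fun m => mulCoeff b (u m) n q :=
        summable_sum fun j _ => ((hdom _).summable q).mul_left _
      have h2 : Summable fun m => c * derivCoeff (u m) n q :=
        (((hdom _).summable q).mul_left _).mul_left _
      rw [h1.tsum_add h2]
      simp only [mulCoeff, derivCoeff, tsum_mul_left]
      rw [Summable.tsum_finsetSum fun j _ => ((hdom _).summable q).mul_left _]
      simp only [tsum_mul_left]
    have hS : primSnd (fun q => ∑' m, (mulCoeff b (u m) n q + c * derivCoeff (u m) n q))
        = fun p => ∑' m, primSnd (fun q => mulCoeff b (u m) n q + c * derivCoeff (u m) n q) p :=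
      funext (hdomv n).primSnd_tsum
    beta_reduce
    rw [hV, hS, (hdomv n).primSnd.primFst_tsum, ← tsum_mul_left,
      ((hdom n).summable p).tsum_eq_zero_add]
    rfl

end kernelIter

lemma hasFDerivAt_of_partials {f f₁ f₂ : ℝ × ℝ → ℂ}
    (h₁ : ∀ p : ℝ × ℝ, HasDerivAt (fun x => f (x, p.2)) (f₁ p) p.1)
    (h₂ : ∀ p : ℝ × ℝ, HasDerivAt (fun y => f (p.1, y)) (f₂ p) p.2)
    (c₁ : Continuous f₁) (c₂ : Continuous f₂) (p : ℝ × ℝ) :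
    HasFDerivAt f ((ContinuousLinearMap.fst ℝ ℝ ℝ).smulRight (f₁ p)
      + (ContinuousLinearMap.snd ℝ ℝ ℝ).smulRight (f₂ p)) p := by
  have := (hasStrictFDerivAt_uncurry_coprod (𝕜 := ℝ) (u := p) (f := fun x y => f (x, y))
    (f₁ := fun x y => (1 : ℝ →L[ℝ] ℝ).smulRight (f₁ (x, y)))
    (f₂ := fun x y => (1 : ℝ →L[ℝ] ℝ).smulRight (f₂ (x, y)))
    (.of_forall fun q => (h₁ q).hasFDerivAt) (.of_forall fun q => (h₂ q).hasFDerivAt)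
    ((ContinuousLinearMap.smulRightL ℝ ℝ ℂ 1).continuous.comp c₁).continuousAt
    ((ContinuousLinearMap.smulRightL ℝ ℝ ℂ 1).continuous.comp c₂).continuousAt).hasFDerivAt
  refine this.congr_fderiv ?_
  ext <;> simp [Function.HasUncurry.uncurry]

lemma contDiff_succ_of_partials {f f₁ f₂ : ℝ × ℝ → ℂ} {n : ℕ}
    (h₁ : ∀ p : ℝ × ℝ, HasDerivAt (fun x => f (x, p.2)) (f₁ p) p.1)
    (h₂ : ∀ p : ℝ × ℝ, HasDerivAt (fun y => f (p.1, y)) (f₂ p) p.2)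
    (c₁ : ContDiff ℝ n f₁) (c₂ : ContDiff ℝ n f₂) : ContDiff ℝ (n + 1) f :=
  contDiff_succ_iff_hasFDerivAt.2 ⟨_,
    ((ContinuousLinearMap.smulRightL ℝ (ℝ × ℝ) ℂ (ContinuousLinearMap.fst ℝ ℝ ℝ)).contDiff.comp
      c₁).add ((ContinuousLinearMap.smulRightL ℝ (ℝ × ℝ) ℂ
        (ContinuousLinearMap.snd ℝ ℝ ℝ)).contDiff.comp c₂),
    hasFDerivAt_of_partials h₁ h₂ c₁.continuous c₂.continuous⟩

lemma contDiff_one_of_partials {f f₁ f₂ : ℝ × ℝ → ℂ}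
    (h₁ : ∀ p : ℝ × ℝ, HasDerivAt (fun x => f (x, p.2)) (f₁ p) p.1)
    (h₂ : ∀ p : ℝ × ℝ, HasDerivAt (fun y => f (p.1, y)) (f₂ p) p.2)
    (c₁ : Continuous f₁) (c₂ : Continuous f₂) : ContDiff ℝ 1 f := by
  simpa using contDiff_succ_of_partials (n := 0) h₁ h₂ (by simpa using c₁) (by simpa using c₂)

lemma ContDiff.hasDerivAt_fst {f : ℝ × ℝ → ℂ} (hf : ContDiff ℝ 1 f) (p : ℝ × ℝ) :
    HasDerivAt (fun x => f (x, p.2)) (fderiv ℝ f p (1, 0)) p.1 := by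
  have h := (hf.differentiable one_ne_zero p).hasFDerivAt
  exact h.comp_hasDerivAt p.1 ((hasDerivAt_id p.1).prodMk (hasDerivAt_const p.1 p.2))

lemma ContDiff.hasDerivAt_snd {f : ℝ × ℝ → ℂ} (hf : ContDiff ℝ 1 f) (p : ℝ × ℝ) :
    HasDerivAt (fun y => f (p.1, y)) (fderiv ℝ f p (0, 1)) p.2 := by
  have h := (hf.differentiable one_ne_zero p).hasFDerivAt
  exact h.comp_hasDerivAt p.2 ((hasDerivAt_const p.2 p.1).prodMk (hasDerivAt_id p.2))

lemma hasDerivAt_primFst {f : ℝ × ℝ → ℂ} (hf : Continuous f) (p : ℝ × ℝ) :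
    HasDerivAt (fun x => primFst f (x, p.2)) (f p) p.1 :=
  integral_hasDerivAt_right ((hf.comp (by fun_prop : Continuous fun τ : ℝ => (τ, p.2))
    ).intervalIntegrable _ _) ((hf.comp (by fun_prop : Continuous fun τ : ℝ => (τ, p.2))
    ).stronglyMeasurableAtFilter _ _) (hf.comp
    (by fun_prop : Continuous fun τ : ℝ => (τ, p.2))).continuousAt

lemma hasDerivAt_primSnd {f : ℝ × ℝ → ℂ} (hf : Continuous f) (p : ℝ × ℝ) :
    HasDerivAt (fun y => primSnd f (p.1, y)) (f p) p.2 :=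
  hasDerivAt_primFst (hf.comp continuous_swap) p.swap

lemma contDiff_one_primFst {f : ℝ × ℝ → ℂ} (hf : ContDiff ℝ 1 f) : ContDiff ℝ 1 (primFst f) := by
  set f₂ : ℝ × ℝ → ℂ := fun p => fderiv ℝ f p (0, 1) with hf₂
  have hc₂ : Continuous f₂ := (hf.continuous_fderiv one_ne_zero).clm_apply continuous_const
  have heq : ∀ p : ℝ × ℝ, f p = f (p.1, 0) + primSnd f₂ p := fun p => by
    have := integral_eq_sub_of_hasDerivAt (f := fun y => f (p.1, y)) (f' := fun y => f₂ (p.1, y))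
      (a := 0) (b := p.2) (fun y _ => hf.hasDerivAt_snd (p.1, y))
      ((hc₂.comp (by fun_prop : Continuous fun s : ℝ => (p.1, s))).intervalIntegrable _ _)
    rw [primSnd, this]
    ring
  have hprim : ∀ p : ℝ × ℝ, primFst f p
      = primFst (fun q => f (q.1, 0)) p + primSnd (primFst f₂) p := fun p => by
    rw [← primFst_primSnd_comm hc₂]
    simp only [primFst]
    rw [← integral_add]
    · exact integral_congr fun τ _ => heq _
    · exact (hf.continuous.comp (by fun_prop : Continuous fun τ : ℝ => (τ, (0:ℝ)))
        ).intervalIntegrable _ _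
    · exact ((continuous_primSnd hc₂).comp
        (by fun_prop : Continuous fun τ : ℝ => (τ, p.2))).intervalIntegrable _ _
  refine contDiff_one_of_partials (hasDerivAt_primFst hf.continuous) (f₂ := primFst f₂)
    (fun p => ?_) hf.continuous (continuous_primFst hc₂)
  have h := (hasDerivAt_primSnd (continuous_primFst hc₂) p).const_add
    (primFst (fun q => f (q.1, 0)) p)
  exact h.congr_of_eventuallyEq (.of_forall fun y => hprim (p.1, y))

lemma contDiff_one_primSnd {f : ℝ × ℝ → ℂ} (hf : ContDiff ℝ 1 f) : ContDiff ℝ 1 (primSnd f) :=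
  (contDiff_one_primFst (hf.comp (contDiff_snd.prodMk contDiff_fst))).comp
    (contDiff_snd.prodMk contDiff_fst)

/-- The function with `∂₁∂₂ G = F / 4` and prescribed derivatives `∓D / 4` along the axes. -/
noncomputable def goursat (D : ℝ → ℂ) (F : ℝ × ℝ → ℂ) (p : ℝ × ℝ) : ℂ :=
  -(1 / 4) * (primFst (fun q => D q.1) p - primSnd (fun q => D q.2) p)
    + 1 / 4 * primFst (primSnd F) p

/-- First partial derivative of `goursat`. -/
noncomputable def goursatFst (D : ℝ → ℂ) (F : ℝ × ℝ → ℂ) (p : ℝ × ℝ) : ℂ :=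
  -(1 / 4) * D p.1 + 1 / 4 * primSnd F p

/-- Second partial derivative of `goursat`. -/
noncomputable def goursatSnd (D : ℝ → ℂ) (F : ℝ × ℝ → ℂ) (p : ℝ × ℝ) : ℂ :=
  1 / 4 * D p.2 + 1 / 4 * primFst F p

section goursat

variable {D : ℝ → ℂ} {F : ℝ × ℝ → ℂ}

lemma hasDerivAt_goursat_fst (hD : Continuous D) (hF : Continuous F) (p : ℝ × ℝ) :
    HasDerivAt (fun x => goursat D F (x, p.2)) (goursatFst D F p) p.1 := by
  have h₁ := hasDerivAt_primFst (hD.comp continuous_fst) p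
  have h₂ := hasDerivAt_primFst (continuous_primSnd hF) p
  exact ((h₁.sub_const (primSnd (fun q => D q.2) p)).const_mul (-(1 / 4))).add
    (h₂.const_mul (1 / 4))

lemma hasDerivAt_goursat_snd (hD : Continuous D) (hF : Continuous F) (p : ℝ × ℝ) :
    HasDerivAt (fun y => goursat D F (p.1, y)) (goursatSnd D F p) p.2 := by
  have h₁ := hasDerivAt_primSnd (hD.comp continuous_snd) p
  have h₂ := hasDerivAt_primSnd (continuous_primFst hF) p
  have := ((h₁.const_sub (primFst (fun q => D q.1) p)).const_mul (-(1 / 4))).add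
    (h₂.const_mul (1 / 4))
  refine (this.congr_of_eventuallyEq (.of_forall fun y => ?_)).congr_deriv ?_
  · simp only [goursat, primFst_primSnd_comm hF]
    rfl
  · simp [goursatSnd]

lemma continuous_goursatFst (hD : Continuous D) (hF : Continuous F) :
    Continuous (goursatFst D F) :=
  (continuous_const.mul (hD.comp continuous_fst)).add (continuous_const.mul (continuous_primSnd hF))

lemma continuous_goursatSnd (hD : Continuous D) (hF : Continuous F) :
    Continuous (goursatSnd D F) :=
  (continuous_const.mul (hD.comp continuous_snd)).add (continuous_const.mul (continuous_primFst hF))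

lemma contDiff_goursatFst (hD : ContDiff ℝ 1 D) (hF : ContDiff ℝ 1 F) :
    ContDiff ℝ 1 (goursatFst D F) :=
  (contDiff_const.mul (hD.comp contDiff_fst)).add (contDiff_const.mul (contDiff_one_primSnd hF))

lemma contDiff_goursatSnd (hD : ContDiff ℝ 1 D) (hF : ContDiff ℝ 1 F) :
    ContDiff ℝ 1 (goursatSnd D F) :=
  (contDiff_const.mul (hD.comp contDiff_snd)).add (contDiff_const.mul (contDiff_one_primFst hF))

lemma contDiff_one_goursat (hD : Continuous D) (hF : Continuous F) :
    ContDiff ℝ 1 (goursat D F) :=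
  contDiff_one_of_partials (hasDerivAt_goursat_fst hD hF) (hasDerivAt_goursat_snd hD hF)
    (continuous_goursatFst hD hF) (continuous_goursatSnd hD hF)

lemma contDiff_two_goursat (hD : ContDiff ℝ 1 D) (hF : ContDiff ℝ 1 F) :
    ContDiff ℝ 2 (goursat D F) := by
  simpa [one_add_one_eq_two] using contDiff_succ_of_partials (n := 1)
    (hasDerivAt_goursat_fst hD.continuous hF.continuous)
    (hasDerivAt_goursat_snd hD.continuous hF.continuous)
    (by simpa using contDiff_goursatFst hD hF) (by simpa using contDiff_goursatSnd hD hF)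

lemma hasDerivAt_comp_char_fst {f f₁ f₂ : ℝ × ℝ → ℂ}
    (hf : ∀ p, HasFDerivAt f ((ContinuousLinearMap.fst ℝ ℝ ℝ).smulRight (f₁ p)
      + (ContinuousLinearMap.snd ℝ ℝ ℝ).smulRight (f₂ p)) p) (x y : ℝ) :
    HasDerivAt (fun x' => f (x' + y, x' - y)) (f₁ (x + y, x - y) + f₂ (x + y, x - y)) x := by
  refine ((hf (x + y, x - y)).comp_hasDerivAt x
    (((hasDerivAt_id x).add_const y).prodMk ((hasDerivAt_id x).sub_const y))).congr_deriv ?_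
  simp

lemma hasDerivAt_comp_char_snd {f f₁ f₂ : ℝ × ℝ → ℂ}
    (hf : ∀ p, HasFDerivAt f ((ContinuousLinearMap.fst ℝ ℝ ℝ).smulRight (f₁ p)
      + (ContinuousLinearMap.snd ℝ ℝ ℝ).smulRight (f₂ p)) p) (x y : ℝ) :
    HasDerivAt (fun y' => f (x + y', x - y')) (f₁ (x + y, x - y) - f₂ (x + y, x - y)) y := by
  refine ((hf (x + y, x - y)).comp_hasDerivAt y
    (((hasDerivAt_id y).const_add x).prodMk ((hasDerivAt_id y).const_sub x))).congr_deriv ?_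
  simp [sub_eq_add_neg]

lemma ContDiff.hasFDerivAt_partials {f : ℝ × ℝ → ℂ} (hf : ContDiff ℝ 1 f) (p : ℝ × ℝ) :
    HasFDerivAt f ((ContinuousLinearMap.fst ℝ ℝ ℝ).smulRight (fderiv ℝ f p (1, 0))
      + (ContinuousLinearMap.snd ℝ ℝ ℝ).smulRight (fderiv ℝ f p (0, 1))) p :=
  hasFDerivAt_of_partials hf.hasDerivAt_fst hf.hasDerivAt_snd
    ((hf.continuous_fderiv one_ne_zero).clm_apply continuous_const)
    ((hf.continuous_fderiv one_ne_zero).clm_apply continuous_const) p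

/-- In the coordinates `ξ = x + y`, `η = x - y`, `goursat D F` solves `w_xx - w_yy = F`. -/
lemma goursat_wave (hD : ContDiff ℝ 1 D) (hF : ContDiff ℝ 1 F) (x y : ℝ) :
    ∃ wxx wyy : ℂ,
      HasDerivAt (fun x' => deriv (fun x'' => goursat D F (x'' + y, x'' - y)) x') wxx x ∧
      HasDerivAt (fun y' => deriv (fun y'' => goursat D F (x + y'', x - y'')) y') wyy y ∧
      wxx = wyy + F (x + y, x - y) := by
  have hG := hasFDerivAt_of_partials (hasDerivAt_goursat_fst hD.continuous hF.continuous)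
    (hasDerivAt_goursat_snd hD.continuous hF.continuous)
    (continuous_goursatFst hD.continuous hF.continuous)
    (continuous_goursatSnd hD.continuous hF.continuous)
  have h₁ := contDiff_goursatFst hD hF
  have h₂ := contDiff_goursatSnd hD hF
  set p : ℝ × ℝ := (x + y, x - y)
  have e₁ : fderiv ℝ (goursatFst D F) p (0, 1) = 1 / 4 * F p :=
    (h₁.hasDerivAt_snd p).unique
      (((hasDerivAt_primSnd hF.continuous p).const_mul (1 / 4)).const_add (-(1 / 4) * D p.1))
  have e₂ : fderiv ℝ (goursatSnd D F) p (1, 0) = 1 / 4 * F p :=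
    (h₂.hasDerivAt_fst p).unique
      (((hasDerivAt_primFst hF.continuous p).const_mul (1 / 4)).const_add (1 / 4 * D p.2))
  simp only [fun x' => (hasDerivAt_comp_char_fst hG x' y).deriv,
    fun y' => (hasDerivAt_comp_char_snd hG x y').deriv]
  refine ⟨_, _, (hasDerivAt_comp_char_fst h₁.hasFDerivAt_partials x y).add
    (hasDerivAt_comp_char_fst h₂.hasFDerivAt_partials x y),
    (hasDerivAt_comp_char_snd h₁.hasFDerivAt_partials x y).sub
    (hasDerivAt_comp_char_snd h₂.hasFDerivAt_partials x y), ?_⟩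
  change _ + fderiv ℝ (goursatFst D F) p (0, 1) + (fderiv ℝ (goursatSnd D F) p (1, 0) + _) =
    _ - fderiv ℝ (goursatFst D F) p (0, 1) - (fderiv ℝ (goursatSnd D F) p (1, 0) - _) + _
  rw [e₁, e₂]
  ring

end goursat

lemma HasDerivAt.mul_of_eq_zero {q g : ℝ → ℂ} {g' : ℂ} {a : ℝ} (hq : ContinuousAt q a)
    (hg : HasDerivAt g g' a) (h0 : g a = 0) : HasDerivAt (fun x => q x * g x) (q a * g') a := by
  rw [hasDerivAt_iff_tendsto_slope] at hg ⊢
  refine ((hq.tendsto.mono_left nhdsWithin_le_nhds).mul hg).congr fun x => ?_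
  simp only [slope_def_module, h0, mul_zero, sub_zero, Complex.real_smul]
  ring

/-- Multiplication by a `C¹` function of `|ξ - η|` preserves `C¹` antisymmetric functions. -/
lemma contDiff_one_comp_abs_mul {Q : ℝ → ℂ} {G : ℝ × ℝ → ℂ} (hQ : ContDiff ℝ 1 Q)
    (hG : ContDiff ℝ 1 G) (hanti : ∀ p : ℝ × ℝ, G p.swap = -G p) :
    ContDiff ℝ 1 fun p : ℝ × ℝ => Q (|p.1 - p.2| / 2) * G p := by
  have hQ' : Continuous (deriv Q) := hQ.continuous_deriv le_rfl
  have hQd : ∀ x, HasDerivAt Q (deriv Q x) x := fun x =>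
    (hQ.differentiable one_ne_zero x).hasDerivAt
  have hGd : Continuous fun p => fderiv ℝ G p (1, 0) :=
    (hG.continuous_fderiv one_ne_zero).clm_apply continuous_const
  set f₁ : ℝ × ℝ → ℂ := fun p => 1 / 2 * deriv Q (|p.1 - p.2| / 2) * G (max p.1 p.2, min p.1 p.2)
    + Q (|p.1 - p.2| / 2) * fderiv ℝ G p (1, 0) with hf₁
  have hf₁c : Continuous f₁ := by
    have := hQ.continuous
    have := hG.continuous
    fun_prop
  have h₁ : ∀ p : ℝ × ℝ, HasDerivAt (fun x => Q (|x - p.2| / 2) * G (x, p.2)) (f₁ p) p.1 := by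
    intro p
    have hd := hG.hasDerivAt_fst p
    rcases lt_trichotomy p.1 p.2 with h | h | h
    · have habs : HasDerivAt (fun x => |x - p.2| / 2) (-1 / 2) p.1 := by
        refine ((((hasDerivAt_id p.1).sub_const p.2).neg).div_const 2).congr_of_eventuallyEq ?_
        filter_upwards [eventually_lt_nhds h] with x hx
        rw [abs_of_neg (by linarith)]; simp
      refine (((hQd _).scomp p.1 habs).mul hd).congr_deriv ?_
      simp only [hf₁, max_eq_right h.le, min_eq_left h.le, Complex.real_smul]
      rw [show G (p.2, p.1) = -G p from hanti p]
      simp only [Function.comp_apply, Prod.mk.eta]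
      push_cast
      ring
    · have h0 : G p = 0 := by
        have := hanti p
        rw [show p.swap = p from Prod.ext h.symm h] at this
        exact self_eq_neg.1 this
      have := HasDerivAt.mul_of_eq_zero (q := fun x => Q (|x - p.2| / 2))
        (by have := hQ.continuous; fun_prop) hd h0
      refine this.congr_deriv ?_
      simp only [hf₁, max_eq_right h.le, min_eq_right h.ge]
      rw [show G (p.2, p.2) = 0 by rw [← h0]; congr 1; exact Prod.ext h.symm rfl]
      simp
    · have habs : HasDerivAt (fun x => |x - p.2| / 2) (1 / 2) p.1 := by
        refine (((hasDerivAt_id p.1).sub_const p.2).div_const 2).congr_of_eventuallyEq ?_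
        filter_upwards [eventually_gt_nhds h] with x hx
        rw [abs_of_pos (by linarith)]; simp
      refine (((hQd _).scomp p.1 habs).mul hd).congr_deriv ?_
      simp only [hf₁, max_eq_left h.le, min_eq_right h.le, Complex.real_smul]
      simp only [Function.comp_apply, Prod.mk.eta]
      push_cast
      ring
  refine contDiff_one_of_partials (f₂ := fun p => -f₁ p.swap) h₁ (fun p => ?_) hf₁c
    (hf₁c.comp continuous_swap).neg
  refine (h₁ p.swap).neg.congr_of_eventuallyEq (.of_forall fun y => ?_)
  simp only [Pi.neg_apply, Prod.snd_swap]
  rw [show G (y, p.1) = -G (p.1, y) from hanti (p.1, y), abs_sub_comm]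
  ring

lemma norm_tsum_coeff_sub_le {c : ℕ → ℝ} {C t : ℝ} (hc : ∀ n, |c n| ≤ C) (ht : t ∈ Ico (0:ℝ) 1) :
    |∑' n, c n * t ^ n - c 0| ≤ C * t / (1 - t) := by
  have hs : Summable fun n => c n * t ^ n := by
    refine Summable.of_norm_bounded ((summable_geometric_of_lt_one ht.1 ht.2).mul_left C)
      fun n => ?_
    rw [norm_mul, norm_pow, Real.norm_of_nonneg ht.1]
    exact mul_le_mul_of_nonneg_right (hc n) (pow_nonneg ht.1 n)
  have hg := (hasSum_geometric_of_lt_one ht.1 ht.2).mul_left (C * t)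
  rw [hs.tsum_eq_zero_add, pow_zero, mul_one, add_sub_cancel_left, div_eq_mul_inv]
  rw [← Real.norm_eq_abs]
  refine tsum_of_norm_bounded hg fun n => ?_
  rw [norm_mul, norm_pow, Real.norm_of_nonneg ht.1, pow_succ']
  calc _ ≤ C * (t * t ^ n) :=
        mul_le_mul_of_nonneg_right (hc _) (mul_nonneg ht.1 (pow_nonneg ht.1 n))
    _ = _ := by ring

/-- The coefficients of a power series in time, bounded uniformly in space, are continuous in space
as soon as the sum is. -/
lemma continuousOn_coeff {S : Set ℝ} {C : ℝ} (n : ℕ) : ∀ {f : ℝ → ℝ → ℝ} {c : ℕ → ℝ → ℝ},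
    (∀ t ∈ Ioo (0:ℝ) 1, ContinuousOn (fun x => f x t) S) → (∀ n, ∀ x ∈ S, |c n x| ≤ C) →
    (∀ x ∈ S, ∀ t ∈ Ioo (0:ℝ) 1, f x t = ∑' n, c n x * t ^ n) → ContinuousOn (c n) S := by
  have hzero : ∀ {f : ℝ → ℝ → ℝ} {c : ℕ → ℝ → ℝ},
      (∀ t ∈ Ioo (0:ℝ) 1, ContinuousOn (fun x => f x t) S) → (∀ n, ∀ x ∈ S, |c n x| ≤ C) →
      (∀ x ∈ S, ∀ t ∈ Ioo (0:ℝ) 1, f x t = ∑' n, c n x * t ^ n) → ContinuousOn (c 0) S := by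
    intro f c hf hc hs
    have hlim : Filter.Tendsto (fun t : ℝ => C * t / (1 - t)) (nhdsWithin 0 (Ioi 0)) (nhds 0) := by
      have : ContinuousAt (fun t : ℝ => C * t / (1 - t)) 0 :=
        ContinuousAt.div (by fun_prop) (by fun_prop) (by norm_num)
      simpa using this.tendsto.mono_left nhdsWithin_le_nhds
    have hev : ∀ᶠ t : ℝ in nhdsWithin 0 (Ioi 0), t ∈ Ioo (0:ℝ) 1 := Ioo_mem_nhdsGT one_pos
    refine TendstoUniformlyOn.continuousOn (F := fun t x => f x t)
      (p := nhdsWithin (0:ℝ) (Ioi 0)) ?_ (hev.mono fun t ht => hf t ht).frequently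
    rw [Metric.tendstoUniformlyOn_iff]
    intro ε hε
    filter_upwards [hev, hlim.eventually (gt_mem_nhds hε)] with t ht hlt x hx
    rw [dist_comm, Real.dist_eq, hs x hx t ht]
    exact (norm_tsum_coeff_sub_le (fun n => hc n x hx) ⟨ht.1.le, ht.2⟩).trans_lt hlt
  induction n with
  | zero => exact hzero
  | succ n ih =>
    intro f c hf hc hs
    refine ih (f := fun x t => (f x t - c 0 x) / t) (c := fun n => c (n + 1))
      (fun t ht => ((hf t ht).sub (hzero hf hc hs)).div_const t) (fun n => hc _) ?_
    intro x hx t ht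
    have hsum : Summable fun n => c n x * t ^ n := by
      refine Summable.of_norm_bounded ((summable_geometric_of_lt_one ht.1.le ht.2).mul_left C)
        fun n => ?_
      rw [norm_mul, norm_pow, Real.norm_of_nonneg ht.1.le]
      exact mul_le_mul_of_nonneg_right (hc n x hx) (pow_nonneg ht.1.le n)
    rw [hs x hx t ht, hsum.tsum_eq_zero_add, pow_zero, mul_one, add_sub_cancel_left,
      div_eq_iff ht.1.ne', ← tsum_mul_right]
    exact tsum_congr fun n => by ring

lemma contDiff_one_glue {g h : ℝ → ℝ} {a : ℝ} (hg : ContDiff ℝ 1 g) (hh : ContDiff ℝ 1 h)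
    (h0 : g a = h a) (h1 : deriv g a = deriv h a) :
    ContDiff ℝ 1 fun x => if x ≤ a then g x else h x := by
  have hgd := fun x => (hg.differentiable one_ne_zero x).hasDerivAt
  have hhd := fun x => (hh.differentiable one_ne_zero x).hasDerivAt
  have key : ∀ x, HasDerivAt (fun x => if x ≤ a then g x else h x)
      (if x ≤ a then deriv g x else deriv h x) x := by
    intro x
    rcases lt_trichotomy x a with hx | rfl | hx
    · rw [if_pos hx.le]
      refine (hgd x).congr_of_eventuallyEq ?_
      filter_upwards [eventually_lt_nhds hx] with y hy
      rw [if_pos hy.le]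
    · rw [if_pos le_rfl, ← hasDerivWithinAt_univ, ← Iic_union_Ici (a := x)]
      refine HasDerivWithinAt.union ?_ ?_
      · exact (hgd x).hasDerivWithinAt.congr (fun y hy => if_pos hy) (if_pos le_rfl)
      · rw [h1]
        refine (hhd x).hasDerivWithinAt.congr (fun y hy => ?_) (by rw [if_pos le_rfl, h0])
        rcases (show x ≤ y from hy).eq_or_lt with rfl | hlt
        · rw [if_pos le_rfl, h0]
        · rw [if_neg hlt.not_ge]
    · rw [if_neg hx.not_ge]
      refine (hhd x).congr_of_eventuallyEq ?_
      filter_upwards [eventually_gt_nhds hx] with y hy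
      rw [if_neg hy.not_ge]
  rw [contDiff_one_iff_deriv]
  refine ⟨fun x => (key x).differentiableAt, ?_⟩
  rw [funext fun x => (key x).deriv]
  exact Continuous.if_le (hg.continuous_deriv le_rfl) (hh.continuous_deriv le_rfl) continuous_id
    continuous_const fun x hx => by rw [hx, h1]

lemma exists_contDiff_one_eqOn_Icc {f : ℝ → ℝ} (hf : ContDiffOn ℝ 1 f (Icc 0 1)) :
    ∃ g : ℝ → ℝ, ContDiff ℝ 1 g ∧ EqOn g f (Icc 0 1) := by
  have hu : UniqueDiffOn ℝ (Icc (0:ℝ) 1) := uniqueDiffOn_Icc one_pos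
  have hc : ContinuousOn (derivWithin f (Icc 0 1)) (Icc 0 1) :=
    hf.continuousOn_derivWithin hu le_rfl
  set d : ℝ → ℝ := IccExtend zero_le_one ((Icc (0:ℝ) 1).domRestrict (derivWithin f (Icc 0 1)))
  have hd : Continuous d := (continuousOn_iff_continuous_domRestrict.1 hc).Icc_extend'
  have hder : ∀ x, HasDerivAt (fun x => f 0 + ∫ s in (0:ℝ)..x, d s) (d x) x := fun x =>
    (integral_hasDerivAt_right (hd.intervalIntegrable _ _) (hd.stronglyMeasurableAtFilter _ _)
      hd.continuousAt).const_add _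
  refine ⟨fun x => f 0 + ∫ s in (0:ℝ)..x, d s, ?_, fun x hx => ?_⟩
  · rw [contDiff_one_iff_deriv, funext fun x => (hder x).deriv]
    exact ⟨fun x => (hder x).differentiableAt, hd⟩
  · have := integral_eq_sub_of_hasDerivAt_of_le (f' := d) hx.1
      (hf.continuousOn.mono (Icc_subset_Icc_right hx.2)) (fun y hy => ?_)
      (hd.intervalIntegrable _ _)
    · simp [this]
    · have hy' : y ∈ Ioo (0:ℝ) 1 := ⟨hy.1, hy.2.trans_le hx.2⟩
      have := ((hf.differentiableOn one_ne_zero) y (Ioo_subset_Icc_self hy')).hasDerivWithinAt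
      rw [show d y = derivWithin f (Icc 0 1) y from IccExtend_of_mem _ _ (Ioo_subset_Icc_self hy')]
      exact this.hasDerivAt (Icc_mem_nhds hy'.1 hy'.2)

/-- A bounded function which is tangent to the identity at the origin. -/
noncomputable def foldMap (s : ℝ) : ℝ := s / (1 + s ^ 2)

lemma foldMap_mem {s : ℝ} (hs : 0 ≤ s) : foldMap s ∈ Icc (0:ℝ) 1 := by
  refine ⟨by unfold foldMap; positivity, ?_⟩
  rw [foldMap, div_le_one (by positivity)]
  nlinarith [sq_nonneg (s - 1)]

lemma contDiff_foldMap : ContDiff ℝ 1 foldMap :=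
  ContDiff.div contDiff_id (by fun_prop) fun s => by positivity

lemma foldMap_zero : foldMap 0 = 0 := by simp [foldMap]

lemma deriv_foldMap_zero : deriv foldMap 0 = 1 := by
  have := (hasDerivAt_id (0:ℝ)).div (((hasDerivAt_id (0:ℝ)).pow 2).const_add 1) (by norm_num)
  refine (this.congr_of_eventuallyEq (.of_forall fun s => rfl)).deriv.trans ?_
  simp

/-- Linear extension operator from `[0,1]` to the line, by odd reflection through the graph end
points; it preserves continuous and continuously differentiable functions. -/
noncomputable def reflectExtend (f : ℝ → ℝ) (x : ℝ) : ℝ :=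
  f (max 0 (min 1 x)) + (f 0 - f (foldMap (max 0 (-x)))) + (f 1 - f (1 - foldMap (max 0 (x - 1))))

lemma mem_Icc_of_fold (x : ℝ) : max 0 (min 1 x) ∈ Icc (0:ℝ) 1 ∧
    foldMap (max 0 (-x)) ∈ Icc (0:ℝ) 1 ∧ 1 - foldMap (max 0 (x - 1)) ∈ Icc (0:ℝ) 1 := by
  have h := foldMap_mem (le_max_left 0 (x - 1))
  exact ⟨⟨le_max_left _ _, max_le zero_le_one (min_le_left _ _)⟩, foldMap_mem (le_max_left _ _),
    by linarith [h.2], by linarith [h.1]⟩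

lemma reflectExtend_of_mem {f : ℝ → ℝ} {x : ℝ} (hx : x ∈ Icc (0:ℝ) 1) :
    reflectExtend f x = f x := by
  rw [reflectExtend, min_eq_right hx.2, max_eq_right hx.1, max_eq_left (by linarith [hx.1]),
    max_eq_left (by linarith [hx.2]), foldMap_zero]
  simp

lemma continuous_reflectExtend {f : ℝ → ℝ} (hf : ContinuousOn f (Icc 0 1)) :
    Continuous (reflectExtend f) := by
  have hφ := contDiff_foldMap.continuous
  refine ((hf.comp_continuous (by fun_prop) fun x => (mem_Icc_of_fold x).1).add
    (continuous_const.sub (hf.comp_continuous (by fun_prop) fun x => (mem_Icc_of_fold x).2.1))).add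
    (continuous_const.sub (hf.comp_continuous (by fun_prop) fun x => (mem_Icc_of_fold x).2.2))

lemma abs_reflectExtend_le {f : ℝ → ℝ} {C : ℝ} (hf : ∀ x ∈ Icc (0:ℝ) 1, |f x| ≤ C) (x : ℝ) :
    |reflectExtend f x| ≤ 5 * C := by
  obtain ⟨h1, h2, h3⟩ := mem_Icc_of_fold x
  have a1 := abs_le.1 (hf _ h1)
  have a2 := abs_le.1 (hf _ h2)
  have a3 := abs_le.1 (hf _ h3)
  have a4 := abs_le.1 (hf 0 (by simp))
  have a5 := abs_le.1 (hf 1 (by simp))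
  rw [reflectExtend, abs_le]
  constructor <;> linarith

lemma contDiff_reflectExtend {f : ℝ → ℝ} (hf : ContDiffOn ℝ 1 f (Icc 0 1)) :
    ContDiff ℝ 1 (reflectExtend f) := by
  obtain ⟨g, hg, hgf⟩ := exists_contDiff_one_eqOn_Icc hf
  have hφ := contDiff_foldMap
  have hgd := fun x => (hg.differentiable one_ne_zero x).hasDerivAt
  have hφd : HasDerivAt foldMap 1 0 := by
    simpa [deriv_foldMap_zero] using (hφ.differentiable one_ne_zero 0).hasDerivAt
  set r : ℝ → ℝ := fun x => 2 * g 1 - g (1 - foldMap (x - 1))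
  set l : ℝ → ℝ := fun x => 2 * g 0 - g (foldMap (-x))
  have hr : ContDiff ℝ 1 r := by fun_prop
  have hl : ContDiff ℝ 1 l := by fun_prop
  have hrd : HasDerivAt r (deriv g 1) 1 := by
    have h1 : HasDerivAt (fun x : ℝ => 1 - foldMap (x - 1)) (-1) 1 := by
      have := HasDerivAt.comp (1:ℝ) (h₂ := foldMap) (h := fun x : ℝ => x - 1) (h₂' := 1) (h' := 1)
        (by simpa using hφd) ((hasDerivAt_id (1:ℝ)).sub_const 1)
      simpa [Function.comp_def] using this.const_sub 1
    have h2 := HasDerivAt.comp (1:ℝ) (h₂ := g) (h₂' := deriv g 1)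
      (by simpa [foldMap_zero] using hgd 1) h1
    simpa [Function.comp_def, r] using h2.const_sub (2 * g 1)
  have hld : HasDerivAt l (deriv g 0) 0 := by
    have h1 : HasDerivAt (fun x : ℝ => foldMap (-x)) (-1) 0 := by
      have := HasDerivAt.comp (0:ℝ) (h₂ := foldMap) (h := fun x : ℝ => -x) (h₂' := 1) (h' := -1)
        (by simpa using hφd) (hasDerivAt_neg 0)
      simpa [Function.comp_def] using this
    have h2 := HasDerivAt.comp (0:ℝ) (h₂ := g) (h₂' := deriv g 0)
      (by simpa [foldMap_zero] using hgd 0) h1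
    simpa [Function.comp_def, l] using h2.const_sub (2 * g 0)
  have hgr : ContDiff ℝ 1 fun x => if x ≤ 1 then g x else r x :=
    contDiff_one_glue hg hr (by simp [r, foldMap_zero]; ring) hrd.deriv.symm
  have hgr0 : (fun x => if x ≤ 1 then g x else r x) =ᶠ[nhds 0] g := by
    filter_upwards [eventually_lt_nhds one_pos] with x hx
    rw [if_pos hx.le]
  have hall := contDiff_one_glue hl hgr (a := 0) (by simp [l, foldMap_zero]; ring)
    (by rw [hgr0.deriv_eq, hld.deriv])
  convert hall using 1
  funext x
  obtain ⟨h1, h2, h3⟩ := mem_Icc_of_fold x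
  rw [reflectExtend, ← hgf h1, ← hgf h2, ← hgf h3, ← hgf (show (0:ℝ) ∈ Icc 0 1 by simp),
    ← hgf (show (1:ℝ) ∈ Icc 0 1 by simp)]
  by_cases hx0 : x ≤ 0
  · rw [if_pos hx0, min_eq_right (by linarith), max_eq_left hx0, max_eq_right (by linarith),
      max_eq_left (by linarith), foldMap_zero]
    simp only [l, sub_zero]
    ring
  · rw [if_neg hx0]
    push Not at hx0
    by_cases hx1 : x ≤ 1
    · rw [if_pos hx1, min_eq_right hx1, max_eq_right hx0.le, max_eq_left (by linarith),
        max_eq_left (by linarith), foldMap_zero, sub_zero]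
      ring
    · rw [if_neg hx1]
      push Not at hx1
      rw [min_eq_left hx1.le, max_eq_right zero_le_one, max_eq_left (by linarith),
        max_eq_right (by linarith), foldMap_zero]
      simp only [r]
      ring

lemma SpaceC1TimeAnalytic.exists_extension {f : ℝ → ℝ → ℝ} (hf : SpaceC1TimeAnalytic f) :
    ∃ (c : ℕ → ℝ → ℝ) (C : ℝ), (∀ n, Continuous (c n)) ∧ (∀ n x, |c n x| ≤ C) ∧
      (∀ t ∈ Ico (0:ℝ) 1, ContDiff ℝ 1 fun x => ∑' n, c n x * t ^ n) ∧
      ∀ x ∈ Icc (0:ℝ) 1, ∀ t ∈ Ico (0:ℝ) 1, f x t = ∑' n, c n x * t ^ n := by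
  obtain ⟨hC1, c, C, hc, hs⟩ := hf
  have hcont := fun n => continuousOn_coeff n
    (fun t ht => (hC1 t (Ioo_subset_Ico_self ht)).continuousOn) hc
    (fun x hx t ht => hs x hx t (Ioo_subset_Ico_self ht))
  refine ⟨fun n => reflectExtend (c n), 5 * C, fun n => continuous_reflectExtend (hcont n),
    fun n => abs_reflectExtend_le (hc n), fun t ht => ?_, fun x hx t ht => ?_⟩
  · convert contDiff_reflectExtend (hC1 t ht) using 1
    funext x
    have hsum : ∀ x ∈ Icc (0:ℝ) 1, HasSum (fun n => c n x * t ^ n) (f x t) := by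
      intro x hx
      rw [hs x hx t ht]
      refine (Summable.of_norm_bounded ((summable_geometric_of_lt_one ht.1 ht.2).mul_left C)
        fun n => ?_).hasSum
      rw [norm_mul, norm_pow, Real.norm_of_nonneg ht.1]
      exact mul_le_mul_of_nonneg_right (hc n x hx) (pow_nonneg ht.1 n)
    obtain ⟨h1, h2, h3⟩ := mem_Icc_of_fold x
    refine (((hsum _ h1).add ((hsum 0 (by simp)).sub (hsum _ h2))).add
      ((hsum 1 (by simp)).sub (hsum _ h3))).tsum_eq.symm.trans ?_ |>.symm
    exact tsum_congr fun n => by simp only [reflectExtend]; ring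
  · rw [hs x hx t ht]
    exact tsum_congr fun n => by simp only [reflectExtend_of_mem hx]

/-- Complex combinations of space-`C¹`, time-analytic functions extend to the whole line. -/
lemma exists_complex_extension {f g : ℝ → ℝ → ℝ} (hf : SpaceC1TimeAnalytic f)
    (hg : SpaceC1TimeAnalytic g) (z : ℂ) :
    ∃ (P : ℕ → ℝ → ℂ) (C : ℝ), (∀ n, Continuous (P n)) ∧ (∀ n x, ‖P n x‖ ≤ C) ∧
      (∀ t ∈ Ico (0:ℝ) 1, ContDiff ℝ 1 (evalSeries P t)) ∧
      ∀ x ∈ Icc (0:ℝ) 1, ∀ t ∈ Ico (0:ℝ) 1,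
        evalSeries P t x = z * (f x t - Complex.I * g x t) := by
  obtain ⟨c, C, hc1, hc2, hc3, hc4⟩ := hf.exists_extension
  obtain ⟨d, D, hd1, hd2, hd3, hd4⟩ := hg.exists_extension
  have hsum : ∀ {c : ℕ → ℝ → ℝ} {C : ℝ}, (∀ n x, |c n x| ≤ C) → ∀ x, ∀ t ∈ Ico (0:ℝ) 1,
      HasSum (fun n => (c n x : ℂ) * (t : ℂ) ^ n) ((∑' n, c n x * t ^ n : ℝ) : ℂ) := by
    intro c C hc x t ht
    have : HasSum (fun n => c n x * t ^ n) (∑' n, c n x * t ^ n) := by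
      refine (Summable.of_norm_bounded ((summable_geometric_of_lt_one ht.1 ht.2).mul_left C)
        fun n => ?_).hasSum
      rw [norm_mul, norm_pow, Real.norm_of_nonneg ht.1]
      exact mul_le_mul_of_nonneg_right (hc n x) (pow_nonneg ht.1 n)
    simpa using Complex.hasSum_ofReal.2 this
  have heval : ∀ x, ∀ t ∈ Ico (0:ℝ) 1,
      evalSeries (fun n x => z * ((c n x : ℂ) - Complex.I * d n x)) t x
        = z * (((∑' n, c n x * t ^ n : ℝ) : ℂ) - Complex.I * ((∑' n, d n x * t ^ n : ℝ) : ℂ)) := by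
    intro x t ht
    have := (((hsum hc2 x t ht).sub ((hsum hd2 x t ht).mul_left Complex.I)).mul_left z).tsum_eq
    rw [← this]
    exact tsum_congr fun n => by ring
  refine ⟨fun n x => z * ((c n x : ℂ) - Complex.I * d n x), ‖z‖ * (C + D), fun n => ?_,
    fun n x => ?_, fun t ht => ?_, fun x hx t ht => ?_⟩
  · have := hc1 n
    have := hd1 n
    fun_prop
  · rw [norm_mul]
    gcongr
    refine (norm_sub_le _ _).trans (add_le_add ?_ ?_)
    · simpa using hc2 n x
    · simpa using hd2 n x
  · rw [funext fun x => heval x t ht]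
    exact contDiff_const.mul ((Complex.ofRealCLM.contDiff.comp (hc3 t ht)).sub
      (contDiff_const.mul (Complex.ofRealCLM.contDiff.comp (hd3 t ht))))
  · rw [heval x t ht, ← hc4 x hx t ht, ← hd4 x hx t ht]

lemma UnitRadius.comp {X Y : Type*} [TopologicalSpace X] [TopologicalSpace Y] {U : ℕ → X → ℂ}
    (hU : UnitRadius U) {g : Y → X} (hg : Continuous g) : UnitRadius fun n y => U n (g y) := by
  refine ⟨fun n => (hU.1 n).comp hg, fun K hK r hr => ?_⟩
  obtain ⟨M, h⟩ := hU.2 _ (hK.image hg) r hr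
  exact ⟨M, fun n p hp => h n _ (mem_image_of_mem _ hp)⟩

lemma primFst_const_mul (a : ℂ) (f : ℝ × ℝ → ℂ) (p : ℝ × ℝ) :
    primFst (fun q => a * f q) p = a * primFst f p := intervalIntegral.integral_const_mul _ _

lemma primSnd_const_mul (a : ℂ) (f : ℝ × ℝ → ℂ) (p : ℝ × ℝ) :
    primSnd (fun q => a * f q) p = a * primSnd f p := intervalIntegral.integral_const_mul _ _

lemma evalSeries_eq_goursat {U V : ℕ → ℝ × ℝ → ℂ} {d : ℕ → ℝ → ℂ} (hd : UnitRadius d)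
    (hV : UnitRadius V) (hU : ∀ n p, U n p = goursat (d n) (V n) p) {t : ℝ} (ht : |t| < 1) :
    evalSeries U t = goursat (evalSeries d t) (evalSeries V t) := by
  have h₁ := hd.comp (continuous_fst (X := ℝ) (Y := ℝ))
  have h₂ := hd.comp (continuous_snd (X := ℝ) (Y := ℝ))
  have hs : ∀ {W : ℕ → ℝ × ℝ → ℂ}, UnitRadius W → ∀ p,
      HasSum (fun n => W n p * (t : ℂ) ^ n) (evalSeries W t p) :=
    fun hW p => ((hW.locallyDominated ht).summable p).hasSum
  funext p
  have key := (((hs h₁.primFst p).sub (hs h₂.primSnd p)).mul_left (-(1 / 4))).add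
    ((hs hV.primSnd.primFst p).mul_left (1 / 4))
  rw [h₁.evalSeries_primFst ht, h₂.evalSeries_primSnd ht, hV.primSnd.evalSeries_primFst ht,
    funext (hV.evalSeries_primSnd ht)] at key
  refine Eq.trans (tsum_congr fun n => ?_) key.tsum_eq
  rw [hU, goursat]
  ring

lemma derivCoeff_eq_goursat {U V : ℕ → ℝ × ℝ → ℂ} {d : ℕ → ℝ → ℂ}
    (hU : ∀ n p, U n p = goursat (d n) (V n) p) (n : ℕ) (p : ℝ × ℝ) :
    derivCoeff U n p = goursat (derivCoeff d n) (derivCoeff V n) p := by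
  have h1 : primSnd (derivCoeff V n) = fun p => ((n : ℂ) + 1) * primSnd (V (n + 1)) p :=
    funext fun p => primSnd_const_mul _ _ p
  rw [derivCoeff, hU, goursat, goursat, h1, primFst_const_mul]
  simp only [derivCoeff]
  rw [primFst_const_mul _ (fun q : ℝ × ℝ => d (n + 1) q.1),
    primSnd_const_mul _ (fun q : ℝ × ℝ => d (n + 1) q.2)]
  ring

/-- Existence of a complex kernel, as a power series in time, in characteristic coordinates. -/
lemma exists_characteristic_kernel (c : ℂ) {P Q : ℕ → ℝ → ℂ} {A B : ℝ}
    (hPc : ∀ n, Continuous (P n)) (hPb : ∀ n x, ‖P n x‖ ≤ A)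
    (hP : ∀ t ∈ Ico (0:ℝ) 1, ContDiff ℝ 1 (evalSeries P t))
    (hQc : ∀ n, Continuous (Q n)) (hQb : ∀ n x, ‖Q n x‖ ≤ B)
    (hQ : ∀ t ∈ Ico (0:ℝ) 1, ContDiff ℝ 1 (evalSeries Q t)) :
    ∃ U : ℕ → ℝ × ℝ → ℂ, UnitRadius U ∧ (∀ n p, U n p.swap = -U n p) ∧ ∀ t ∈ Ico (0:ℝ) 1,
      ContDiff ℝ 2 (evalSeries U t) ∧
      (∀ x, evalSeries U t (x + x, x - x)
        = -(1 / 2) * ∫ γ in (0:ℝ)..x, (evalSeries P t γ + evalSeries Q t γ)) ∧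
      ∀ x y, ∃ wxx wyy : ℂ,
        HasDerivAt (fun x' => deriv (fun x'' => evalSeries U t (x'' + y, x'' - y)) x') wxx x ∧
        HasDerivAt (fun y' => deriv (fun y'' => evalSeries U t (x + y'', x - y'')) y') wyy y ∧
        wxx = wyy + ((evalSeries P t x + evalSeries Q t |y|) * evalSeries U t (x + y, x - y)
          + c * evalSeries (derivCoeff U) t (x + y, x - y)) := by
  set d : ℕ → ℝ → ℂ := fun n τ => P n (τ / 2) + Q n (τ / 2) with hd_def
  set b : ℕ → ℝ × ℝ → ℂ := fun n p => P n ((p.1 + p.2) / 2) + Q n (|p.1 - p.2| / 2) with hb_def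
  set u₀ : ℕ → ℝ × ℝ → ℂ := fun n p =>
    -(1 / 4) * (primFst (fun q => d n q.1) p - primSnd (fun q => d n q.2) p) with hu_def
  have hdc : ∀ n, Continuous (d n) := fun n =>
    ((hPc n).comp (by fun_prop)).add ((hQc n).comp (by fun_prop))
  have hdb : ∀ n τ, ‖d n τ‖ ≤ A + B := fun n τ =>
    (norm_add_le _ _).trans (add_le_add (hPb _ _) (hQb _ _))
  have hbc : ∀ n, Continuous (b n) := fun n =>
    ((hPc n).comp (by fun_prop)).add ((hQc n).comp (by fun_prop))
  have hbb : ∀ n p, ‖b n p‖ ≤ A + B := fun n p =>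
    (norm_add_le _ _).trans (add_le_add (hPb _ _) (hQb _ _))
  have hu0c : ∀ n, Continuous (u₀ n) := fun n => continuous_const.mul
    ((continuous_primFst ((hdc n).comp continuous_fst)).sub
      (continuous_primSnd ((hdc n).comp continuous_snd)))
  have hu0b : ∀ R : ℝ, ∃ A, ∀ n (p : ℝ × ℝ), ‖p‖ ≤ R → ‖u₀ n p‖ ≤ A := by
    refine fun R => ⟨1 / 4 * ((A + B) * R + (A + B) * R), fun n p hp => ?_⟩
    rw [hu_def, norm_mul]
    have h1 := norm_primFst_le (f := fun q => d n q.1) (R := R) (fun q _ => hdb n q.1) p hp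
    have h2 := norm_primSnd_le (f := fun q => d n q.2) (R := R) (fun q _ => hdb n q.2) p hp
    have h3 : ‖-(1 / 4 : ℂ)‖ = 1 / 4 := by norm_num
    rw [h3]
    gcongr
    exact (norm_sub_le _ _).trans (add_le_add h1 h2)
  obtain ⟨U, hU, hanti, heq⟩ := exists_unitRadius_integral_equation (c := c) hbc hbb hu0c hu0b
    (fun n p => by simp only [hb_def, Prod.fst_swap, Prod.snd_swap]; rw [add_comm p.2, abs_sub_comm])
    (fun n p => by
      have h1 : primFst (fun q => d n q.1) p.swap = primSnd (fun q => d n q.2) p := rfl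
      have h2 : primSnd (fun q => d n q.2) p.swap = primFst (fun q => d n q.1) p := rfl
      simp only [hu_def, h1, h2]
      ring)
  refine ⟨U, hU, hanti, fun t ht => ?_⟩
  have ht' : |t| < 1 := by rw [abs_of_nonneg ht.1]; exact ht.2
  have hdU : UnitRadius d := .of_bounded hdc hdb
  have hbU : UnitRadius b := .of_bounded hbc hbb
  have hV : UnitRadius fun n q => mulCoeff b U n q + c * derivCoeff U n q :=
    (hbU.mulCoeff hU).add (hU.derivCoeff.const_mul c)
  have hUG : ∀ n p, U n p = goursat (d n) (fun q => mulCoeff b U n q + c * derivCoeff U n q) p :=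
    heq
  set D := evalSeries d t with hD_def
  set F := evalSeries (fun n q => mulCoeff b U n q + c * derivCoeff U n q) t with hF_def
  have hG : evalSeries U t = goursat D F := evalSeries_eq_goursat hdU hV hUG ht'
  have hPU : UnitRadius P := .of_bounded hPc hPb
  have hQU : UnitRadius Q := .of_bounded hQc hQb
  have hD : ∀ τ, D τ = evalSeries P t (τ / 2) + evalSeries Q t (τ / 2) := fun τ =>
    (hPU.comp (by fun_prop : Continuous fun τ : ℝ => τ / 2)).evalSeries_add
      (hQU.comp (by fun_prop : Continuous fun τ : ℝ => τ / 2)) ht' τ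
  have hb : ∀ p : ℝ × ℝ, evalSeries b t p
      = evalSeries P t ((p.1 + p.2) / 2) + evalSeries Q t (|p.1 - p.2| / 2) := fun p =>
    (hPU.comp (by fun_prop : Continuous fun p : ℝ × ℝ => (p.1 + p.2) / 2)).evalSeries_add
      (hQU.comp (by fun_prop : Continuous fun p : ℝ × ℝ => |p.1 - p.2| / 2)) ht' p
  have hF : ∀ p, F p = evalSeries b t p * evalSeries U t p + c * evalSeries (derivCoeff U) t p :=
    fun p => by
      rw [hF_def, (hbU.mulCoeff hU).evalSeries_add (hU.derivCoeff.const_mul c) ht',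
        hbU.evalSeries_mulCoeff hU ht', evalSeries_const_mul]
  have hDC : ContDiff ℝ 1 D := by
    rw [funext hD]
    exact ((hP t ht).comp (by fun_prop)).add ((hQ t ht).comp (by fun_prop))
  have hGC : ContDiff ℝ 1 (evalSeries U t) := by
    rw [hG]
    exact contDiff_one_goursat hDC.continuous (hV.continuous_evalSeries ht')
  have hGtC : ContDiff ℝ 1 (evalSeries (derivCoeff U) t) := by
    rw [evalSeries_eq_goursat hdU.derivCoeff hV.derivCoeff (derivCoeff_eq_goursat hUG) ht']
    exact contDiff_one_goursat (hdU.derivCoeff.continuous_evalSeries ht')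
      (hV.derivCoeff.continuous_evalSeries ht')
  have hGanti : ∀ p : ℝ × ℝ, evalSeries U t p.swap = -evalSeries U t p := fun p => by
    simp only [evalSeries, hanti, neg_mul, tsum_neg]
  have hFC : ContDiff ℝ 1 F := by
    have h1 := contDiff_one_comp_abs_mul (hQ t ht) hGC hGanti
    have h2 : ContDiff ℝ 1 fun p : ℝ × ℝ => evalSeries P t ((p.1 + p.2) / 2) * evalSeries U t p :=
      ((hP t ht).comp (by fun_prop)).mul hGC
    have h3 : ContDiff ℝ 1 fun p => c * evalSeries (derivCoeff U) t p := contDiff_const.mul hGtC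
    convert (h2.add h1).add h3 using 1
    funext p
    simp only [hF, hb]
    ring
  refine ⟨hG ▸ contDiff_two_goursat hDC hFC, fun x => ?_, fun x y => ?_⟩
  · rw [hG, goursat, sub_self]
    simp only [primSnd, primFst, integral_same, intervalIntegral.integral_zero, hD]
    have := intervalIntegral.integral_comp_div (a := 0) (b := x + x)
      (fun γ => evalSeries P t γ + evalSeries Q t γ) (two_ne_zero (α := ℝ))
    rw [this, zero_div, show (x + x) / 2 = x by ring, Complex.real_smul]
    push_cast
    ring
  · obtain ⟨wxx, wyy, h1, h2, h3⟩ := goursat_wave hDC hFC x y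
    rw [← hG] at h1 h2
    refine ⟨wxx, wyy, h1, h2, ?_⟩
    rw [h3, hF, hb, show (x + y + (x - y)) / 2 = x by ring, show x + y - (x - y) = 2 * y by ring,
      abs_mul, abs_two, mul_div_cancel_left₀ _ (two_ne_zero (α := ℝ))]

lemma isCompact_Omega : IsCompact Omega := by
  refine (isCompact_Icc.prod isCompact_Icc : IsCompact (Icc (0:ℝ) 1 ×ˢ Icc (0:ℝ) 1)).of_isClosed_subset
    ?_ fun p hp => ⟨⟨hp.1.trans hp.2.1, hp.2.2⟩, hp.1, hp.2.1.trans hp.2.2⟩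
  exact (isClosed_le continuous_const continuous_snd).inter
    ((isClosed_le continuous_snd continuous_fst).inter
      (isClosed_le continuous_fst continuous_const))

/-- The potential `β - i β_c` is the sum of a function of `(x,t)` and one of `(y,t)`. -/
lemma potential_eq {aR aI β βc b b' f f' : ℝ}
    (hβ : β = (aR * (b - f) + aI * (b' - f')) / (aR ^ 2 + aI ^ 2))
    (hβc : βc = (aR * (b' - f') - aI * (b - f)) / (aR ^ 2 + aI ^ 2)) :
    (β : ℂ) - Complex.I * βc = -(((aR / (aR ^ 2 + aI ^ 2) : ℝ) : ℂ)
        + Complex.I * ((aI / (aR ^ 2 + aI ^ 2) : ℝ) : ℂ)) * (f - Complex.I * f')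
      + (((aR / (aR ^ 2 + aI ^ 2) : ℝ) : ℂ)
        + Complex.I * ((aI / (aR ^ 2 + aI ^ 2) : ℝ) : ℂ)) * (b - Complex.I * b') := by
  subst hβ hβc
  apply Complex.ext <;>
  · simp only [Complex.add_re, Complex.add_im, Complex.sub_re, Complex.sub_im, Complex.neg_re,
      Complex.neg_im, Complex.mul_re, Complex.mul_im, Complex.ofReal_re, Complex.ofReal_im,
      Complex.I_re, Complex.I_im]
    ring

lemma HasDerivAt.re {f : ℝ → ℂ} {f' : ℂ} {x : ℝ} (h : HasDerivAt f f' x) :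
    HasDerivAt (fun x => (f x).re) f'.re x :=
  Complex.reCLM.hasFDerivAt.comp_hasDerivAt x h

lemma HasDerivAt.im {f : ℝ → ℂ} {f' : ℂ} {x : ℝ} (h : HasDerivAt f f' x) :
    HasDerivAt (fun x => (f x).im) f'.im x :=
  Complex.imCLM.hasFDerivAt.comp_hasDerivAt x h

/-- Existence of a bounded solution of the kernel system. -/
lemma exists_isDirichletKernelSol {aR aI : ℝ}
    {bR bI fR fI : ℝ → ℝ → ℝ}
    (hbR : SpaceC1TimeAnalytic bR) (hbI : SpaceC1TimeAnalytic bI)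
    (hfR : SpaceC1TimeAnalytic fR) (hfI : SpaceC1TimeAnalytic fI)
    {β βc : ℝ → ℝ → ℝ → ℝ}
    (hβ : ∀ x y t : ℝ, β x y t
      = (aR * (bR y t - fR x t) + aI * (bI y t - fI x t)) / (aR ^ 2 + aI ^ 2))
    (hβc : ∀ x y t : ℝ, βc x y t
      = (aR * (bI y t - fI x t) - aI * (bR y t - fR x t)) / (aR ^ 2 + aI ^ 2))
    {t₀ : ℝ} (ht₀ : t₀ ∈ Ioo (0:ℝ) 1) :
    ∃ (k kc : ℝ → ℝ → ℝ → ℝ) (M : ℝ),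
      IsDirichletKernelSol β βc (aR / (aR ^ 2 + aI ^ 2)) (-aI / (aR ^ 2 + aI ^ 2))
        (aR / (aR ^ 2 + aI ^ 2)) (aI / (aR ^ 2 + aI ^ 2)) t₀ k kc ∧
      ∀ x y : ℝ, (x, y) ∈ Omega → ∀ t ∈ Ioo (0:ℝ) t₀, |k x y t| ≤ M ∧ |kc x y t| ≤ M := by
  set c : ℂ := ((aR / (aR ^ 2 + aI ^ 2) : ℝ) : ℂ)
    + Complex.I * ((aI / (aR ^ 2 + aI ^ 2) : ℝ) : ℂ) with hc_def
  have hcre : c.re = aR / (aR ^ 2 + aI ^ 2) := by simp [hc_def, -Complex.ofReal_div]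
  have hcim : c.im = aI / (aR ^ 2 + aI ^ 2) := by simp [hc_def, -Complex.ofReal_div]
  obtain ⟨P, A, hPc, hPb, hP, hPe⟩ := exists_complex_extension hfR hfI (-c)
  obtain ⟨Q, B, hQc, hQb, hQ, hQe⟩ := exists_complex_extension hbR hbI c
  obtain ⟨U, hU, hanti, hmain⟩ := exists_characteristic_kernel c hPc hPb hP hQc hQb hQ
  have hpot : ∀ x ∈ Icc (0:ℝ) 1, ∀ y ∈ Icc (0:ℝ) 1, ∀ t ∈ Ico (0:ℝ) 1,
      evalSeries P t x + evalSeries Q t y = (β x y t : ℂ) - Complex.I * βc x y t := by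
    intro x hx y hy t ht
    rw [potential_eq (hβ x y t) (hβc x y t), hPe x hx t ht, hQe y hy t ht]
  set w : ℝ → ℝ → ℝ → ℂ := fun x y t => evalSeries U t (x + y, x - y) with hw_def
  have htt : ∀ {t}, t ∈ Ioo (0:ℝ) t₀ → t ∈ Ico (0:ℝ) 1 := fun ht => ⟨ht.1.le, ht.2.trans ht₀.2⟩
  have hlin : ContDiff ℝ 2 fun p : ℝ × ℝ => (p.1 + p.2, p.1 - p.2) := by fun_prop
  have hderiv : ∀ x y, ∀ t ∈ Ioo (0:ℝ) t₀,
      HasDerivAt (fun t' => w x y t') (evalSeries (derivCoeff U) t (x + y, x - y)) t :=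
    fun x y t ht => hU.hasDerivAt_evalSeries (by
      rw [abs_of_pos ht.1]; exact ht.2.trans ht₀.2) _
  obtain ⟨M, hM⟩ := hU.exists_norm_evalSeries_le (isCompact_Omega.image hlin.continuous)
    ht₀.1.le ht₀.2
  refine ⟨fun x y t => (w x y t).re, fun x y t => (w x y t).im, M,
    ⟨fun t ht => ?_, fun t ht => ?_, fun x y _ t ht => ⟨?_, ?_⟩, fun x y hxy t ht => ?_,
      fun x hx t ht => ?_⟩, fun x y hxy t ht => ?_⟩
  · exact (Complex.reCLM.contDiff.comp ((hmain t (htt ht)).1.comp hlin)).contDiffOn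
  · exact (Complex.imCLM.contDiff.comp ((hmain t (htt ht)).1.comp hlin)).contDiffOn
  · exact (hderiv x y t ht).re.differentiableAt
  · exact (hderiv x y t ht).im.differentiableAt
  · obtain ⟨hG2, -, hw⟩ := hmain t (htt ht)
    obtain ⟨wxx, wyy, h1, h2, h3⟩ := hw x y
    have hdx : ∀ x', HasDerivAt (fun x'' => w x'' y t) (deriv (fun x'' => w x'' y t) x') x' :=
      fun x' => by
        have : Differentiable ℝ fun x'' : ℝ => w x'' y t :=
          (hG2.differentiable two_ne_zero).comp (by fun_prop : Differentiable ℝ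
            fun x'' : ℝ => (x'' + y, x'' - y))
        exact (this x').hasDerivAt
    have hdy : ∀ y', HasDerivAt (fun y'' => w x y'' t) (deriv (fun y'' => w x y'' t) y') y' :=
      fun y' => by
        have : Differentiable ℝ fun y'' : ℝ => w x y'' t :=
          (hG2.differentiable two_ne_zero).comp (by fun_prop : Differentiable ℝ
            fun y'' : ℝ => (x + y'', x - y''))
        exact (this y').hasDerivAt
    have hxxr : pXX (fun x y t => (w x y t).re) x y t = wxx.re := by
      simp only [pXX, fun x' => (hdx x').re.deriv]
      exact h1.re.deriv
    have hxxi : pXX (fun x y t => (w x y t).im) x y t = wxx.im := by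
      simp only [pXX, fun x' => (hdx x').im.deriv]
      exact h1.im.deriv
    have hyyr : pYY (fun x y t => (w x y t).re) x y t = wyy.re := by
      simp only [pYY, fun y' => (hdy y').re.deriv]
      exact h2.re.deriv
    have hyyi : pYY (fun x y t => (w x y t).im) x y t = wyy.im := by
      simp only [pYY, fun y' => (hdy y').im.deriv]
      exact h2.im.deriv
    have htr : pT (fun x y t => (w x y t).re) x y t
        = (evalSeries (derivCoeff U) t (x + y, x - y)).re := (hderiv x y t ht).re.deriv
    have hti : pT (fun x y t => (w x y t).im) x y t
        = (evalSeries (derivCoeff U) t (x + y, x - y)).im := (hderiv x y t ht).im.deriv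
    rw [hxxr, hxxi, hyyr, hyyi, htr, hti, h3, abs_of_nonneg hxy.1,
      hpot x ⟨hxy.1.trans hxy.2.1, hxy.2.2⟩ y ⟨hxy.1, hxy.2.1.trans hxy.2.2⟩ t (htt ht)]
    simp only [Complex.add_re, Complex.add_im, Complex.mul_re, Complex.mul_im, hcre, hcim,
      Complex.sub_re, Complex.sub_im, Complex.ofReal_re, Complex.ofReal_im, Complex.I_re,
      Complex.I_im, hw_def]
    constructor <;> ring
  · obtain ⟨-, hdiag, -⟩ := hmain t (htt ht)
    have hinteg : ∫ γ in (0:ℝ)..x, (evalSeries P t γ + evalSeries Q t γ)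
        = ((∫ γ in (0:ℝ)..x, β γ γ t : ℝ) : ℂ)
          - Complex.I * ((∫ γ in (0:ℝ)..x, βc γ γ t : ℝ) : ℂ) := by
      have hcont : Continuous fun γ => evalSeries P t γ + evalSeries Q t γ :=
        (hP t (htt ht)).continuous.add (hQ t (htt ht)).continuous
      have hmem : ∀ γ ∈ uIcc 0 x, γ ∈ Icc (0:ℝ) 1 := fun γ hγ => by
        rw [uIcc_of_le hx.1] at hγ
        exact ⟨hγ.1, hγ.2.trans hx.2⟩
      have e : ∀ γ ∈ uIcc 0 x, evalSeries P t γ + evalSeries Q t γ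
          = (β γ γ t : ℂ) - Complex.I * βc γ γ t := fun γ hγ =>
        hpot γ (hmem γ hγ) γ (hmem γ hγ) t (htt ht)
      have hre := intervalIntegral.integral_congr (μ := MeasureTheory.volume)
        (f := fun γ => (evalSeries P t γ + evalSeries Q t γ).re) (g := fun γ => β γ γ t)
        (a := 0) (b := x) fun γ hγ => by simp [e γ hγ]
      have him := intervalIntegral.integral_congr (μ := MeasureTheory.volume)
        (f := fun γ => (evalSeries P t γ + evalSeries Q t γ).im) (g := fun γ => -βc γ γ t)
        (a := 0) (b := x) fun γ hγ => by simp [e γ hγ]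
      have r1 := Complex.reCLM.intervalIntegral_comp_comm (μ := MeasureTheory.volume)
        (hcont.intervalIntegrable 0 x)
      have r2 := Complex.imCLM.intervalIntegral_comp_comm (μ := MeasureTheory.volume)
        (hcont.intervalIntegrable 0 x)
      simp only [Complex.reCLM_apply, Complex.imCLM_apply] at r1 r2
      rw [intervalIntegral.integral_neg] at him
      apply Complex.ext
      · rw [← r1, hre]; simp
      · rw [← r2, him]; simp
    have hd := hdiag x
    rw [hinteg] at hd
    have h0 : w x 0 t = 0 := by
      have : ∀ n, U n (x, x) = 0 := fun n => self_eq_neg.1 (hanti n (x, x))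
      simp [hw_def, evalSeries, this]
    refine ⟨?_, ?_, ?_, ?_⟩
    · change (evalSeries U t (x + x, x - x)).re = _
      rw [hd]; simp
    · change (evalSeries U t (x + x, x - x)).im = _
      rw [hd]; simp
    · simp only [h0, Complex.zero_re]
    · simp only [h0, Complex.zero_im]
  · have h := hM _ (mem_image_of_mem _ hxy) t (by rw [abs_of_pos ht.1]; exact ht.2.le)
    exact ⟨(Complex.abs_re_le_norm _).trans h, (Complex.abs_im_le_norm _).trans h⟩

lemma inv_pow_mul_expNegInvGlue_le (k : ℕ) (x : ℝ) :
    |x⁻¹ ^ k * expNegInvGlue x| ≤ k.factorial := by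
  rcases le_or_gt x 0 with hx | hx
  · rw [expNegInvGlue.zero_of_nonpos hx]
    simp
  · have h := Real.pow_div_factorial_le_exp x⁻¹ (inv_pos.2 hx).le k
    rw [div_le_iff₀ (by positivity)] at h
    rw [abs_of_nonneg (mul_nonneg (by positivity) (expNegInvGlue.nonneg x)), expNegInvGlue,
      if_neg (not_le.2 hx), Real.exp_neg, ← div_eq_mul_inv, div_le_iff₀ (Real.exp_pos _), mul_comm]
    exact h

lemma contDiff_inv_pow_mul_expNegInvGlue (k : ℕ) {n : ℕ∞} :
    ContDiff ℝ n fun x : ℝ => x⁻¹ ^ k * expNegInvGlue x := by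
  simpa using expNegInvGlue.contDiff_polynomial_eval_inv_mul (n := n) (Polynomial.X ^ k)

lemma deriv_inv_pow_mul_expNegInvGlue (k : ℕ) :
    deriv (fun x : ℝ => x⁻¹ ^ k * expNegInvGlue x) = fun x =>
      x⁻¹ ^ (k + 2) * expNegInvGlue x - k * (x⁻¹ ^ (k + 1) * expNegInvGlue x) := by
  funext x
  have h := (expNegInvGlue.hasDerivAt_polynomial_eval_inv_mul (Polynomial.X ^ k) x).deriv
  simp only [Polynomial.eval_pow, Polynomial.eval_X, Polynomial.eval_mul, Polynomial.eval_sub,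
    Polynomial.derivative_X_pow, Polynomial.eval_C] at h
  rw [h]
  rcases k with _ | k
  · simp
  · simp only [Nat.add_sub_cancel]
    push_cast
    ring

lemma abs_iteratedDeriv_inv_pow_mul_expNegInvGlue_le (n k : ℕ) (x : ℝ) :
    |iteratedDeriv n (fun x : ℝ => x⁻¹ ^ k * expNegInvGlue x) x|
      ≤ 2 ^ n * (k + 2 * n).factorial := by
  induction n generalizing k with
  | zero => simpa using inv_pow_mul_expNegInvGlue_le k x
  | succ n ih =>
    have hC : ∀ j, ContDiffAt ℝ n (fun x : ℝ => x⁻¹ ^ j * expNegInvGlue x) x := fun j =>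
      (contDiff_inv_pow_mul_expNegInvGlue j (n := n)).contDiffAt
    rw [iteratedDeriv_succ', deriv_inv_pow_mul_expNegInvGlue,
      iteratedDeriv_fun_sub (hC _) (contDiffAt_const.mul (hC _)),
      iteratedDeriv_const_mul_field]
    refine (abs_sub _ _).trans ?_
    rw [abs_mul, Nat.abs_cast]
    have h1 := ih (k + 2)
    have h2 := ih (k + 1)
    have h3 : (k : ℝ) * (k + 1 + 2 * n).factorial ≤ (k + 2 * (n + 1)).factorial := by
      rw [show k + 2 * (n + 1) = (k + 1 + 2 * n) + 1 by ring, Nat.factorial_succ]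
      push_cast
      gcongr
      linarith [(n.cast_nonneg : (0:ℝ) ≤ n)]
    rw [show k + 2 + 2 * n = k + 2 * (n + 1) by ring] at h1
    calc _ ≤ 2 ^ n * ((k + 2 * (n + 1)).factorial : ℝ)
          + k * (2 ^ n * ((k + 1 + 2 * n).factorial : ℝ)) := by gcongr
      _ = 2 ^ n * ((k + 2 * (n + 1)).factorial + k * ((k + 1 + 2 * n).factorial : ℝ)) := by ring
      _ ≤ 2 ^ n * ((k + 2 * (n + 1)).factorial + ((k + 2 * (n + 1)).factorial : ℝ)) := by gcongr
      _ = _ := by rw [pow_succ]; ring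

/-- The standard smooth gluing function is of Gevrey class two. -/
lemma abs_iteratedDeriv_expNegInvGlue_le (n : ℕ) (x : ℝ) :
    |iteratedDeriv n expNegInvGlue x| ≤ 8 ^ n * (n.factorial : ℝ) ^ 2 := by
  have h := abs_iteratedDeriv_inv_pow_mul_expNegInvGlue_le n 0 x
  simp only [pow_zero, one_mul, zero_add] at h
  refine h.trans ?_
  have h1 : (2 * n).factorial ≤ 4 ^ n * n.factorial ^ 2 := by
    have h2 := Nat.choose_mul_factorial_mul_factorial (show n ≤ 2 * n by lia)
    rw [show 2 * n - n = n by lia, mul_assoc, ← sq] at h2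
    rw [← h2]
    gcongr
    have := Nat.choose_le_two_pow (2 * n) n
    rwa [pow_mul] at this
  have h2 : ((2 * n).factorial : ℝ) ≤ 4 ^ n * (n.factorial : ℝ) ^ 2 := by exact_mod_cast h1
  calc (2:ℝ) ^ n * (2 * n).factorial ≤ 2 ^ n * (4 ^ n * (n.factorial : ℝ) ^ 2) := by gcongr
    _ = _ := by rw [← mul_assoc, ← mul_pow]; norm_num

/-- Smooth test functions with support in `(a,b)` and Gevrey-two derivative bounds. -/
structure IsGevreyTest (a b ρ A : ℝ) (m : ℕ) (θ : ℝ → ℂ) : Prop where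
  contDiff : ∀ n : ℕ, ContDiff ℝ n θ
  tsupport_subset : tsupport θ ⊆ Ioo a b
  norm_le : ∀ j : ℕ, ∀ t ∈ Ioo a b,
    ‖iteratedDeriv j θ t‖ ≤ A * ρ ^ j * ((j + m).factorial : ℝ) ^ 2

lemma iteratedDeriv_ofReal_comp {g : ℝ → ℝ} (hg : ∀ {n : ℕ∞}, ContDiff ℝ n g) (j : ℕ) (t : ℝ) :
    iteratedDeriv j (fun t => (g t : ℂ)) t = (iteratedDeriv j g t : ℝ) := by
  induction j generalizing t with
  | zero => simp
  | succ j ih =>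
    have hdj : DifferentiableAt ℝ (iteratedDeriv j g) t :=
      (hg (n := ⊤)).differentiable_iteratedDeriv j (by exact_mod_cast WithTop.coe_lt_top j) t
    rw [iteratedDeriv_succ, iteratedDeriv_succ, funext ih]
    exact hdj.hasDerivAt.ofReal_comp.deriv

lemma exists_isGevreyTest {a b α β ρ : ℝ} (haα : a < α) (hβb : β < b) (hρ : 0 < ρ) :
    ∃ g : ℝ → ℝ, (∀ t, g t ≠ 0 → t ∈ Ioo α β) ∧ (∀ t ∈ Ioo α β, 0 < g t) ∧ Continuous g ∧
      IsGevreyTest a b ρ 1 0 fun t => (g t : ℂ) := by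
  set μ := ρ / 16 with hμ
  have hμ0 : 0 < μ := by positivity
  set u : ℝ → ℝ := fun t => expNegInvGlue (μ * (t - α)) with hu
  set v : ℝ → ℝ := fun t => expNegInvGlue (μ * (β - t)) with hv
  have huC : ∀ {n : ℕ∞}, ContDiff ℝ n u := expNegInvGlue.contDiff.comp (by fun_prop)
  have hvC : ∀ {n : ℕ∞}, ContDiff ℝ n v := expNegInvGlue.contDiff.comp (by fun_prop)
  have hd : ∀ (n : ℕ) (c x : ℝ), |c| = μ →
      |iteratedDeriv n (fun t => expNegInvGlue (c * t)) x| ≤ (8 * μ) ^ n * (n.factorial : ℝ) ^ 2 := by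
    intro n c x hc
    rw [iteratedDeriv_comp_const_mul (expNegInvGlue.contDiff (n := n)), abs_mul, abs_pow, hc, mul_pow]
    calc _ ≤ μ ^ n * (8 ^ n * (n.factorial : ℝ) ^ 2) := by
          gcongr
          exact abs_iteratedDeriv_expNegInvGlue_le n _
      _ = _ := by ring
  have hud : ∀ (n : ℕ) x, |iteratedDeriv n u x| ≤ (8 * μ) ^ n * (n.factorial : ℝ) ^ 2 := by
    intro n x
    rw [hu, iteratedDeriv_comp_sub_const n (fun t => expNegInvGlue (μ * t)) α]
    exact hd n μ _ (abs_of_pos hμ0)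
  have hvd : ∀ (n : ℕ) x, |iteratedDeriv n v x| ≤ (8 * μ) ^ n * (n.factorial : ℝ) ^ 2 := by
    intro n x
    have e : v = fun t => (fun s => expNegInvGlue (-μ * s)) (t - β) := by
      funext t
      simp only [hv]
      ring_nf
    rw [e, iteratedDeriv_comp_sub_const n (fun t => expNegInvGlue (-μ * t)) β]
    exact hd n (-μ) _ (by rw [abs_neg, abs_of_pos hμ0])
  have hsupp : ∀ t, u t * v t ≠ 0 → t ∈ Ioo α β := by
    intro t ht
    constructor
    · by_contra h
      exact ht (by rw [hu]; simp only; rw [expNegInvGlue.zero_of_nonpos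
        (mul_nonpos_of_nonneg_of_nonpos hμ0.le (by linarith)), zero_mul])
    · by_contra h
      exact ht (by rw [hv]; simp only; rw [expNegInvGlue.zero_of_nonpos
        (mul_nonpos_of_nonneg_of_nonpos hμ0.le (by linarith)), mul_zero])
  have hcC : ∀ {n : ℕ∞}, ContDiff ℝ n fun t => u t * v t := huC.mul hvC
  refine ⟨fun t => u t * v t, hsupp, fun t ht => mul_pos
    (expNegInvGlue.pos_of_pos (mul_pos hμ0 (sub_pos.2 ht.1)))
    (expNegInvGlue.pos_of_pos (mul_pos hμ0 (sub_pos.2 ht.2))),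
    (hcC (n := 0)).continuous, ⟨?_, ?_, fun j t _ => ?_⟩⟩
  · exact fun n => Complex.ofRealCLM.contDiff.comp (hcC (n := n))
  · have h1 : tsupport (fun t => ((u t * v t : ℝ) : ℂ)) ⊆ Icc α β :=
      closure_minimal (fun t ht => Ioo_subset_Icc_self
        (hsupp t fun h => ht (by simp only [h, Complex.ofReal_zero]))) isClosed_Icc
    exact h1.trans fun t ht => ⟨haα.trans_le ht.1, ht.2.trans_lt hβb⟩
  · rw [iteratedDeriv_ofReal_comp hcC, Complex.norm_real, Real.norm_eq_abs,
      iteratedDeriv_fun_mul (huC (n := j)).contDiffAt (hvC (n := j)).contDiffAt]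
    refine (Finset.abs_sum_le_sum_abs _ _).trans ?_
    calc _ ≤ ∑ i ∈ Finset.range (j + 1), (8 * μ) ^ j * (j.factorial : ℝ) ^ 2 := by
          refine Finset.sum_le_sum fun i hi => ?_
          have hij : i ≤ j := Nat.lt_succ_iff.1 (Finset.mem_range.1 hi)
          rw [abs_mul, abs_mul, Nat.abs_cast]
          have h1 : (j.choose i : ℝ) * i.factorial * (j - i).factorial = j.factorial := by
            exact_mod_cast Nat.choose_mul_factorial_mul_factorial hij
          have h2 : (i.factorial : ℝ) * (j - i).factorial ≤ j.factorial := by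
            exact_mod_cast Nat.le_of_dvd j.factorial_pos (Nat.factorial_mul_factorial_dvd_factorial hij)
          calc _ ≤ (j.choose i : ℝ) * ((8 * μ) ^ i * (i.factorial : ℝ) ^ 2)
                * ((8 * μ) ^ (j - i) * ((j - i).factorial : ℝ) ^ 2) := by
                gcongr
                · exact hud i t
                · exact hvd (j - i) t
            _ = ((8 * μ) ^ i * (8 * μ) ^ (j - i)) * ((j.choose i : ℝ) * i.factorial * (j - i).factorial)
                * (i.factorial * (j - i).factorial) := by ring
            _ ≤ (8 * μ) ^ j * j.factorial * j.factorial := by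
                rw [← pow_add, Nat.add_sub_cancel' hij, h1]
                gcongr
            _ = _ := by ring
      _ = (j + 1) * ((8 * μ) ^ j * (j.factorial : ℝ) ^ 2) := by simp
      _ ≤ 2 ^ j * ((8 * μ) ^ j * (j.factorial : ℝ) ^ 2) := by
          gcongr
          exact_mod_cast Nat.lt_two_pow_self
      _ = _ := by
          rw [← mul_assoc, ← mul_pow, hμ, show 2 * (8 * (ρ / 16)) = ρ by ring, one_mul, add_zero]

lemma IsGevreyTest.deriv_combination {a b ρ A B R : ℝ} {m : ℕ} {θ f : ℝ → ℂ} (hρ : 0 < ρ)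
    (hR : 0 ≤ R) (hA : 0 ≤ A) (hB : 0 ≤ B)
    (hθ : IsGevreyTest a b ρ A m θ) (hf : ∀ n : ℕ, ContDiffOn ℝ n f (Ioo a b))
    (hfb : ∀ j : ℕ, ∀ t ∈ Ioo a b, ‖iteratedDeriv j f t‖ ≤ B * R ^ j * j.factorial) (c : ℂ) :
    IsGevreyTest a b ρ (A * (‖c‖ * ρ + B * Real.exp (R / ρ) / ((m : ℝ) + 1) ^ 2)) (m + 1)
      fun t => f t * θ t - c * deriv θ t := by
  have hθn := hθ.contDiff
  have hθ' : ∀ n : ℕ, ContDiff ℝ n (deriv θ) := fun n =>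
    (contDiff_succ_iff_deriv.1 (hθn (n + 1))).2.2
  have hfa : ∀ (n : ℕ), ∀ t ∈ Ioo a b, ContDiffAt ℝ n f t := fun n t ht =>
    (hf n).contDiffAt (Ioo_mem_nhds ht.1 ht.2)
  have hprod : ∀ n : ℕ, ContDiff ℝ n fun t => f t * θ t := fun n => by
    refine contDiff_iff_contDiffAt.2 fun t => ?_
    by_cases ht : t ∈ tsupport θ
    · exact (hfa n t (hθ.tsupport_subset ht)).mul (hθn n).contDiffAt
    · refine (contDiffAt_const (c := 0)).congr_of_eventuallyEq ?_
      filter_upwards [(isClosed_tsupport θ).isOpen_compl.mem_nhds ht] with s hs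
      rw [image_eq_zero_of_notMem_tsupport hs, mul_zero]
  refine ⟨?_, ?_, fun j t ht => ?_⟩
  · exact fun n => (hprod n).sub (contDiff_const.mul (hθ' n))
  · refine (closure_minimal ?_ (isClosed_tsupport θ)).trans hθ.tsupport_subset
    intro t ht
    by_contra h
    refine ht ?_
    have h1 : deriv θ t = 0 := by
      by_contra h2
      exact h (support_deriv_subset h2)
    simp only [h1, image_eq_zero_of_notMem_tsupport h, mul_zero, sub_zero]
  · rw [iteratedDeriv_fun_sub (hprod j).contDiffAt (contDiff_const.mul (hθ' j)).contDiffAt,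
      iteratedDeriv_const_mul_field, ← iteratedDeriv_succ',
      iteratedDeriv_fun_mul (hfa j t ht) (hθn j).contDiffAt]
    set F : ℝ := ((j + (m + 1)).factorial : ℝ) ^ 2 with hF
    have h1 : ‖c * iteratedDeriv (j + 1) θ t‖ ≤ A * (‖c‖ * ρ) * ρ ^ j * F := by
      rw [norm_mul]
      calc _ ≤ ‖c‖ * (A * ρ ^ (j + 1) * ((j + 1 + m).factorial : ℝ) ^ 2) := by
            gcongr
            exact hθ.norm_le _ t ht
        _ = _ := by rw [hF, show j + 1 + m = j + (m + 1) by ring]; ring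
    have h2 : ‖∑ i ∈ Finset.range (j + 1),
        (j.choose i : ℂ) * iteratedDeriv i f t * iteratedDeriv (j - i) θ t‖
        ≤ A * B * ρ ^ j * ((j + m).factorial : ℝ) ^ 2 * Real.exp (R / ρ) := by
      refine (norm_sum_le _ _).trans ?_
      calc _ ≤ ∑ i ∈ Finset.range (j + 1),
            A * B * ρ ^ j * ((j + m).factorial : ℝ) ^ 2 * ((R / ρ) ^ i / i.factorial) := by
            refine Finset.sum_le_sum fun i hi => ?_
            have hij : i ≤ j := Nat.lt_succ_iff.1 (Finset.mem_range.1 hi)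
            rw [norm_mul, norm_mul, Complex.norm_natCast]
            have e1 : (j.choose i : ℝ) * i.factorial * (j - i + m).factorial
                ≤ (j + m).factorial := by
              have : j.choose i ≤ (j + m).choose i := Nat.choose_le_choose i (by lia)
              have e := Nat.choose_mul_factorial_mul_factorial (show i ≤ j + m by lia)
              rw [show j + m - i = j - i + m by lia] at e
              have : j.choose i * i.factorial * (j - i + m).factorial ≤ (j + m).factorial := by
                rw [← e]
                gcongr
              exact_mod_cast this
            have e2 : ((j - i + m).factorial : ℝ) ≤ (j + m).factorial / i.factorial := by
              rw [le_div_iff₀ (by positivity)]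
              have e := Nat.le_of_dvd (j + m).factorial_pos
                (Nat.factorial_mul_factorial_dvd_factorial (show i ≤ j + m by lia))
              rw [show j + m - i = j - i + m by lia, mul_comm] at e
              exact_mod_cast e
            calc _ ≤ (j.choose i : ℝ) * (B * R ^ i * i.factorial)
                  * (A * ρ ^ (j - i) * ((j - i + m).factorial : ℝ) ^ 2) := by
                  gcongr
                  · exact hfb i t ht
                  · exact hθ.norm_le _ t ht
              _ = A * B * (R ^ i * ρ ^ (j - i)) *
                  ((j.choose i : ℝ) * i.factorial * (j - i + m).factorial)
                    * (j - i + m).factorial := by ring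
              _ ≤ A * B * (R ^ i * ρ ^ (j - i)) * (j + m).factorial
                    * ((j + m).factorial / i.factorial) := by
                  gcongr
              _ = _ := by
                  rw [show ρ ^ j = ρ ^ i * ρ ^ (j - i) by
                    rw [← pow_add, Nat.add_sub_cancel' hij], div_pow]
                  field_simp
        _ ≤ _ := by
            rw [← Finset.mul_sum]
            gcongr
            exact Real.sum_le_exp_of_nonneg (by positivity) _
    have h3 : ((j + m).factorial : ℝ) ^ 2 ≤ F / ((m : ℝ) + 1) ^ 2 := by
      rw [le_div_iff₀ (by positivity), hF, ← mul_pow, show j + (m + 1) = (j + m) + 1 by ring,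
        Nat.factorial_succ]
      push_cast
      rw [mul_comm]
      gcongr
      linarith [(j.cast_nonneg : (0:ℝ) ≤ j)]
    calc _ ≤ A * B * ρ ^ j * ((j + m).factorial : ℝ) ^ 2 * Real.exp (R / ρ)
          + A * (‖c‖ * ρ) * ρ ^ j * F := (norm_sub_le _ _).trans (add_le_add h2 h1)
      _ ≤ A * B * ρ ^ j * (F / ((m : ℝ) + 1) ^ 2) * Real.exp (R / ρ)
          + A * (‖c‖ * ρ) * ρ ^ j * F := by gcongr
      _ = _ := by ring

lemma UnitRadius.contDiffOn_evalSeries {X : Type*} [TopologicalSpace X] {U : ℕ → X → ℂ}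
    (hU : UnitRadius U) (p : X) (n : ℕ) :
    ContDiffOn ℝ n (fun t => evalSeries U t p) (Ioo (-1) 1) := by
  induction n generalizing U with
  | zero =>
    exact contDiffOn_zero.2 fun t ht =>
      (hU.hasDerivAt_evalSeries (abs_lt.2 ht) p).continuousAt.continuousWithinAt
  | succ n ih =>
    rw [Nat.cast_add, Nat.cast_one, contDiffOn_succ_iff_deriv_of_isOpen isOpen_Ioo]
    refine ⟨fun t ht => (hU.hasDerivAt_evalSeries (abs_lt.2 ht)
      p).differentiableAt.differentiableWithinAt, by simp, ?_⟩
    exact (ih hU.derivCoeff).congr fun t ht => (hU.hasDerivAt_evalSeries (abs_lt.2 ht) p).deriv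

lemma iterate_derivCoeff {X : Type*} (U : ℕ → X → ℂ) (j n : ℕ) (p : X) :
    derivCoeff^[j] U n p = (j.factorial * (n + j).choose j : ℂ) * U (n + j) p := by
  induction j generalizing U n with
  | zero => simp
  | succ j ih =>
    rw [Function.iterate_succ_apply, ih, derivCoeff, show n + j + 1 = n + (j + 1) by ring,
      ← mul_assoc]
    congr 1
    have h1 := Nat.add_choose_mul_factorial_mul_factorial n j
    have h2 := Nat.add_choose_mul_factorial_mul_factorial n (j + 1)
    have h3 : (n + (j + 1)).factorial = (n + j + 1) * (n + j).factorial := Nat.factorial_succ _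
    have h4 : (j.factorial * (n + j).choose j * (n + j + 1) : ℕ)
        = (j + 1).factorial * (n + (j + 1)).choose (j + 1) := by
      apply Nat.eq_of_mul_eq_mul_right n.factorial_pos
      linear_combination (n + j + 1) * h1 - h2 - h3
    have h5 : (j.factorial * (n + j).choose j * (n + j + 1) : ℂ)
        = (j + 1).factorial * (n + (j + 1)).choose (j + 1) := by exact_mod_cast h4
    push_cast
    linear_combination h5

lemma UnitRadius.iterate_derivCoeff {X : Type*} [TopologicalSpace X] {U : ℕ → X → ℂ}
    (hU : UnitRadius U) (j : ℕ) : UnitRadius (_root_.derivCoeff^[j] U) := by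
  induction j generalizing U with
  | zero => exact hU
  | succ j ih => exact ih hU.derivCoeff

lemma UnitRadius.iteratedDeriv_evalSeries {X : Type*} [TopologicalSpace X] {U : ℕ → X → ℂ}
    (hU : UnitRadius U) (p : X) (j : ℕ) {t : ℝ} (ht : |t| < 1) :
    iteratedDeriv j (fun t => evalSeries U t p) t = evalSeries (_root_.derivCoeff^[j] U) t p := by
  induction j generalizing t with
  | zero => simp
  | succ j ih =>
    rw [iteratedDeriv_succ, Function.iterate_succ_apply']
    refine (((hU.iterate_derivCoeff j).hasDerivAt_evalSeries ht p).congr_of_eventuallyEq ?_).deriv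
    filter_upwards [Ioo_mem_nhds (abs_lt.1 ht).1 (abs_lt.1 ht).2] with s hs
    exact ih (abs_lt.2 hs)

/-- Time derivatives of a power series with bounded coefficients grow analytically. -/
lemma norm_iteratedDeriv_evalSeries_le {X : Type*} [TopologicalSpace X] {U : ℕ → X → ℂ}
    {C : ℝ} (hU : ∀ n, Continuous (U n)) (hC : ∀ n p, ‖U n p‖ ≤ C) (p : X) (j : ℕ) {t t₀ : ℝ}
    (ht : t ∈ Ioo 0 t₀) (ht₀ : t₀ < 1) :
    ‖iteratedDeriv j (fun t => evalSeries U t p) t‖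
      ≤ C / (1 - t₀) * (1 / (1 - t₀)) ^ j * j.factorial := by
  have ht1 : |t| < 1 := by rw [abs_of_pos ht.1]; exact ht.2.trans ht₀
  have hC0 : 0 ≤ C := (norm_nonneg _).trans (hC 0 p)
  have h1 : 0 < 1 - t₀ := by linarith
  have hsum := (hasSum_choose_mul_geometric_of_norm_lt_one j (r := t)
    (by rwa [Real.norm_eq_abs])).mul_left (C * j.factorial)
  rw [(UnitRadius.of_bounded hU hC).iteratedDeriv_evalSeries p j ht1, evalSeries]
  refine (tsum_of_norm_bounded hsum fun n => ?_).trans ?_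
  · rw [iterate_derivCoeff, norm_mul, norm_mul, norm_mul, norm_pow, Complex.norm_natCast,
      Complex.norm_natCast, Complex.norm_real, Real.norm_eq_abs, abs_of_pos ht.1]
    calc _ ≤ (j.factorial : ℝ) * (n + j).choose j * C * t ^ n := by
          have := ht.1
          gcongr
          exact hC _ _
      _ = _ := by ring
  · have h2 : 1 - t₀ ≤ 1 - t := by linarith [ht.2]
    calc _ ≤ C * j.factorial * (1 / (1 - t₀) ^ (j + 1)) := by gcongr
      _ = _ := by
          rw [div_pow, one_pow, pow_succ]
          field_simp

/-- The interior of the triangle in characteristic coordinates `ξ = x + y`, `η = x - y`. -/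
def charDomain : Set (ℝ × ℝ) := {p | 0 < p.2 ∧ p.2 < p.1 ∧ p.1 + p.2 < 2}

/-- The mixed second difference of a function over a rectangle. -/
def mixedDiff (g : ℝ × ℝ → ℂ) (τ₀ τ₁ s₀ s₁ : ℝ) : ℂ :=
  g (τ₁, s₁) - g (τ₀, s₁) - (g (τ₁, s₀) - g (τ₀, s₀))

lemma isOpen_charDomain : IsOpen charDomain :=
  (isOpen_lt continuous_const continuous_snd).inter
    ((isOpen_lt continuous_snd continuous_fst).inter
      (isOpen_lt (continuous_fst.add continuous_snd) continuous_const))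

/-- The four corners of the rectangle with the given sides lie in the characteristic domain. -/
def RectInDomain (τ₀ τ₁ s₀ s₁ : ℝ) : Prop :=
  (τ₀, s₀) ∈ charDomain ∧ (τ₀, s₁) ∈ charDomain ∧ (τ₁, s₀) ∈ charDomain ∧ (τ₁, s₁) ∈ charDomain

lemma RectInDomain.mem {τ₀ τ₁ s₀ s₁ : ℝ} (h : RectInDomain τ₀ τ₁ s₀ s₁) {τ s : ℝ}
    (hτ : τ ∈ uIcc τ₀ τ₁) (hs : s ∈ uIcc s₀ s₁) : (τ, s) ∈ charDomain := by
  obtain ⟨⟨a1, a2, a3⟩, ⟨b1, b2, b3⟩, ⟨c1, c2, c3⟩, ⟨d1, d2, d3⟩⟩ := h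
  simp only at a1 a2 a3 b1 b2 b3 c1 c2 c3 d1 d2 d3
  rcases mem_uIcc.1 hτ with hτ | hτ <;> rcases mem_uIcc.1 hs with hs | hs <;>
    exact ⟨by simp only; linarith, by simp only; linarith, by simp only; linarith⟩

section C2

variable {g : ℝ × ℝ → ℂ}

/-- The mixed second derivative. -/
noncomputable def mixedDeriv (g : ℝ × ℝ → ℂ) (p : ℝ × ℝ) : ℂ :=
  fderiv ℝ (fderiv ℝ g) p (0, 1) (1, 0)


lemma hasFDerivAt_of_contDiffOn_charDomain
    (hg : ContDiffOn ℝ 2 g charDomain) {p : ℝ × ℝ} (hp : p ∈ charDomain) :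
    HasFDerivAt g (fderiv ℝ g p) p :=
  ((hg.contDiffAt (isOpen_charDomain.mem_nhds hp)).differentiableAt (by simp)).hasFDerivAt

lemma contDiffOn_fderiv_charDomain
    (hg : ContDiffOn ℝ 2 g charDomain) : ContDiffOn ℝ 1 (fderiv ℝ g) charDomain :=
  hg.fderiv_of_isOpen isOpen_charDomain (by norm_num)

lemma hasFDerivAt_fderiv_of_contDiffOn_charDomain
    (hg : ContDiffOn ℝ 2 g charDomain) {p : ℝ × ℝ} (hp : p ∈ charDomain) :
    HasFDerivAt (fderiv ℝ g) (fderiv ℝ (fderiv ℝ g) p) p :=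
  (((contDiffOn_fderiv_charDomain hg).contDiffAt
    (isOpen_charDomain.mem_nhds hp)).differentiableAt (by simp)).hasFDerivAt

lemma continuousOn_mixedDeriv
    (hg : ContDiffOn ℝ 2 g charDomain) : ContinuousOn (mixedDeriv g) charDomain := by
  have h := (contDiffOn_fderiv_charDomain hg).continuousOn_fderiv_of_isOpen isOpen_charDomain
    le_rfl
  exact (h.clm_apply continuousOn_const).clm_apply continuousOn_const

lemma hasDerivAt_fst_of_charDomain
    (hg : ContDiffOn ℝ 2 g charDomain) {ξ η : ℝ} (hp : (ξ, η) ∈ charDomain) :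
    HasDerivAt (fun x => g (x, η)) (fderiv ℝ g (ξ, η) (1, 0)) ξ :=
  (hasFDerivAt_of_contDiffOn_charDomain hg hp).comp_hasDerivAt ξ
    ((hasDerivAt_id ξ).prodMk (hasDerivAt_const ξ η))

lemma hasDerivAt_snd_of_charDomain
    (hg : ContDiffOn ℝ 2 g charDomain) {ξ η : ℝ} (hp : (ξ, η) ∈ charDomain) :
    HasDerivAt (fun y => fderiv ℝ g (ξ, y) (1, 0)) (mixedDeriv g (ξ, η)) η := by
  have h := (hasFDerivAt_fderiv_of_contDiffOn_charDomain hg hp).comp_hasDerivAt η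
    ((hasDerivAt_const η ξ).prodMk (hasDerivAt_id η))
  exact (ContinuousLinearMap.apply ℝ ℂ ((1, 0) : ℝ × ℝ)).hasFDerivAt.comp_hasDerivAt η h

lemma mixedDiff_eq_integral
    (hg : ContDiffOn ℝ 2 g charDomain) {τ₀ τ₁ s₀ s₁ : ℝ} (h : RectInDomain τ₀ τ₁ s₀ s₁) :
    mixedDiff g τ₀ τ₁ s₀ s₁ = ∫ τ in τ₀..τ₁, ∫ s in s₀..s₁, mixedDeriv g (τ, s) := by
  have hc : ∀ τ ∈ uIcc τ₀ τ₁, ContinuousOn (fun s => mixedDeriv g (τ, s)) (uIcc s₀ s₁) :=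
    fun τ hτ => (continuousOn_mixedDeriv hg).comp (by fun_prop) fun s hs => h.mem hτ hs
  have h1 : ∀ τ ∈ uIcc τ₀ τ₁, ∫ s in s₀..s₁, mixedDeriv g (τ, s)
      = fderiv ℝ g (τ, s₁) (1, 0) - fderiv ℝ g (τ, s₀) (1, 0) := fun τ hτ =>
    integral_eq_sub_of_hasDerivAt (fun s hs => hasDerivAt_snd_of_charDomain hg (h.mem hτ hs))
      (hc τ hτ).intervalIntegrable
  have hcd : ∀ s ∈ uIcc s₀ s₁, ContinuousOn (fun τ => fderiv ℝ g (τ, s) (1, 0)) (uIcc τ₀ τ₁) :=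
    fun s hs => ((contDiffOn_fderiv_charDomain hg).continuousOn.clm_apply
      continuousOn_const).comp (by fun_prop) fun τ hτ => h.mem hτ hs
  rw [intervalIntegral.integral_congr h1, integral_eq_sub_of_hasDerivAt (f := fun τ =>
    g (τ, s₁) - g (τ, s₀)) (fun τ hτ => (hasDerivAt_fst_of_charDomain hg
      (h.mem hτ right_mem_uIcc)).sub (hasDerivAt_fst_of_charDomain hg (h.mem hτ left_mem_uIcc)))
    ((hcd s₁ right_mem_uIcc).sub (hcd s₀ left_mem_uIcc)).intervalIntegrable, mixedDiff]
  ring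

lemma norm_mixedDiff_le
    (hg : ContDiffOn ℝ 2 g charDomain) {K : ℝ} (hK : ∀ p ∈ charDomain, ‖mixedDeriv g p‖ ≤ K)
    {τ₀ τ₁ s₀ s₁ : ℝ}
    (h : RectInDomain τ₀ τ₁ s₀ s₁) :
    ‖mixedDiff g τ₀ τ₁ s₀ s₁‖ ≤ K * |s₁ - s₀| * |τ₁ - τ₀| := by
  rw [mixedDiff_eq_integral hg h]
  exact norm_integral_le_of_norm_le_const fun τ hτ => norm_integral_le_of_norm_le_const
    fun s hs => hK _ (h.mem (uIoc_subset_uIcc hτ) (uIoc_subset_uIcc hs))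

lemma norm_mixedDeriv_le
    (hg : ContDiffOn ℝ 2 g charDomain) {K : ℝ} (hK0 : 0 ≤ K)
    (hK : ∀ τ₀ τ₁ s₀ s₁, RectInDomain τ₀ τ₁ s₀ s₁ →
      ‖mixedDiff g τ₀ τ₁ s₀ s₁‖ ≤ K * |s₁ - s₀| * |τ₁ - τ₀|) {p : ℝ × ℝ} (hp : p ∈ charDomain) :
    ‖mixedDeriv g p‖ ≤ K := by
  obtain ⟨ξ, η⟩ := p
  have hnear : ∀ᶠ q : ℝ × ℝ in nhds (ξ, η), q ∈ charDomain := isOpen_charDomain.mem_nhds hp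
  rw [nhds_prod_eq] at hnear
  obtain ⟨pa, ha, pb, hb, hab⟩ := Filter.eventually_prod_iff.1 hnear
  refine (hasDerivAt_snd_of_charDomain hg hp).le_of_lip' hK0 ?_
  filter_upwards [hb] with y hy
  have h1 : (ξ, y) ∈ charDomain := hab ha.self_of_nhds hy
  refine ((hasDerivAt_fst_of_charDomain hg h1).sub
    (hasDerivAt_fst_of_charDomain hg hp)).le_of_lip' (by positivity) ?_
  filter_upwards [ha] with x hx
  have h2 := hK ξ x η y ⟨hp, h1, hab hx hb.self_of_nhds, hab hx hy⟩
  refine (le_of_eq ?_).trans h2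
  rw [mixedDiff]
  congr 1
  simp only [Pi.sub_apply]
  ring

/-- In characteristic coordinates the wave operator is four times the mixed derivative. -/
lemma wave_eq_mixedDeriv
    (hg : ContDiffOn ℝ 2 g charDomain) {x y : ℝ} (hp : (x + y, x - y) ∈ charDomain) :
    HasDerivAt (fun x' => deriv (fun x'' => g (x'' + y, x'' - y)) x')
      (fderiv ℝ (fderiv ℝ g) (x + y, x - y) (1, 1) (1, 1)) x ∧
    HasDerivAt (fun y' => deriv (fun y'' => g (x + y'', x - y'')) y')
      (fderiv ℝ (fderiv ℝ g) (x + y, x - y) (1, -1) (1, -1)) y ∧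
    fderiv ℝ (fderiv ℝ g) (x + y, x - y) (1, 1) (1, 1)
      = fderiv ℝ (fderiv ℝ g) (x + y, x - y) (1, -1) (1, -1) + 4 * mixedDeriv g (x + y, x - y) := by
  have hX : ∀ x, HasDerivAt (fun x' : ℝ => (x' + y, x' - y)) (1, 1) x := fun x =>
    ((hasDerivAt_id x).add_const y).prodMk ((hasDerivAt_id x).sub_const y)
  have hY : ∀ y, HasDerivAt (fun y' : ℝ => (x + y', x - y')) (1, -1) y := fun y =>
    ((hasDerivAt_id y).const_add x).prodMk ((hasDerivAt_id y).const_sub x)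
  have key : ∀ (l : ℝ → ℝ × ℝ) (e : ℝ × ℝ) (z : ℝ), (∀ z, HasDerivAt l e z) →
      l z ∈ charDomain → HasDerivAt (fun z' => deriv (fun z'' => g (l z'')) z')
        (fderiv ℝ (fderiv ℝ g) (l z) e e) z := by
    intro l e z hl hz
    have h := (hasFDerivAt_fderiv_of_contDiffOn_charDomain hg hz).comp_hasDerivAt z (hl z)
    have h2 := (ContinuousLinearMap.apply ℝ ℂ e).hasFDerivAt.comp_hasDerivAt z h
    refine h2.congr_of_eventuallyEq ?_
    filter_upwards [(hl z).continuousAt.preimage_mem_nhds (isOpen_charDomain.mem_nhds hz)]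
      with z' hz'
    exact ((hasFDerivAt_of_contDiffOn_charDomain hg hz').comp_hasDerivAt z' (hl z')).deriv
  refine ⟨key _ _ x hX hp, key _ _ y hY hp, ?_⟩
  have hs : IsSymmSndFDerivAt ℝ g (x + y, x - y) :=
    (hg.contDiffAt (isOpen_charDomain.mem_nhds hp)).isSymmSndFDerivAt (by simp)
  set T := fderiv ℝ (fderiv ℝ g) (x + y, x - y) with hT
  have hsym : T (1, 0) (0, 1) = T (0, 1) (1, 0) := hs _ _
  have e1 : ((1, 1) : ℝ × ℝ) = (1, 0) + (0, 1) := by simp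
  have e2 : ((1, -1) : ℝ × ℝ) = (1, 0) - (0, 1) := by simp
  rw [e1, e2, mixedDeriv, ← hT]
  simp only [map_add, map_sub, add_apply, sub_apply, hsym]
  ring

end C2

/-- The closed triangle in characteristic coordinates. -/
def charTriangle : Set (ℝ × ℝ) := {p | 0 ≤ p.2 ∧ p.2 ≤ p.1 ∧ p.1 + p.2 ≤ 2}

lemma charDomain_subset_charTriangle : charDomain ⊆ charTriangle :=
  fun _ hp => ⟨hp.1.le, hp.2.1.le, hp.2.2.le⟩

lemma isCompact_charTriangle : IsCompact charTriangle := by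
  refine (isCompact_Icc.prod isCompact_Icc : IsCompact (Icc (0:ℝ) 2 ×ˢ Icc (0:ℝ) 2)).of_isClosed_subset
    ?_ fun p hp => ⟨⟨hp.1.trans hp.2.1, by linarith [hp.1, hp.2.2]⟩,
      hp.1, by linarith [hp.1, hp.2.1, hp.2.2]⟩
  exact (isClosed_le continuous_const continuous_snd).inter
    ((isClosed_le continuous_snd continuous_fst).inter
      (isClosed_le (continuous_fst.add continuous_snd) continuous_const))

lemma convex_charTriangle : Convex ℝ charTriangle := by
  intro p hp q hq a b ha hb hab
  obtain ⟨h1, h2, h3⟩ := hp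
  obtain ⟨k1, k2, k3⟩ := hq
  simp only [charTriangle, mem_ofPred_eq, Prod.fst_add, Prod.snd_add, Prod.smul_fst, Prod.smul_snd,
    smul_eq_mul]
  refine ⟨by positivity, ?_, ?_⟩
  · nlinarith [mul_le_mul_of_nonneg_left h2 ha, mul_le_mul_of_nonneg_left k2 hb]
  · nlinarith [mul_le_mul_of_nonneg_left h3 ha, mul_le_mul_of_nonneg_left k3 hb]

lemma uniqueDiffOn_charTriangle : UniqueDiffOn ℝ charTriangle :=
  uniqueDiffOn_convex convex_charTriangle ⟨(1, 1 / 2), mem_interior.2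
    ⟨charDomain, charDomain_subset_charTriangle, isOpen_charDomain, by
      norm_num [charDomain]⟩⟩

lemma exists_norm_mixedDeriv_le {g : ℝ × ℝ → ℂ} (hg : ContDiffOn ℝ 2 g charTriangle) :
    ∃ K, 0 ≤ K ∧ ∀ p ∈ charDomain, ‖mixedDeriv g p‖ ≤ K := by
  have h1 : ContDiffOn ℝ 1 (fderivWithin ℝ g charTriangle) charTriangle :=
    hg.fderivWithin uniqueDiffOn_charTriangle (by norm_num)
  have h2 := h1.continuousOn_fderivWithin uniqueDiffOn_charTriangle le_rfl
  have h3 : ContinuousOn (fun p => fderivWithin ℝ (fderivWithin ℝ g charTriangle) charTriangle p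
      (0, 1) (1, 0)) charTriangle :=
    (h2.clm_apply continuousOn_const).clm_apply continuousOn_const
  obtain ⟨K, hK⟩ := isCompact_charTriangle.exists_bound_of_continuousOn h3
  refine ⟨max K 0, le_max_right _ _, fun p hp => ?_⟩
  have hn : ∀ q ∈ charDomain, charTriangle ∈ nhds q := fun q hq =>
    Filter.mem_of_superset (isOpen_charDomain.mem_nhds hq) charDomain_subset_charTriangle
  have h4 := hK p (charDomain_subset_charTriangle hp)
  rw [fderivWithin_of_mem_nhds (hn p hp)] at h4
  have h5 : fderivWithin ℝ g charTriangle =ᶠ[nhds p] fderiv ℝ g := by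
    filter_upwards [isOpen_charDomain.mem_nhds hp] with q hq
    exact fderivWithin_of_mem_nhds (hn q hq)
  rw [h5.fderiv_eq] at h4
  exact h4.trans (le_max_left _ _)

open MeasureTheory in
/-- Integrals over a rectangle of a function depending continuously on time. -/
lemma rectangle_integral {F : ℝ × ℝ → ℝ → ℂ} {α β : ℝ} (hαβ : α ≤ β)
    (hF : ContinuousOn (fun q : (ℝ × ℝ) × ℝ => F q.1 q.2) (charDomain ×ˢ Icc α β))
    {τ₀ τ₁ s₀ s₁ : ℝ} (h : RectInDomain τ₀ τ₁ s₀ s₁) (hτ : τ₀ ≤ τ₁) (hs : s₀ ≤ s₁) :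
    (∀ t ∈ Icc α β, IntegrableOn (fun p => F p t) (Ioc τ₀ τ₁ ×ˢ Ioc s₀ s₁)) ∧
    ContinuousOn (fun t => ∫ p in Ioc τ₀ τ₁ ×ˢ Ioc s₀ s₁, F p t) (Icc α β) ∧
    ∫ t in α..β, ∫ p in Ioc τ₀ τ₁ ×ˢ Ioc s₀ s₁, F p t
      = ∫ p in Ioc τ₀ τ₁ ×ˢ Ioc s₀ s₁, ∫ t in α..β, F p t := by
  have hKD : Icc τ₀ τ₁ ×ˢ Icc s₀ s₁ ⊆ charDomain := fun p hp =>
    h.mem (by rw [uIcc_of_le hτ]; exact hp.1) (by rw [uIcc_of_le hs]; exact hp.2)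
  have hRK : Ioc τ₀ τ₁ ×ˢ Ioc s₀ s₁ ⊆ Icc τ₀ τ₁ ×ˢ Icc s₀ s₁ :=
    prod_mono Ioc_subset_Icc_self Ioc_subset_Icc_self
  have hK : IsCompact (Icc τ₀ τ₁ ×ˢ Icc s₀ s₁) := isCompact_Icc.prod isCompact_Icc
  have hR : MeasurableSet (Ioc τ₀ τ₁ ×ˢ Ioc s₀ s₁) := measurableSet_Ioc.prod measurableSet_Ioc
  have hFK := hF.mono (prod_mono hKD (Subset.refl (Icc α β)))
  have h1 : ∀ t ∈ Icc α β, IntegrableOn (fun p => F p t) (Ioc τ₀ τ₁ ×ˢ Ioc s₀ s₁) := by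
    intro t ht
    have : ContinuousOn (fun p => F p t) (Icc τ₀ τ₁ ×ˢ Icc s₀ s₁) :=
      hFK.comp (f := fun p => (p, t)) (by fun_prop) fun p hp => ⟨hp, ht⟩
    exact (this.integrableOn_compact hK).mono_set hRK
  refine ⟨h1, ?_, ?_⟩
  · obtain ⟨C, hC⟩ := (hK.prod isCompact_Icc).exists_bound_of_continuousOn hFK
    refine continuousOn_of_dominated (bound := fun _ => C) (fun t ht =>
      (h1 t ht).aestronglyMeasurable) (fun t ht => ?_) ?_ ?_
    · filter_upwards [ae_restrict_mem hR] with p hp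
      exact hC (p, t) ⟨hRK hp, ht⟩
    · exact integrableOn_const (((measure_mono hRK).trans_lt hK.measure_lt_top).ne)
    · filter_upwards [ae_restrict_mem hR] with p hp
      exact hFK.comp (f := fun t => (p, t)) (by fun_prop) fun t ht => ⟨hRK hp, ht⟩
  · refine intervalIntegral_integral_swap (f := fun t p => F p t) ?_
    rw [Measure.prod_restrict, uIoc_of_le hαβ]
    have h2 : ContinuousOn (fun q : ℝ × (ℝ × ℝ) => F q.2 q.1)
        (Icc α β ×ˢ (Icc τ₀ τ₁ ×ˢ Icc s₀ s₁)) :=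
      hFK.comp (f := Prod.swap) (by fun_prop) fun q hq => ⟨hq.2, hq.1⟩
    exact (h2.integrableOn_compact (isCompact_Icc.prod hK)).mono_set
      (prod_mono Ioc_subset_Icc_self hRK)

/-- A solution of the homogeneous problem in characteristic coordinates on a time interval,
with bounded time derivative. -/
structure IsStripSolution (b : ℝ × ℝ → ℝ → ℂ) (c : ℂ) (α β N : ℝ) (v : ℝ × ℝ → ℝ → ℂ) :
    Prop where
  continuousOn_potential :
    ContinuousOn (fun q : (ℝ × ℝ) × ℝ => b q.1 q.2) (charDomain ×ˢ Icc α β)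
  continuousOn : ContinuousOn (fun q : (ℝ × ℝ) × ℝ => v q.1 q.2) (charDomain ×ˢ Icc α β)
  contDiffOn : ∀ t ∈ Icc α β, ContDiffOn ℝ 2 (fun p => v p t) charDomain
  continuousOn_triangle : ∀ t ∈ Icc α β, ContinuousOn (fun p => v p t) charTriangle
  norm_le : ∀ p ∈ charTriangle, ∀ t ∈ Icc α β, ‖v p t‖ ≤ N
  differentiableAt : ∀ p ∈ charTriangle, ∀ t ∈ Icc α β, DifferentiableAt ℝ (v p) t
  norm_deriv_le : ∀ p ∈ charDomain, ∀ t ∈ Icc α β, ‖deriv (v p) t‖ ≤ N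
  wave : ∀ p ∈ charDomain, ∀ t ∈ Icc α β,
    4 * mixedDeriv (fun p => v p t) p = b p t * v p t + c * deriv (v p) t
  eq_zero : ∀ t ∈ Icc α β, ∀ ξ ∈ Icc (0:ℝ) 2, v (ξ, 0) t = 0
  eq_zero_diag : ∀ t ∈ Icc α β, ∀ ξ ∈ Icc (0:ℝ) 1, v (ξ, ξ) t = 0

namespace IsStripSolution

variable {b : ℝ × ℝ → ℝ → ℂ} {c : ℂ} {α β N : ℝ} {v : ℝ × ℝ → ℝ → ℂ}

lemma continuousOn_time (hv : IsStripSolution b c α β N v) {p : ℝ × ℝ} (hp : p ∈ charTriangle) :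
    ContinuousOn (v p) (Icc α β) := fun t ht =>
  (hv.differentiableAt p hp t ht).continuousAt.continuousWithinAt

lemma intervalIntegrable_mul (hv : IsStripSolution b c α β N v) (hαβ : α ≤ β) {p : ℝ × ℝ}
    (hp : p ∈ charTriangle) {θ : ℝ → ℂ} (hθ : Continuous θ) :
    IntervalIntegrable (fun t => v p t * θ t) MeasureTheory.volume α β := by
  refine ContinuousOn.intervalIntegrable ?_
  rw [uIcc_of_le hαβ]
  exact (hv.continuousOn_time hp).mul hθ.continuousOn

lemma mixedDiff_integral (hv : IsStripSolution b c α β N v) (hαβ : α ≤ β)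
    {τ₀ τ₁ s₀ s₁ : ℝ} (h : RectInDomain τ₀ τ₁ s₀ s₁) {θ : ℝ → ℂ} (hθ : Continuous θ) :
    mixedDiff (fun p => ∫ t in α..β, v p t * θ t) τ₀ τ₁ s₀ s₁
      = ∫ t in α..β, mixedDiff (fun p => v p t) τ₀ τ₁ s₀ s₁ * θ t := by
  have hi : ∀ {p}, p ∈ charDomain → _ := fun hp =>
    hv.intervalIntegrable_mul hαβ (charDomain_subset_charTriangle hp) hθ
  obtain ⟨h1, h2, h3, h4⟩ := h
  rw [mixedDiff, ← integral_sub (hi h4) (hi h2), ← integral_sub (hi h3) (hi h1),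
    ← integral_sub ((hi h4).sub (hi h2)) ((hi h3).sub (hi h1))]
  refine integral_congr fun t _ => ?_
  simp only [mixedDiff]
  ring

open MeasureTheory in
/-- The equation tested against a function of time compactly supported in the interval. -/
lemma weak_equation (hv : IsStripSolution b c α β N v) (hαβ : α < β)
    {τ₀ τ₁ s₀ s₁ : ℝ} (h : RectInDomain τ₀ τ₁ s₀ s₁) (hτ : τ₀ ≤ τ₁) (hs : s₀ ≤ s₁)
    {θ : ℝ → ℂ} (hθ : ContDiff ℝ 1 θ) (hθs : tsupport θ ⊆ Ioo α β) :
    4 * mixedDiff (fun p => ∫ t in α..β, v p t * θ t) τ₀ τ₁ s₀ s₁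
      = ∫ p in Ioc τ₀ τ₁ ×ˢ Ioc s₀ s₁,
          ∫ t in α..β, v p t * (b p t * θ t - c * deriv θ t) := by
  set R := Ioc τ₀ τ₁ ×ˢ Ioc s₀ s₁ with hR_def
  have hRm : MeasurableSet R := measurableSet_Ioc.prod measurableSet_Ioc
  have hRK : R ⊆ Icc τ₀ τ₁ ×ˢ Icc s₀ s₁ := prod_mono Ioc_subset_Icc_self Ioc_subset_Icc_self
  have hRD : Icc τ₀ τ₁ ×ˢ Icc s₀ s₁ ⊆ charDomain := fun p hp =>
    h.mem (by rw [uIcc_of_le hτ]; exact hp.1) (by rw [uIcc_of_le hs]; exact hp.2)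
  have hK : IsCompact (Icc τ₀ τ₁ ×ˢ Icc s₀ s₁) := isCompact_Icc.prod isCompact_Icc
  obtain ⟨hiv, hcv, -⟩ := rectangle_integral hαβ.le hv.continuousOn h hτ hs
  have hbv := hv.continuousOn_potential.mul hv.continuousOn
  obtain ⟨hib, hcb, -⟩ := rectangle_integral (F := fun p t => b p t * v p t) hαβ.le hbv h hτ hs
  set m : ℝ → ℂ := fun t => mixedDiff (fun p => v p t) τ₀ τ₁ s₀ s₁ with hm
  have hmc : ContinuousOn m (Icc α β) := by
    obtain ⟨h1, h2, h3, h4⟩ := h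
    have hc : ∀ {p}, p ∈ charDomain → ContinuousOn (v p) (Icc α β) := fun hp =>
      hv.continuousOn_time (charDomain_subset_charTriangle hp)
    exact ((hc h4).sub (hc h2)).sub ((hc h3).sub (hc h1))
  have hiH : ∀ t ∈ Icc α β, IntegrableOn (fun p => mixedDeriv (fun p => v p t) p) R := fun t ht =>
    (((continuousOn_mixedDeriv (hv.contDiffOn t ht)).mono hRD).integrableOn_compact hK).mono_set hRK
  have hmR : ∀ t ∈ Icc α β, m t = ∫ p in R, mixedDeriv (fun p => v p t) p := by
    intro t ht
    rw [hm]
    simp only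
    rw [mixedDiff_eq_integral (hv.contDiffOn t ht) h, integral_of_le hτ]
    simp only [integral_of_le hs]
    exact (setIntegral_prod _ (hiH t ht)).symm
  set G : ℝ → ℂ := fun t => 4 * m t - ∫ p in R, b p t * v p t with hG
  set V : ℝ → ℂ := fun t => ∫ p in R, v p t with hV
  have hGc : ContinuousOn G (Icc α β) := (continuousOn_const.mul hmc).sub hcb
  have hVd : ∀ t ∈ Ioo α β, HasDerivAt (fun t => c * V t) (G t) t := by
    intro t ht
    have ht' := Ioo_subset_Icc_self ht
    have hd := (hasDerivAt_integral_of_dominated_loc_of_deriv_le (μ := volume.restrict R)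
      (F := fun t p => c * v p t) (F' := fun t p =>
        4 * mixedDeriv (fun p => v p t) p - b p t * v p t) (bound := fun _ => ‖c‖ * N)
      (Ioo_mem_nhds ht.1 ht.2) ?_ ((hiv t ht').const_mul c) ?_ ?_ ?_ ?_).2
    · rw [integral_sub ((hiH t ht').const_mul 4) (hib t ht'),
        MeasureTheory.integral_const_mul, ← hmR t ht'] at hd
      refine hd.congr_of_eventuallyEq (.of_forall fun s => ?_)
      exact (MeasureTheory.integral_const_mul _ _).symm
    · filter_upwards [Ioo_mem_nhds ht.1 ht.2] with s hs'
      exact ((hiv s (Ioo_subset_Icc_self hs')).const_mul c).aestronglyMeasurable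
    · exact (((hiH t ht').const_mul 4).sub (hib t ht')).aestronglyMeasurable
    · filter_upwards [ae_restrict_mem hRm] with p hp s hs'
      rw [hv.wave p (hRD (hRK hp)) s (Ioo_subset_Icc_self hs'), add_sub_cancel_left, norm_mul]
      gcongr
      exact hv.norm_deriv_le p (hRD (hRK hp)) s (Ioo_subset_Icc_self hs')
    · exact integrableOn_const (((measure_mono hRK).trans_lt hK.measure_lt_top).ne)
    · filter_upwards [ae_restrict_mem hRm] with p hp s hs'
      have hs2 := Ioo_subset_Icc_self hs'
      rw [hv.wave p (hRD (hRK hp)) s hs2, add_sub_cancel_left]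
      exact (hv.differentiableAt p (charDomain_subset_charTriangle (hRD (hRK hp))) s
        hs2).hasDerivAt.const_mul c
  have hθc := hθ.continuous
  have hθ'c : Continuous (deriv θ) := hθ.continuous_deriv le_rfl
  have hθ0 : ∀ t, t ∉ Ioo α β → θ t = 0 := fun t ht =>
    image_eq_zero_of_notMem_tsupport fun h' => ht (hθs h')
  have hinteg : ∀ {f : ℝ → ℂ}, ContinuousOn f (Icc α β) → IntervalIntegrable f volume α β := by
    intro f hf
    exact ContinuousOn.intervalIntegrable (by rwa [uIcc_of_le hαβ.le])
  have hparts : ∫ t in α..β, (G t * θ t + c * V t * deriv θ t) = 0 := by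
    rw [integral_eq_sub_of_hasDerivAt_of_le (f := fun t => c * V t * θ t) hαβ.le
      ((continuousOn_const.mul hcv).mul hθc.continuousOn)
      (fun t ht => (hVd t ht).mul ((hθ.differentiable one_ne_zero) t).hasDerivAt)
      (hinteg ((hGc.mul hθc.continuousOn).add
        ((continuousOn_const.mul hcv).mul hθ'c.continuousOn))),
      hθ0 α (by simp), hθ0 β (by simp)]
    simp
  have hF : ContinuousOn (fun q : (ℝ × ℝ) × ℝ => v q.1 q.2 * (b q.1 q.2 * θ q.2 - c * deriv θ q.2))
      (charDomain ×ˢ Icc α β) :=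
    hv.continuousOn.mul ((hv.continuousOn_potential.mul (by fun_prop)).sub (by fun_prop))
  obtain ⟨-, hcF, hswap⟩ := rectangle_integral
    (F := fun p t => v p t * (b p t * θ t - c * deriv θ t)) hαβ.le hF h hτ hs
  have hA : IntervalIntegrable (fun t => 4 * (m t * θ t)) volume α β :=
    hinteg (continuousOn_const.mul (hmc.mul hθc.continuousOn))
  rw [← hswap, hv.mixedDiff_integral hαβ.le h hθc, ← intervalIntegral.integral_const_mul,
    ← sub_eq_zero, ← hparts]
  refine (intervalIntegral.integral_sub hA (hinteg hcF)).symm.trans ?_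
  refine integral_congr fun t ht => ?_
  rw [uIcc_of_le hαβ.le] at ht
  have e : ∫ p in R, v p t * (b p t * θ t - c * deriv θ t)
      = (∫ p in R, b p t * v p t) * θ t - c * V t * deriv θ t := by
    have e1 := integral_sub ((hib t ht).mul_const (θ t)) ((hiv t ht).mul_const (c * deriv θ t))
    rw [MeasureTheory.integral_mul_const, MeasureTheory.integral_mul_const] at e1
    rw [show c * V t * deriv θ t = V t * (c * deriv θ t) by ring, ← e1]
    refine MeasureTheory.integral_congr_ae (.of_forall fun p => ?_)
    simp only
    ring
  simp only [hG]
  rw [e]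
  ring

end IsStripSolution

namespace IsStripSolution

variable {b : ℝ × ℝ → ℝ → ℂ} {c : ℂ} {α β N : ℝ} {v : ℝ × ℝ → ℝ → ℂ}

lemma continuousOn_integral_mul (hv : IsStripSolution b c α β N v) (hαβ : α ≤ β) {θ : ℝ → ℂ}
    (hθ : Continuous θ) :
    ContinuousOn (fun p => ∫ t in α..β, v p t * θ t) charTriangle := by
  simp only [integral_of_le hαβ]
  refine MeasureTheory.continuousOn_of_dominated (bound := fun t => N * ‖θ t‖)
    (fun p hp => ?_) (fun p hp => ?_) ?_ ?_
  · have := hv.intervalIntegrable_mul hαβ hp hθ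
    rw [intervalIntegrable_iff_integrableOn_Ioc_of_le hαβ] at this
    exact this.aestronglyMeasurable
  · filter_upwards [MeasureTheory.ae_restrict_mem measurableSet_Ioc] with t ht
    rw [norm_mul]
    gcongr
    exact hv.norm_le p hp t (Ioc_subset_Icc_self ht)
  · exact ((continuous_const.mul hθ.norm).integrableOn_Ioc)
  · filter_upwards [MeasureTheory.ae_restrict_mem measurableSet_Ioc] with t ht
    exact (hv.continuousOn_triangle t (Ioc_subset_Icc_self ht)).mul continuousOn_const

/-- The value of the tested solution at a point is controlled by its mixed differences over the
rectangles that exhaust the characteristic rectangle below that point. -/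
lemma norm_integral_mul_le_of_mixedDiff (hv : IsStripSolution b c α β N v) (hαβ : α ≤ β)
    {θ : ℝ → ℂ} (hθ : Continuous θ) {ξ η C : ℝ} (hp : (ξ, η) ∈ charDomain)
    (hC : ∀ ε, 0 < ε → ε < η → η + ε < ξ → RectInDomain (η + ε) ξ ε η →
      ‖mixedDiff (fun p => ∫ t in α..β, v p t * θ t) (η + ε) ξ ε η‖ ≤ C) :
    ‖∫ t in α..β, v (ξ, η) t * θ t‖ ≤ C := by
  set W : ℝ × ℝ → ℂ := fun p => ∫ t in α..β, v p t * θ t with hW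
  obtain ⟨h1, h2, h3⟩ : 0 < η ∧ η < ξ ∧ ξ + η < 2 := hp
  set δ := min η (ξ - η) with hδ
  have hδ0 : 0 < δ := lt_min h1 (by linarith)
  have hWc := hv.continuousOn_integral_mul hαβ hθ
  have hz : ∀ {ξ}, ξ ∈ Icc (0:ℝ) 2 → W (ξ, 0) = 0 := by
    intro ξ hξ
    refine (integral_congr (g := fun _ => 0) fun t ht => ?_).trans (by simp)
    rw [uIcc_of_le hαβ] at ht
    simp [hv.eq_zero t ht ξ hξ]
  have hzd : W (η, η) = 0 := by
    refine (integral_congr (g := fun _ => 0) fun t ht => ?_).trans (by simp)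
    rw [uIcc_of_le hαβ] at ht
    simp [hv.eq_zero_diag t ht η ⟨h1.le, by linarith⟩]
  have hcl : closure (Ioo 0 δ) = Icc 0 δ := closure_Ioo hδ0.ne
  have hf : ContinuousOn (fun ε => ‖mixedDiff W (η + ε) ξ ε η‖) (closure (Ioo 0 δ)) := by
    rw [hcl]
    have e1 : ∀ ε ∈ Icc 0 δ, ε ≤ η ∧ ε ≤ ξ - η := fun ε hε =>
      ⟨hε.2.trans (min_le_left _ _), hε.2.trans (min_le_right _ _)⟩
    refine ((continuousOn_const.sub (hWc.comp (by fun_prop) fun ε hε => ?_)).sub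
      ((hWc.comp (by fun_prop) fun ε hε => ?_).sub (hWc.comp (by fun_prop) fun ε hε => ?_))).norm
    all_goals
      obtain ⟨e2, e3⟩ := e1 ε hε
      have e4 := hε.1
      exact ⟨by simp only; linarith, by simp only; linarith, by simp only; linarith⟩
  have key := le_on_closure (f := fun ε => ‖mixedDiff W (η + ε) ξ ε η‖) (g := fun _ => C)
    (s := Ioo 0 δ) (fun ε hε => ?_) hf continuousOn_const (x := 0)
    (by rw [hcl]; exact ⟨le_rfl, hδ0.le⟩)
  · simpa [mixedDiff, hz (ξ := η) ⟨h1.le, by linarith⟩, hz (ξ := ξ) ⟨by linarith, by linarith⟩,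
      hzd] using key
  · have e2 : ε < η := hε.2.trans_le (min_le_left _ _)
    have e3 : ε < ξ - η := hε.2.trans_le (min_le_right _ _)
    have e4 := hε.1
    refine hC ε e4 e2 (by linarith) ⟨?_, ?_, ?_, ?_⟩
    all_goals exact ⟨by simp only; linarith, by simp only; linarith, by simp only; linarith⟩

end IsStripSolution

open MeasureTheory in
lemma setIntegral_mul_pow_le {τ₀ τ₁ s₀ s₁ : ℝ} (hτ₀ : 0 ≤ τ₀) (hτ : τ₀ ≤ τ₁) (hs₀ : 0 ≤ s₀)
    (hs : s₀ ≤ s₁) (n : ℕ) :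
    ∫ p in Ioc τ₀ τ₁ ×ˢ Ioc s₀ s₁, (p.1 * p.2) ^ n
      ≤ (τ₁ * s₁) ^ (n + 1) / ((n:ℝ) + 1) ^ 2 := by
  have aux : ∀ {a b : ℝ}, 0 ≤ a → a ≤ b →
      0 ≤ ∫ x in Ioc a b, x ^ n ∧ ∫ x in Ioc a b, x ^ n ≤ b ^ (n + 1) / ((n:ℝ) + 1) := by
    intro a b ha hab
    constructor
    · exact setIntegral_nonneg measurableSet_Ioc fun x hx => pow_nonneg (ha.trans hx.1.le) n
    · rw [← integral_of_le hab, integral_pow]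
      gcongr
      exact sub_le_self _ (by positivity)
  simp only [mul_pow]
  rw [Measure.volume_eq_prod, setIntegral_prod_mul (fun x : ℝ => x ^ n) (fun y : ℝ => y ^ n)]
  obtain ⟨h1, h2⟩ := aux hτ₀ hτ
  obtain ⟨h3, h4⟩ := aux hs₀ hs
  have h5 := hτ₀.trans hτ
  calc _ ≤ τ₁ ^ (n + 1) / ((n:ℝ) + 1) * (s₁ ^ (n + 1) / ((n:ℝ) + 1)) := by gcongr
    _ = _ := by field_simp

namespace IsStripSolution

variable {b : ℝ × ℝ → ℝ → ℂ} {c : ℂ} {α β N : ℝ} {v : ℝ × ℝ → ℝ → ℂ}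

open MeasureTheory in
lemma norm_integral_mul_le (hv : IsStripSolution b c α β N v) (hαβ : α < β) {ρ R B : ℝ}
    (hρ : 0 < ρ) (hR : 0 ≤ R) (hB : 0 ≤ B)
    (hf : ∀ p ∈ charDomain, ∀ n : ℕ, ContDiffOn ℝ n (b p) (Ioo α β))
    (hfb : ∀ p ∈ charDomain, ∀ j, ∀ t ∈ Ioo α β,
      ‖iteratedDeriv j (b p) t‖ ≤ B * R ^ j * j.factorial) (n : ℕ) :
    ∀ {A : ℝ} {m : ℕ} {θ : ℝ → ℂ}, 0 ≤ A → IsGevreyTest α β ρ A m θ → ∀ p ∈ charDomain,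
      ‖∫ t in α..β, v p t * θ t‖ ≤ N * (β - α) * A * ((m + n).factorial : ℝ) ^ 2
        * (∏ i ∈ Finset.range n,
            (‖c‖ * ρ + B * Real.exp (R / ρ) / (((m + i : ℕ) : ℝ) + 1) ^ 2))
        / (4 ^ n * (n.factorial : ℝ) ^ 2) * (p.1 * p.2) ^ n := by
  have hN : ∀ p ∈ charDomain, 0 ≤ N := fun p hp =>
    (norm_nonneg _).trans (hv.norm_le p (charDomain_subset_charTriangle hp) α ⟨le_rfl, hαβ.le⟩)
  have hβα : 0 ≤ β - α := by linarith
  induction n with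
  | zero =>
    intro A m θ hA hθ p hp
    have hb : ∀ t ∈ uIoc α β, ‖v p t * θ t‖ ≤ N * (A * ((m.factorial : ℝ)) ^ 2) := by
      intro t ht
      rw [uIoc_of_le hαβ.le] at ht
      rw [norm_mul]
      have h0 := hN p hp
      refine mul_le_mul (hv.norm_le p (charDomain_subset_charTriangle hp) t
        (Ioc_subset_Icc_self ht)) ?_ (norm_nonneg _) h0
      by_cases h : t ∈ Ioo α β
      · simpa using hθ.norm_le 0 t h
      · rw [image_eq_zero_of_notMem_tsupport fun h' => h (hθ.tsupport_subset h'), norm_zero]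
        positivity
    have := norm_integral_le_of_norm_le_const hb
    rw [abs_of_nonneg hβα] at this
    refine this.trans (le_of_eq ?_)
    simp
    ring
  | succ n ih =>
    intro A m θ hA hθ p hp
    obtain ⟨ξ, η⟩ := p
    have hN0 := hN _ hp
    refine hv.norm_integral_mul_le_of_mixedDiff hαβ.le (hθ.contDiff 0).continuous hp ?_
    intro ε hε hεη hεξ hrect
    have hw := hv.weak_equation hαβ hrect hεξ.le hεη.le
      (by exact_mod_cast hθ.contDiff 1) hθ.tsupport_subset
    obtain ⟨a, ha⟩ : ∃ a : ℕ → ℝ,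
        ∀ i, a i = ‖c‖ * ρ + B * Real.exp (R / ρ) / ((i : ℝ) + 1) ^ 2 := ⟨_, fun _ => rfl⟩
    have ha0 : ∀ i, 0 ≤ a i := fun i => by rw [ha]; positivity
    obtain ⟨C, hC⟩ : ∃ C, C = N * (β - α) * (A * a m) * ((m + 1 + n).factorial : ℝ) ^ 2
        * (∏ i ∈ Finset.range n, a (m + 1 + i)) / (4 ^ n * (n.factorial : ℝ) ^ 2) := ⟨_, rfl⟩
    have hC0 : 0 ≤ C := by
      rw [hC]
      have : 0 ≤ ∏ i ∈ Finset.range n, a (m + 1 + i) := Finset.prod_nonneg fun i _ => ha0 _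
      exact div_nonneg (mul_nonneg (mul_nonneg (mul_nonneg (mul_nonneg hN0 hβα)
        (mul_nonneg hA (ha0 m))) (sq_nonneg _)) this) (by positivity)
    have hpos : 0 < η := hε.trans hεη
    have hbound : ‖∫ p in Ioc (η + ε) ξ ×ˢ Ioc ε η,
        ∫ t in α..β, v p t * (b p t * θ t - c * deriv θ t)‖
        ≤ ∫ p in Ioc (η + ε) ξ ×ˢ Ioc ε η, C * (p.1 * p.2) ^ n := by
      refine norm_integral_le_of_norm_le ?_ ?_
      · have : ContinuousOn (fun p : ℝ × ℝ => C * (p.1 * p.2) ^ n)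
            (Icc (η + ε) ξ ×ˢ Icc ε η) := by fun_prop
        exact (this.integrableOn_compact (isCompact_Icc.prod isCompact_Icc)).mono_set
          (prod_mono Ioc_subset_Icc_self Ioc_subset_Icc_self)
      · filter_upwards [ae_restrict_mem (measurableSet_Ioc.prod measurableSet_Ioc)] with q hq
        have hqD : q ∈ charDomain := hrect.mem
          (by rw [uIcc_of_le hεξ.le]; exact Ioc_subset_Icc_self hq.1)
          (by rw [uIcc_of_le hεη.le]; exact Ioc_subset_Icc_self hq.2)
        have h := hθ.deriv_combination hρ hR hA hB (hf q hqD) (hfb q hqD) c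
        rw [← ha] at h
        have := ih (mul_nonneg hA (ha0 m)) h q hqD
        simp only [← ha] at this
        rwa [← hC] at this
    rw [MeasureTheory.integral_const_mul, ← hw, norm_mul, Complex.norm_ofNat] at hbound
    have hinteg := setIntegral_mul_pow_le (by linarith : 0 ≤ η + ε) hεξ.le hε.le hεη.le n
    have h4 := hbound.trans (mul_le_mul_of_nonneg_left hinteg hC0)
    have h5 : ‖mixedDiff (fun p => ∫ t in α..β, v p t * θ t) (η + ε) ξ ε η‖
        ≤ C * ((ξ * η) ^ (n + 1) / ((n:ℝ) + 1) ^ 2) / 4 := by linarith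
    refine h5.trans (le_of_eq ?_)
    simp only [← ha]
    rw [Finset.prod_range_succ']
    have hprod : ∏ i ∈ Finset.range n, a (m + 1 + i) = ∏ i ∈ Finset.range n, a (m + (i + 1)) :=
      Finset.prod_congr rfl fun i _ => by congr 1; ring
    rw [hC, hprod, Nat.factorial_succ n, show m + (n + 1) = m + 1 + n by ring, add_zero]
    push_cast
    field_simp
    ring

lemma integral_mul_eq_zero (hv : IsStripSolution b c α β N v) (hαβ : α < β) {ρ R B : ℝ}
    (hρ : 0 < ρ) (hcρ : ‖c‖ * ρ ≤ 1) (hR : 0 ≤ R) (hB : 0 ≤ B)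
    (hf : ∀ p ∈ charDomain, ∀ n : ℕ, ContDiffOn ℝ n (b p) (Ioo α β))
    (hfb : ∀ p ∈ charDomain, ∀ j, ∀ t ∈ Ioo α β,
      ‖iteratedDeriv j (b p) t‖ ≤ B * R ^ j * j.factorial) {A : ℝ} {θ : ℝ → ℂ} (hA : 0 ≤ A)
    (hθ : IsGevreyTest α β ρ A 0 θ) {p : ℝ × ℝ} (hp : p ∈ charDomain) :
    ∫ t in α..β, v p t * θ t = 0 := by
  obtain ⟨a, ha⟩ : ∃ a : ℕ → ℝ,
    ∀ i, a i = ‖c‖ * ρ + B * Real.exp (R / ρ) / ((i : ℝ) + 1) ^ 2 := ⟨_, fun _ => rfl⟩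
  have ha0 : ∀ i, 0 ≤ a i := fun i => by rw [ha]; positivity
  have hN : 0 ≤ N :=
    (norm_nonneg _).trans (hv.norm_le p (charDomain_subset_charTriangle hp) α ⟨le_rfl, hαβ.le⟩)
  have hprod : Filter.Tendsto (fun n => ∏ i ∈ Finset.range n, a i / 4) Filter.atTop (nhds 0) := by
    refine (summable_of_ratio_norm_eventually_le (r := 1 / 2) (by norm_num) ?_).tendsto_atTop_zero
    have hlim : Filter.Tendsto (fun n : ℕ => B * Real.exp (R / ρ) / ((n : ℝ) + 1) ^ 2)
        Filter.atTop (nhds 0) := by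
      refine Filter.Tendsto.const_div_atTop ?_ _
      exact (Filter.tendsto_pow_atTop two_ne_zero).comp
        (Filter.tendsto_atTop_add_const_right _ _ tendsto_natCast_atTop_atTop)
    filter_upwards [hlim.eventually_le_const one_pos] with n hn
    rw [Finset.prod_range_succ, norm_mul, mul_comm]
    gcongr
    rw [Real.norm_of_nonneg (by have := ha0 n; positivity), ha]
    linarith
  have hb : ∀ n : ℕ, ‖∫ t in α..β, v p t * θ t‖
      ≤ N * (β - α) * A * ∏ i ∈ Finset.range n, a i / 4 := by
    intro n
    have h := hv.norm_integral_mul_le hαβ hρ hR hB hf hfb n hA hθ p hp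
    simp only [zero_add, ← ha] at h
    have hprod0 : 0 ≤ ∏ i ∈ Finset.range n, a i := Finset.prod_nonneg fun i _ => ha0 i
    have hβα : 0 ≤ β - α := by linarith
    obtain ⟨h1, h2, h3⟩ := hp
    have hpq : (p.1 * p.2) ^ n ≤ 1 := pow_le_one₀ (by nlinarith) (by nlinarith)
    refine h.trans ((mul_le_of_le_one_right (by positivity) hpq).trans (le_of_eq ?_))
    rw [Finset.prod_div_distrib, Finset.prod_const, Finset.card_range]
    field_simp
  have := ge_of_tendsto' (hprod.const_mul (N * (β - α) * A)) hb
  rw [mul_zero] at this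
  exact norm_le_zero_iff.1 this

/-- A solution of the homogeneous problem on a time interval vanishes. -/
lemma eq_zero_of_mem (hv : IsStripSolution b c α β N v) {R B : ℝ} (hR : 0 ≤ R) (hB : 0 ≤ B)
    (hf : ∀ p ∈ charDomain, ∀ n : ℕ, ContDiffOn ℝ n (b p) (Ioo α β))
    (hfb : ∀ p ∈ charDomain, ∀ j, ∀ t ∈ Ioo α β,
      ‖iteratedDeriv j (b p) t‖ ≤ B * R ^ j * j.factorial)
    {p : ℝ × ℝ} (hp : p ∈ charDomain) {t : ℝ} (ht : t ∈ Ioo α β) : v p t = 0 := by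
  by_contra hne
  have hαβ : α < β := ht.1.trans ht.2
  have hvc := hv.continuousOn_time (charDomain_subset_charTriangle hp)
  set f : ℝ → ℝ := fun s => ((starRingEnd ℂ) (v p t) * v p s).re with hf_def
  have hfc : ContinuousOn f (Icc α β) :=
    Complex.continuous_re.comp_continuousOn (continuousOn_const.mul hvc)
  have hft : 0 < f t := by
    simp only [hf_def]
    rw [← Complex.normSq_eq_conj_mul_self, Complex.ofReal_re]
    exact Complex.normSq_pos.2 hne
  have hev : ∀ᶠ s in nhds t, 0 < f s ∧ s ∈ Ioo α β :=
    ((hfc.continuousAt (Icc_mem_nhds ht.1 ht.2)).eventually_const_lt hft).and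
      (Ioo_mem_nhds ht.1 ht.2)
  obtain ⟨ε, hε, hball⟩ := Metric.eventually_nhds_iff_ball.1 hev
  have hmem : ∀ s, |s - t| < ε → 0 < f s ∧ s ∈ Ioo α β := fun s hs =>
    hball s (by rwa [Metric.mem_ball, Real.dist_eq])
  have h1 := (hmem (t - ε / 2) (by rw [abs_lt]; constructor <;> linarith)).2.1
  have h2 := (hmem (t + ε / 2) (by rw [abs_lt]; constructor <;> linarith)).2.2
  have hρ : 0 < 1 / (‖c‖ + 1) := by positivity
  obtain ⟨g, hg0, hgpos, hgc, hg⟩ := exists_isGevreyTest h1 h2 hρ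
  have hz := hv.integral_mul_eq_zero hαβ hρ (by
    rw [mul_one_div, div_le_one (by positivity)]; linarith) hR hB hf hfb zero_le_one hg hp
  have hinteg := hv.intervalIntegrable_mul hαβ.le (charDomain_subset_charTriangle hp)
    (Complex.continuous_ofReal.comp hgc)
  have hre : ∫ s in α..β, f s * g s = 0 := by
    have := Complex.reCLM.intervalIntegral_comp_comm (hinteg.const_mul ((starRingEnd ℂ) (v p t)))
    rw [intervalIntegral.integral_const_mul] at this
    simp only [Function.comp_apply] at this
    rw [hz, mul_zero, map_zero] at this
    rw [← this]
    refine integral_congr fun s _ => ?_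
    simp only [hf_def, Complex.reCLM_apply]
    rw [← mul_assoc, Complex.re_mul_ofReal]
  refine (integral_pos hαβ (hfc.mul hgc.continuousOn) (fun s _ => ?_)
    ⟨t, Ioo_subset_Icc_self ht, ?_⟩).ne' hre
  · by_cases hs : g s = 0
    · simp [hs]
    · have hs' := hg0 s hs
      refine (mul_pos (hmem s ?_).1 (hgpos s hs')).le
      rw [abs_lt]
      constructor <;> linarith [hs'.1, hs'.2]
  · exact mul_pos hft (hgpos t ⟨by linarith, by linarith⟩)

end IsStripSolution

/-- Baire category: a countable closed cover of an interval contains a subinterval in one of its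
members. -/
lemma exists_Icc_subset_of_closed_cover {F : ℕ → Set ℝ} {α β : ℝ} (hαβ : α < β)
    (hF : ∀ n, IsClosed (F n)) (hc : Icc α β ⊆ ⋃ n, F n) :
    ∃ n α' β', α' < β' ∧ Icc α' β' ⊆ Ioo α β ∩ F n := by
  have hcl : ∀ n, IsClosed (F n ∪ (Iic α ∪ Ici β)) := fun n =>
    (hF n).union (isClosed_Iic.union isClosed_Ici)
  have hU : ⋃ n, (F n ∪ (Iic α ∪ Ici β)) = univ := by
    refine eq_univ_of_forall fun t => ?_
    by_cases ht : t ∈ Icc α β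
    · obtain ⟨n, hn⟩ := mem_iUnion.1 (hc ht)
      exact mem_iUnion.2 ⟨n, Or.inl hn⟩
    · refine mem_iUnion.2 ⟨0, Or.inr ?_⟩
      rw [mem_Icc, not_and_or, not_le, not_le] at ht
      exact ht.imp (fun h => h.le) fun h => h.le
  obtain ⟨t, htm, ht⟩ := (dense_iUnion_interior_of_closed hcl hU).inter_open_nonempty (Ioo α β)
    isOpen_Ioo (nonempty_Ioo.2 hαβ)
  obtain ⟨n, hn⟩ := mem_iUnion.1 ht
  have hnhds : Ioo α β ∩ F n ∈ nhds t := by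
    filter_upwards [isOpen_Ioo.mem_nhds htm, mem_interior_iff_mem_nhds.1 hn] with s hs hs'
    refine ⟨hs, hs'.resolve_right ?_⟩
    rintro (h | h)
    · exact absurd hs.1 (not_lt.2 h)
    · exact absurd hs.2 (not_lt.2 h)
  obtain ⟨ε, hε, hball⟩ := Metric.nhds_basis_closedBall.mem_iff.1 hnhds
  rw [Real.closedBall_eq_Icc] at hball
  exact ⟨n, t - ε, t + ε, by linarith, hball⟩

/-- A solution, in characteristic coordinates, of the equation with zero boundary data and
potential given by the power series with coefficients `U`. -/
structure IsHomogeneousSolution (U : ℕ → ℝ × ℝ → ℂ) (c : ℂ) (t₀ : ℝ) (v : ℝ × ℝ → ℝ → ℂ) :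
    Prop where
  contDiffOn : ∀ t ∈ Ioo 0 t₀, ContDiffOn ℝ 2 (fun p => v p t) charTriangle
  differentiableAt : ∀ p ∈ charTriangle, ∀ t ∈ Ioo 0 t₀, DifferentiableAt ℝ (v p) t
  wave : ∀ p ∈ charDomain, ∀ t ∈ Ioo 0 t₀,
    4 * mixedDeriv (fun p => v p t) p = evalSeries U t p * v p t + c * deriv (v p) t
  eq_zero : ∀ t ∈ Ioo 0 t₀, ∀ ξ ∈ Icc (0:ℝ) 2, v (ξ, 0) t = 0
  eq_zero_diag : ∀ t ∈ Ioo 0 t₀, ∀ ξ ∈ Icc (0:ℝ) 1, v (ξ, ξ) t = 0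

namespace IsHomogeneousSolution

variable {U : ℕ → ℝ × ℝ → ℂ} {c : ℂ} {t₀ : ℝ} {v : ℝ × ℝ → ℝ → ℂ}

/-- The times at which the solution and its mixed differences are bounded by a constant. -/
def boundedTimes (v : ℝ × ℝ → ℝ → ℂ) (α β K : ℝ) : Set ℝ :=
  {t ∈ Icc α β | (∀ p ∈ charTriangle, ‖v p t‖ ≤ K) ∧ ∀ τ₀ τ₁ s₀ s₁, RectInDomain τ₀ τ₁ s₀ s₁ →
    ‖mixedDiff (fun p => v p t) τ₀ τ₁ s₀ s₁‖ ≤ K * |s₁ - s₀| * |τ₁ - τ₀|}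

lemma isClosed_boundedTimes (hv : IsHomogeneousSolution U c t₀ v) {α β : ℝ}
    (hαβ : Icc α β ⊆ Ioo 0 t₀) (K : ℝ) : IsClosed (boundedTimes v α β K) := by
  refine isClosed_of_closure_subset fun t ht => ?_
  have htI : t ∈ Icc α β := closure_minimal (fun s hs => hs.1) isClosed_Icc ht
  have hc : ∀ {p}, p ∈ charTriangle → ContinuousWithinAt (v p) (boundedTimes v α β K) t :=
    fun hp => (hv.differentiableAt _ hp t (hαβ htI)).continuousAt.continuousWithinAt
  have hc' : ∀ {p}, p ∈ charDomain → ContinuousWithinAt (v p) (boundedTimes v α β K) t :=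
    fun hp => hc (charDomain_subset_charTriangle hp)
  refine ⟨htI, fun p hp => ?_, fun τ₀ τ₁ s₀ s₁ h => ?_⟩
  · exact ContinuousWithinAt.closure_le ht (hc hp).norm continuousWithinAt_const
      fun s hs => hs.2.1 p hp
  · refine ContinuousWithinAt.closure_le ht (f := fun t => ‖mixedDiff (fun p => v p t) τ₀ τ₁ s₀ s₁‖)
      ?_ continuousWithinAt_const fun s hs => hs.2.2 τ₀ τ₁ s₀ s₁ h
    exact (((hc' h.2.2.2).sub (hc' h.2.1)).sub ((hc' h.2.2.1).sub (hc' h.1))).norm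

lemma Icc_subset_iUnion_boundedTimes (hv : IsHomogeneousSolution U c t₀ v) {α β : ℝ}
    (hαβ : Icc α β ⊆ Ioo 0 t₀) : Icc α β ⊆ ⋃ n : ℕ, boundedTimes v α β n := by
  intro t ht
  have hd := hv.contDiffOn t (hαβ ht)
  obtain ⟨K, -, hK⟩ := exists_norm_mixedDeriv_le hd
  obtain ⟨K', hK'⟩ := isCompact_charTriangle.exists_bound_of_continuousOn hd.continuousOn
  obtain ⟨n, hn⟩ := exists_nat_ge (max K K')
  refine mem_iUnion.2 ⟨n, ht, fun p hp => (hK' p hp).trans ((le_max_right _ _).trans hn),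
    fun τ₀ τ₁ s₀ s₁ h => ?_⟩
  exact norm_mixedDiff_le (hd.mono charDomain_subset_charTriangle)
    (fun p hp => (hK p hp).trans ((le_max_left _ _).trans hn)) h

lemma exists_isStripSolution (hv : IsHomogeneousSolution U c t₀ v) (ht₀ : t₀ < 1) (hc : c ≠ 0)
    {C : ℝ} (hU : ∀ n, Continuous (U n)) (hC : ∀ n p, ‖U n p‖ ≤ C) {α β : ℝ} (hlt : α < β)
    (hαβ : Icc α β ⊆ Ioo 0 t₀) :
    ∃ α' β' N, α' < β' ∧ Icc α' β' ⊆ Ioo α β ∧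
      IsStripSolution (fun p t => evalSeries U t p) c α' β' N v := by
  obtain ⟨n, α', β', hlt', hsub⟩ := exists_Icc_subset_of_closed_cover hlt
    (fun n : ℕ => hv.isClosed_boundedTimes hαβ n) (hv.Icc_subset_iUnion_boundedTimes hαβ)
  have hI : ∀ {t}, t ∈ Icc α' β' → t ∈ Ioo 0 t₀ := fun ht =>
    hαβ (Ioo_subset_Icc_self (hsub ht).1)
  have hIt : ∀ {t}, t ∈ Icc α' β' → |t| < 1 := fun ht => by
    rw [abs_of_pos (hI ht).1]; exact (hI ht).2.trans ht₀
  have hUr := UnitRadius.of_bounded hU hC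
  have hC0 : 0 ≤ C := (norm_nonneg _).trans (hC 0 0)
  have h1t : 0 < 1 - t₀ := by linarith
  set B := C / (1 - t₀) with hB
  have hB0 : 0 ≤ B := by positivity
  have hdom : ∀ t ∈ Icc α' β', ContDiffOn ℝ 2 (fun p => v p t) charDomain := fun t ht =>
    (hv.contDiffOn t (hI ht)).mono charDomain_subset_charTriangle
  have hb : ∀ p, ∀ t ∈ Icc α' β', ‖evalSeries U t p‖ ≤ B := fun p t ht => by
    simpa using norm_iteratedDeriv_evalSeries_le hU hC p 0 (hI ht) ht₀
  have hderiv : ∀ p ∈ charDomain, ∀ t ∈ Icc α' β', ‖deriv (v p) t‖ ≤ (4 * n + B * n) / ‖c‖ := by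
    intro p hp t ht
    rw [le_div_iff₀ (norm_pos_iff.2 hc), mul_comm, ← norm_mul,
      ← sub_eq_of_eq_add' (hv.wave p hp t (hI ht))]
    refine (norm_sub_le _ _).trans ?_
    rw [norm_mul, norm_mul, Complex.norm_ofNat]
    gcongr
    · exact norm_mixedDeriv_le (hdom t ht) (Nat.cast_nonneg n) (hsub ht).2.2.2 hp
    · exact hb p t ht
    · exact (hsub ht).2.2.1 p (charDomain_subset_charTriangle hp)
  have hdiff : ∀ p ∈ charTriangle, ∀ t ∈ Icc α' β', DifferentiableAt ℝ (v p) t := fun p hp t ht =>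
    hv.differentiableAt p hp t (hI ht)
  refine ⟨α', β', max n ((4 * n + B * n) / ‖c‖), hlt', fun t ht => (hsub ht).1, ?_, ?_, hdom,
    fun t ht => (hv.contDiffOn t (hI ht)).continuousOn,
    fun p hp t ht => ((hsub ht).2.2.1 p hp).trans (le_max_left _ _), hdiff,
    fun p hp t ht => (hderiv p hp t ht).trans (le_max_right _ _),
    fun p hp t ht => hv.wave p hp t (hI ht), fun t ht => hv.eq_zero t (hI ht),
    fun t ht => hv.eq_zero_diag t (hI ht)⟩
  · refine continuousOn_prod_of_continuousOn_lipschitzOnWith' _ (B * (1 / (1 - t₀))).toNNReal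
      (fun p hp => ?_) fun t ht => (hUr.continuous_evalSeries (hIt ht)).continuousOn
    refine Convex.lipschitzOnWith_of_nnnorm_deriv_le (fun t ht =>
      (hUr.hasDerivAt_evalSeries (hIt ht) p).differentiableAt) (fun t ht => ?_) (convex_Icc _ _)
    rw [← NNReal.coe_le_coe, coe_nnnorm, Real.coe_toNNReal _ (by positivity)]
    simpa using norm_iteratedDeriv_evalSeries_le hU hC p 1 (hI ht) ht₀
  · refine continuousOn_prod_of_continuousOn_lipschitzOnWith' _
      ((4 * n + B * n) / ‖c‖).toNNReal (fun p hp => ?_) fun t ht => (hdom t ht).continuousOn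
    refine Convex.lipschitzOnWith_of_nnnorm_deriv_le
      (hdiff p (charDomain_subset_charTriangle hp)) (fun t ht => ?_) (convex_Icc _ _)
    rw [← NNReal.coe_le_coe, coe_nnnorm, Real.coe_toNNReal _ (by positivity)]
    exact hderiv p hp t ht

/-- A solution with zero boundary data vanishes in the interior of the triangle. -/
lemma eq_zero_of_mem_charDomain (hv : IsHomogeneousSolution U c t₀ v) (ht₀ : t₀ < 1) (hc : c ≠ 0)
    {C : ℝ} (hU : ∀ n, Continuous (U n)) (hC : ∀ n p, ‖U n p‖ ≤ C) {p : ℝ × ℝ}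
    (hp : p ∈ charDomain) {t : ℝ} (ht : t ∈ Ioo 0 t₀) : v p t = 0 := by
  by_contra hne
  have hcont := (hv.differentiableAt p (charDomain_subset_charTriangle hp) t ht).continuousAt
  have hnhds : {s | v p s ≠ 0} ∩ Ioo 0 t₀ ∈ nhds t :=
    Filter.inter_mem (hcont.eventually_ne hne) (Ioo_mem_nhds ht.1 ht.2)
  obtain ⟨ε, hε, hball⟩ := Metric.nhds_basis_closedBall.mem_iff.1 hnhds
  rw [Real.closedBall_eq_Icc] at hball
  obtain ⟨α, β, N, hlt, hsub, hs⟩ := hv.exists_isStripSolution ht₀ hc hU hC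
    (by linarith : t - ε < t + ε) fun s hs => (hball hs).2
  have hI : ∀ {s}, s ∈ Ioo α β → s ∈ Ioo 0 t₀ := fun h =>
    (hball (Ioo_subset_Icc_self (hsub (Ioo_subset_Icc_self h)))).2
  have hC0 : 0 ≤ C := (norm_nonneg _).trans (hC 0 0)
  have h1t : 0 < 1 - t₀ := by linarith
  have hmid : (α + β) / 2 ∈ Ioo α β := ⟨by linarith, by linarith⟩
  refine (hball (Ioo_subset_Icc_self (hsub (Ioo_subset_Icc_self hmid)))).1
    (hs.eq_zero_of_mem (R := 1 / (1 - t₀)) (B := C / (1 - t₀)) (by positivity) (by positivity)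
      (fun q _ n => ?_) (fun q _ j s hs => norm_iteratedDeriv_evalSeries_le hU hC q j (hI hs) ht₀)
      hp hmid)
  exact ((UnitRadius.of_bounded hU hC).contDiffOn_evalSeries q n).mono fun s hs =>
    ⟨by linarith [(hI hs).1], (hI hs).2.trans ht₀⟩

end IsHomogeneousSolution

lemma charTriangle_subset_closure_charDomain : charTriangle ⊆ closure charDomain := by
  rintro ⟨ξ, η⟩ hp
  obtain ⟨h1, h2, h3⟩ : 0 ≤ η ∧ η ≤ ξ ∧ ξ + η ≤ 2 := hp
  have h0 : (0:ℝ) ∈ closure (Ioo (0:ℝ) 1) := by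
    rw [closure_Ioo zero_ne_one]; exact ⟨le_rfl, zero_le_one⟩
  have hf : Continuous fun ε : ℝ => (ξ + ε * (1 - ξ), η + ε * (1 / 2 - η)) := by fun_prop
  have := map_mem_closure hf h0 (t := charDomain) fun ε hε => ?_
  · simpa using this
  · obtain ⟨e1, e2⟩ := hε
    refine ⟨?_, ?_, ?_⟩ <;> simp only <;> nlinarith

lemma mixedDeriv_add_const_mul {f g : ℝ × ℝ → ℂ} (hf : ContDiffOn ℝ 2 f charDomain)
    (hg : ContDiffOn ℝ 2 g charDomain) (a : ℂ) {p : ℝ × ℝ} (hp : p ∈ charDomain) :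
    mixedDeriv (fun p => f p + a * g p) p = mixedDeriv f p + a * mixedDeriv g p := by
  have h1 : fderiv ℝ (fun p => f p + a * g p) =ᶠ[nhds p]
      fun p => fderiv ℝ f p + a • fderiv ℝ g p := by
    filter_upwards [isOpen_charDomain.mem_nhds hp] with q hq
    exact ((hasFDerivAt_of_contDiffOn_charDomain hf hq).add
      ((hasFDerivAt_of_contDiffOn_charDomain hg hq).const_mul a)).fderiv
  have h2 := ((hasFDerivAt_fderiv_of_contDiffOn_charDomain hf hp).add
    ((hasFDerivAt_fderiv_of_contDiffOn_charDomain hg hp).const_smul a)).congr_of_eventuallyEq h1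
  rw [mixedDeriv, h2.fderiv]
  simp [mixedDeriv]

lemma deriv_complex_ofReal_comp (f : ℝ → ℝ) (x : ℝ) :
    deriv (fun x => (f x : ℂ)) x = ((deriv f x : ℝ) : ℂ) := by
  by_cases hf : DifferentiableAt ℝ f x
  · exact hf.hasDerivAt.ofReal_comp.deriv
  · have : ¬ DifferentiableAt ℝ (fun x => (f x : ℂ)) x := fun h =>
      hf (by simpa using h.hasDerivAt.re.differentiableAt)
    rw [deriv_zero_of_not_differentiableAt hf, deriv_zero_of_not_differentiableAt this]
    simp

/-- Passage from characteristic coordinates to the original ones. -/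
noncomputable def ofChar (p : ℝ × ℝ) : ℝ × ℝ := ((p.1 + p.2) / 2, (p.1 - p.2) / 2)

lemma ofChar_mem_Omega {p : ℝ × ℝ} (hp : p ∈ charTriangle) : ofChar p ∈ Omega := by
  obtain ⟨h1, h2, h3⟩ := hp
  refine ⟨?_, ?_, ?_⟩ <;> simp only [ofChar] <;> linarith

lemma ofChar_add_sub (x y : ℝ) : ofChar (x + y, x - y) = (x, y) := by
  simp only [ofChar, Prod.mk.injEq]
  constructor <;> ring

lemma contDiffOn_comp_ofChar {f : ℝ × ℝ → ℝ} (hf : ContDiffOn ℝ 2 f Omega) :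
    ContDiffOn ℝ 2 (fun p => (f (ofChar p) : ℂ)) charTriangle := by
  have h1 : ContDiff ℝ 2 ofChar := by unfold ofChar; fun_prop
  exact Complex.ofRealCLM.contDiff.comp_contDiffOn
    (hf.comp h1.contDiffOn fun p hp => ofChar_mem_Omega hp)

lemma pXX_sub_pYY_eq_mixedDeriv {k : ℝ → ℝ → ℝ → ℝ} {t : ℝ}
    (hk : ContDiffOn ℝ 2 (fun p : ℝ × ℝ => k p.1 p.2 t) Omega) {p : ℝ × ℝ} (hp : p ∈ charDomain) :
    ((pXX k (ofChar p).1 (ofChar p).2 t : ℝ) : ℂ)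
      = (pYY k (ofChar p).1 (ofChar p).2 t : ℝ)
        + 4 * mixedDeriv (fun p => (k (ofChar p).1 (ofChar p).2 t : ℂ)) p := by
  obtain ⟨x, y, rfl⟩ : ∃ x y, p = (x + y, x - y) :=
    ⟨(p.1 + p.2) / 2, (p.1 - p.2) / 2, by ext <;> simp only <;> ring⟩
  have hg := (contDiffOn_comp_ofChar hk).mono charDomain_subset_charTriangle
  obtain ⟨h1, h2, h3⟩ := wave_eq_mixedDeriv hg hp
  simp only [ofChar_add_sub] at h1 h2 ⊢
  simp only [deriv_complex_ofReal_comp] at h1 h2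
  rw [pXX, pYY, ← deriv_complex_ofReal_comp, ← deriv_complex_ofReal_comp, h1.deriv, h2.deriv, h3]

/-- The complex kernel in characteristic coordinates. -/
noncomputable def charKernel (k kc : ℝ → ℝ → ℝ → ℝ) (p : ℝ × ℝ) (t : ℝ) : ℂ :=
  k (ofChar p).1 (ofChar p).2 t + Complex.I * kc (ofChar p).1 (ofChar p).2 t

namespace IsDirichletKernelSol

variable {β βc : ℝ → ℝ → ℝ → ℝ} {r s t₀ : ℝ} {k kc : ℝ → ℝ → ℝ → ℝ}

lemma contDiffOn_charKernel (h : IsDirichletKernelSol β βc r (-s) r s t₀ k kc) {t : ℝ}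
    (ht : t ∈ Ioo 0 t₀) : ContDiffOn ℝ 2 (fun p => charKernel k kc p t) charTriangle :=
  (contDiffOn_comp_ofChar (h.1 t ht)).add
    (contDiffOn_const.mul (contDiffOn_comp_ofChar (h.2.1 t ht)))

lemma hasDerivAt_charKernel (h : IsDirichletKernelSol β βc r (-s) r s t₀ k kc) {p : ℝ × ℝ}
    (hp : p ∈ charTriangle) {t : ℝ} (ht : t ∈ Ioo 0 t₀) :
    HasDerivAt (charKernel k kc p) ((pT k (ofChar p).1 (ofChar p).2 t : ℝ)
      + Complex.I * (pT kc (ofChar p).1 (ofChar p).2 t : ℝ)) t := by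
  obtain ⟨h1, h2⟩ := h.2.2.1 _ _ (ofChar_mem_Omega hp) t ht
  exact h1.hasDerivAt.ofReal_comp.add (h2.hasDerivAt.ofReal_comp.const_mul _)

lemma wave_charKernel (h : IsDirichletKernelSol β βc r (-s) r s t₀ k kc) {p : ℝ × ℝ}
    (hp : p ∈ charDomain) {t : ℝ} (ht : t ∈ Ioo 0 t₀) :
    4 * mixedDeriv (fun p => charKernel k kc p t) p
      = ((β (ofChar p).1 (ofChar p).2 t : ℂ) - Complex.I * βc (ofChar p).1 (ofChar p).2 t)
          * charKernel k kc p t + (r + Complex.I * s) * deriv (charKernel k kc p) t := by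
  have hp' := charDomain_subset_charTriangle hp
  obtain ⟨h1, h2⟩ := h.2.2.2.1 (ofChar p).1 (ofChar p).2 (ofChar_mem_Omega hp') t ht
  have e1 := pXX_sub_pYY_eq_mixedDeriv (h.1 t ht) hp
  have e2 := pXX_sub_pYY_eq_mixedDeriv (h.2.1 t ht) hp
  rw [h1] at e1
  rw [h2] at e2
  have e := mixedDeriv_add_const_mul
    ((contDiffOn_comp_ofChar (h.1 t ht)).mono charDomain_subset_charTriangle)
    ((contDiffOn_comp_ofChar (h.2.1 t ht)).mono charDomain_subset_charTriangle) Complex.I hp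
  rw [(h.hasDerivAt_charKernel hp' ht).deriv]
  simp only [charKernel] at e ⊢
  rw [e]
  push_cast at e1 e2
  linear_combination (-1) * e1 - Complex.I * e2
    + ((βc (ofChar p).1 (ofChar p).2 t : ℂ) * kc (ofChar p).1 (ofChar p).2 t
      - (s : ℂ) * pT kc (ofChar p).1 (ofChar p).2 t) * Complex.I_sq

lemma isHomogeneousSolution_sub {k' kc' : ℝ → ℝ → ℝ → ℝ} {U : ℕ → ℝ × ℝ → ℂ}
    (h : IsDirichletKernelSol β βc r (-s) r s t₀ k kc)
    (h' : IsDirichletKernelSol β βc r (-s) r s t₀ k' kc')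
    (hU : ∀ p ∈ charDomain, ∀ t ∈ Ioo 0 t₀, evalSeries U t p
      = (β (ofChar p).1 (ofChar p).2 t : ℂ) - Complex.I * βc (ofChar p).1 (ofChar p).2 t) :
    IsHomogeneousSolution U (r + Complex.I * s) t₀
      (fun p t => charKernel k kc p t + (-1) * charKernel k' kc' p t) where
  contDiffOn t ht :=
    (h.contDiffOn_charKernel ht).add (contDiffOn_const.mul (h'.contDiffOn_charKernel ht))
  differentiableAt p hp t ht := ((h.hasDerivAt_charKernel hp ht).add
    ((h'.hasDerivAt_charKernel hp ht).const_mul (-1))).differentiableAt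
  wave p hp t ht := by
    have hp' := charDomain_subset_charTriangle hp
    have hd := (h.hasDerivAt_charKernel hp' ht).differentiableAt.hasDerivAt.add
      ((h'.hasDerivAt_charKernel hp' ht).differentiableAt.hasDerivAt.const_mul (-1))
    have e : deriv (fun t => charKernel k kc p t + (-1) * charKernel k' kc' p t) t = _ := hd.deriv
    rw [e, mixedDeriv_add_const_mul
      ((h.contDiffOn_charKernel ht).mono charDomain_subset_charTriangle)
      ((h'.contDiffOn_charKernel ht).mono charDomain_subset_charTriangle) (-1) hp, hU p hp t ht]
    linear_combination h.wave_charKernel hp ht - h'.wave_charKernel hp ht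
  eq_zero t ht ξ hξ := by
    have hx : ξ / 2 ∈ Icc (0:ℝ) 1 := ⟨by linarith [hξ.1], by linarith [hξ.2]⟩
    obtain ⟨h1, h2, -⟩ := h.2.2.2.2 _ hx t ht
    obtain ⟨h3, h4, -⟩ := h'.2.2.2.2 _ hx t ht
    simp only [charKernel, ofChar, add_zero, sub_zero, h1, h2, h3, h4]
    ring
  eq_zero_diag t ht ξ hξ := by
    obtain ⟨-, -, h1, h2⟩ := h.2.2.2.2 _ hξ t ht
    obtain ⟨-, -, h3, h4⟩ := h'.2.2.2.2 _ hξ t ht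
    simp [charKernel, ofChar, h1, h2, h3, h4]

end IsDirichletKernelSol

/-- Uniqueness of the kernel pair. -/
lemma IsDirichletKernelSol.unique {aR aI : ℝ} (haR : 0 < aR) {bR bI fR fI : ℝ → ℝ → ℝ}
    (hbR : SpaceC1TimeAnalytic bR) (hbI : SpaceC1TimeAnalytic bI)
    (hfR : SpaceC1TimeAnalytic fR) (hfI : SpaceC1TimeAnalytic fI)
    {β βc : ℝ → ℝ → ℝ → ℝ}
    (hβ : ∀ x y t : ℝ, β x y t
      = (aR * (bR y t - fR x t) + aI * (bI y t - fI x t)) / (aR ^ 2 + aI ^ 2))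
    (hβc : ∀ x y t : ℝ, βc x y t
      = (aR * (bI y t - fI x t) - aI * (bR y t - fR x t)) / (aR ^ 2 + aI ^ 2))
    {t₀ : ℝ} (ht₀ : t₀ ∈ Ioo (0:ℝ) 1) {k kc k' kc' : ℝ → ℝ → ℝ → ℝ}
    (h : IsDirichletKernelSol β βc (aR / (aR ^ 2 + aI ^ 2)) (-aI / (aR ^ 2 + aI ^ 2))
      (aR / (aR ^ 2 + aI ^ 2)) (aI / (aR ^ 2 + aI ^ 2)) t₀ k kc)
    (h' : IsDirichletKernelSol β βc (aR / (aR ^ 2 + aI ^ 2)) (-aI / (aR ^ 2 + aI ^ 2))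
      (aR / (aR ^ 2 + aI ^ 2)) (aI / (aR ^ 2 + aI ^ 2)) t₀ k' kc')
    {x y : ℝ} (hxy : (x, y) ∈ Omega) {t : ℝ} (ht : t ∈ Ioo 0 t₀) :
    k x y t = k' x y t ∧ kc x y t = kc' x y t := by
  rw [neg_div] at h h'
  set c : ℂ := ((aR / (aR ^ 2 + aI ^ 2) : ℝ) : ℂ) + Complex.I * ((aI / (aR ^ 2 + aI ^ 2) : ℝ) : ℂ)
    with hc_def
  have hc : c ≠ 0 := by
    intro h0
    have hre : c.re = aR / (aR ^ 2 + aI ^ 2) := by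
      simp only [hc_def, Complex.add_re, Complex.ofReal_re, Complex.mul_re, Complex.I_re,
        Complex.I_im, Complex.ofReal_im]
      ring
    rw [h0, Complex.zero_re] at hre
    exact (div_pos haR (by positivity)).ne hre
  obtain ⟨P, A, hPc, hPA, -, hP⟩ := exists_complex_extension hfR hfI (-c)
  obtain ⟨Q, B, hQc, hQB, -, hQ⟩ := exists_complex_extension hbR hbI c
  set U : ℕ → ℝ × ℝ → ℂ := fun n p => P n (ofChar p).1 + Q n (ofChar p).2 with hU_def
  have hfst : Continuous fun p => (ofChar p).1 := by unfold ofChar; fun_prop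
  have hsnd : Continuous fun p => (ofChar p).2 := by unfold ofChar; fun_prop
  have hU : ∀ n, Continuous (U n) := fun n => ((hPc n).comp hfst).add ((hQc n).comp hsnd)
  have hUb : ∀ n p, ‖U n p‖ ≤ A + B := fun n p =>
    (norm_add_le _ _).trans (add_le_add (hPA _ _) (hQB _ _))
  have hpot : ∀ p ∈ charDomain, ∀ t ∈ Ioo 0 t₀, evalSeries U t p
      = (β (ofChar p).1 (ofChar p).2 t : ℂ) - Complex.I * βc (ofChar p).1 (ofChar p).2 t := by
    intro p hp t ht
    have ht1 : t ∈ Ico (0:ℝ) 1 := ⟨ht.1.le, ht.2.trans ht₀.2⟩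
    obtain ⟨o1, o2, o3⟩ := ofChar_mem_Omega (charDomain_subset_charTriangle hp)
    rw [potential_eq (hβ _ _ t) (hβc _ _ t), ← hP _ ⟨o1.trans o2, o3⟩ t ht1,
      ← hQ _ ⟨o1, o2.trans o3⟩ t ht1]
    exact ((UnitRadius.of_bounded hPc hPA).comp hfst).evalSeries_add
      ((UnitRadius.of_bounded hQc hQB).comp hsnd) (by rw [abs_of_pos ht.1]; exact ht1.2) p
  have hv := h.isHomogeneousSolution_sub h' hpot
  have hzero : EqOn (fun p => charKernel k kc p t + (-1) * charKernel k' kc' p t) (fun _ => 0)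
      charTriangle :=
    EqOn.of_subset_closure (fun p hp => hv.eq_zero_of_mem_charDomain ht₀.2 hc hU hUb hp ht)
      (hv.contDiffOn t ht).continuousOn continuousOn_const charDomain_subset_charTriangle
      charTriangle_subset_closure_charDomain
  obtain ⟨o1, o2, o3⟩ : 0 ≤ y ∧ y ≤ x ∧ x ≤ 1 := hxy
  have hz := hzero (x := (x + y, x - y))
    ⟨by simp only; linarith, by simp only; linarith, by simp only; linarith⟩
  simp only [charKernel, ofChar_add_sub] at hz
  have hre := congrArg Complex.re hz
  have him := congrArg Complex.im hz
  simp at hre him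
  constructor <;> linarith

/-- existence, uniqueness and exponential bound for the backstepping
kernel pair `(k, k_c)` of the Dirichlet boundary-control problem. -/
theorem dirichlet_kernel_existence_uniqueness_bound
    (aR aI : ℝ) (haR : 0 < aR)
    (p₁ p₂ q₁ q₂ : ℝ)
    (hp₁ : p₁ = aR / (aR ^ 2 + aI ^ 2)) (hq₁ : q₁ = aR / (aR ^ 2 + aI ^ 2))
    (hp₂ : p₂ = -aI / (aR ^ 2 + aI ^ 2)) (hq₂ : q₂ = aI / (aR ^ 2 + aI ^ 2))
    (bR bI fR fI : ℝ → ℝ → ℝ)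
    (hbR : SpaceC1TimeAnalytic bR) (hbI : SpaceC1TimeAnalytic bI)
    (hfR : SpaceC1TimeAnalytic fR) (hfI : SpaceC1TimeAnalytic fI)
    (β βc : ℝ → ℝ → ℝ → ℝ)
    (hβ : ∀ x y t : ℝ, β x y t
      = (aR * (bR y t - fR x t) + aI * (bI y t - fI x t)) / (aR ^ 2 + aI ^ 2))
    (hβc : ∀ x y t : ℝ, βc x y t
      = (aR * (bI y t - fI x t) - aI * (bR y t - fR x t)) / (aR ^ 2 + aI ^ 2))
    (t₀ : ℝ) (ht₀ : t₀ ∈ Ioo (0:ℝ) 1) :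
    ∃ k kc : ℝ → ℝ → ℝ → ℝ,
      IsDirichletKernelSol β βc p₁ p₂ q₁ q₂ t₀ k kc
      ∧ (∀ k' kc' : ℝ → ℝ → ℝ → ℝ,
          IsDirichletKernelSol β βc p₁ p₂ q₁ q₂ t₀ k' kc' →
          ∀ x y : ℝ, (x, y) ∈ Omega → ∀ t ∈ Ioo (0:ℝ) t₀,
            k' x y t = k x y t ∧ kc' x y t = kc x y t)
      ∧ ∃ M : ℝ, 0 < M ∧ ∀ x y : ℝ, (x, y) ∈ Omega → ∀ t ∈ Ioo (0:ℝ) t₀,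
          |k x y t| ≤ M * Real.exp (M * (x ^ 2 - y ^ 2))
          ∧ |kc x y t| ≤ M * Real.exp (M * (x ^ 2 - y ^ 2)) := by
  subst hp₁ hq₁ hp₂ hq₂
  obtain ⟨k, kc, M, hsol, hM⟩ := exists_isDirichletKernelSol hbR hbI hfR hfI hβ hβc ht₀
  refine ⟨k, kc, hsol, fun k' kc' hsol' x y hxy t ht =>
    hsol'.unique haR hbR hbI hfR hfI hβ hβc ht₀ hsol hxy ht, max M 1, by positivity,
    fun x y hxy t ht => ?_⟩
  obtain ⟨h1, h2⟩ := hM x y hxy t ht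
  obtain ⟨o1, o2, -⟩ : 0 ≤ y ∧ y ≤ x ∧ x ≤ 1 := hxy
  have hexp : max M 1 ≤ max M 1 * Real.exp (max M 1 * (x ^ 2 - y ^ 2)) :=
    le_mul_of_one_le_right (by positivity)
      (Real.one_le_exp (mul_nonneg (by positivity) (by nlinarith)))
  exact ⟨h1.trans ((le_max_left _ _).trans hexp), h2.trans ((le_max_left _ _).trans hexp)⟩
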